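/- arXiv:1603.05702 — 2 statements merged into one kernel-verified Lean document; each statement's English description precedes it below -/
import Mathlib

section
/- Under the standing assumptions (C braided monoidal with coequalizers preserved by the monoidal product, composites of regular epimorphisms regular epi; (A,t₁,t₂,t₃,t₄,e₁,e₂,j) a regular weak multiplier bimonoid with m = (j⊗1)∘t₁ a regular epimorphism, non-degenerate with respect to a class 𝒴 containing I, A and L; n₁ non-degenerate on the right with respect to 𝒴), the object A carries the structure of a bicomodule over the coseparable comonoid (L, δ, ε): there is a unique left L-coaction τ : A → L⊗A with τ∘m = (p⊗1)∘t₁ and a unique right L-coaction τ̄ : A → A⊗L with τ̄∘m = (1⊗p)∘t₄∘c; τ is coassociative ((δ⊗1)∘τ = (1⊗τ)∘τ) and counital ((ε⊗1)∘τ = 1_A), τ̄ is coassociative ((1⊗δ)∘τ̄ = (τ̄⊗1)∘τ̄) and counital ((1⊗ε)∘τ̄ = 1_A), and the two coactions commute: (τ⊗1)∘τ̄ = (1⊗τ̄)∘τ : A → L⊗A⊗L. -/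
open CategoryTheory Category MonoidalCategory Limits

universe v u

namespace WeakMultiplierBimonoid

variable {C : Type u} [Category.{v} C] [MonoidalCategory C] [BraidedCategory C]

def wl {A : C} (f : A ⊗ A ⟶ A ⊗ A) : A ⊗ (A ⊗ A) ⟶ A ⊗ (A ⊗ A) :=
  (α_ A A A).inv ≫ (f ▷ A) ≫ (α_ A A A).hom

def ml {A : C} (f : A ⊗ A ⟶ A) : A ⊗ (A ⊗ A) ⟶ A ⊗ A :=
  (α_ A A A).inv ≫ (f ▷ A)

def NdLeftOn {Z V W : C} (v : Z ⊗ V ⟶ W) (𝒴 : Set C) : Prop :=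
  ∀ (X : C), ∀ Y ∈ 𝒴, Function.Injective
    (fun g : X ⟶ V ⊗ Y => (Z ◁ g) ≫ (α_ Z V Y).inv ≫ (v ▷ Y))

def NdRightOn {Z V W : C} (v : Z ⊗ V ⟶ W) (𝒴 : Set C) : Prop :=
  NdLeftOn ((β_ V Z).hom ≫ v) 𝒴

/-- The "middle braiding" `1 ⊗ c ⊗ 1 : A⁴ ⟶ A⁴` on `(A ⊗ A) ⊗ (A ⊗ A)`. -/
def midSw (A : C) : (A ⊗ A) ⊗ (A ⊗ A) ⟶ (A ⊗ A) ⊗ (A ⊗ A) :=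
  (α_ A A (A ⊗ A)).hom ≫ (A ◁ (α_ A A A).inv) ≫ (A ◁ ((β_ A A).hom ▷ A)) ≫
    (A ◁ (α_ A A A).hom) ≫ (α_ A A (A ⊗ A)).inv

/-- A regular weak multiplier bimonoid on an object `A` of a braided monoidal category,
with multiplication non-degenerate with respect to the class `𝒴`
(Definition 2.9 of the paper). -/
structure RWMB (A : C) (𝒴 : Set C) where
  t₁ : A ⊗ A ⟶ A ⊗ A
  t₂ : A ⊗ A ⟶ A ⊗ A
  t₃ : A ⊗ A ⟶ A ⊗ A
  t₄ : A ⊗ A ⟶ A ⊗ A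
  e₁ : A ⊗ A ⟶ A ⊗ A
  e₂ : A ⊗ A ⟶ A ⊗ A
  j : A ⟶ 𝟙_ C
  /-- the induced multiplication -/
  m : A ⊗ A ⟶ A
  /-- counit condition (m1); in particular `m` is the induced multiplication -/
  hm₁ : m = t₁ ≫ (j ▷ A) ≫ (λ_ A).hom
  /-- counit condition (m2) -/
  hm₂ : m = t₂ ≫ (A ◁ j) ≫ (ρ_ A).hom
  /-- counit condition (m3) -/
  hm₃ : m = (β_ A A).hom ≫ t₃ ≫ (j ▷ A) ≫ (λ_ A).hom
  /-- counit condition (m4) -/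
  hm₄ : m = (β_ A A).hom ≫ t₄ ≫ (A ◁ j) ≫ (ρ_ A).hom
  /-- the class `𝒴` contains the monoidal unit -/
  memI : (𝟙_ C) ∈ 𝒴
  memA : A ∈ 𝒴
  memAA : (A ⊗ A) ∈ 𝒴
  /-- `m` is non-degenerate on the left with respect to `𝒴` -/
  ndl : NdLeftOn m 𝒴
  /-- `m` is non-degenerate on the right with respect to `𝒴` -/
  ndr : NdRightOn m 𝒴
  /-- relation (c12) -/
  hc12 : (A ◁ t₁) ≫ ml m = wl t₂ ≫ (A ◁ m)
  /-- relation (c13) -/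
  hc13 : wl t₁ ≫ (A ◁ (β_ A A).hom) ≫ (A ◁ m)
    = (A ◁ (β_ A A).hom) ≫ wl t₃ ≫ (A ◁ m)
  /-- relation (c14) -/
  hc14 : (A ◁ t₁) ≫ wl (β_ A A).hom ≫ ml m = wl t₄ ≫ (A ◁ m)
  /-- relation (c23) -/
  hc23 : wl t₂ ≫ (A ◁ (β_ A A).hom) ≫ (A ◁ m) = (A ◁ t₃) ≫ ml m
  /-- relation (c24) -/
  hc24 : (A ◁ t₂) ≫ wl (β_ A A).hom ≫ ml m = wl (β_ A A).hom ≫ (A ◁ t₄) ≫ ml m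
  /-- relation (c34) -/
  hc34 : (A ◁ t₃) ≫ wl (β_ A A).hom ≫ ml m = wl t₄ ≫ (A ◁ (β_ A A).hom) ≫ (A ◁ m)
  /-- interchange relation for `(t₂, t₁)` -/
  hi21 : (A ◁ t₁) ≫ wl t₂ = wl t₂ ≫ (A ◁ t₁)
  /-- interchange relation for `(t₄, t₁)` -/
  hi41 : (A ◁ t₁) ≫ wl t₄ = wl t₄ ≫ (A ◁ t₁)
  /-- interchange relation for `(t₂, t₃)` -/
  hi23 : (A ◁ t₃) ≫ wl t₂ = wl t₂ ≫ (A ◁ t₃)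
  /-- interchange relation for `(t₄, t₃)` -/
  hi43 : (A ◁ t₃) ≫ wl t₄ = wl t₄ ≫ (A ◁ t₃)
  /-- compatibility of the idempotents `e₁`, `e₂`:
  `(m ⊗ m) ∘ (1 ⊗ c ⊗ 1) ∘ (1 ⊗ 1 ⊗ e₁) = (m ⊗ m) ∘ (1 ⊗ c ⊗ 1) ∘ (e₂ ⊗ 1 ⊗ 1)` -/
  hecomp : ((A ⊗ A) ◁ e₁) ≫ midSw A ≫ (m ▷ (A ⊗ A)) ≫ (A ◁ m)
    = (e₂ ▷ (A ⊗ A)) ≫ midSw A ≫ (m ▷ (A ⊗ A)) ≫ (A ◁ m)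
  /-- Axiom I for the weakly counital fusion morphism `(t₁, e₁, j)` -/
  ax1 : (A ◁ t₁) ≫ wl (β_ A A).hom ≫ (A ◁ t₁) ≫ wl (β_ A A).inv ≫ wl t₁
    = wl t₁ ≫ (A ◁ t₁)
  /-- Axiom II -/
  ax2 : e₁ ≫ e₁ = e₁
  /-- Axiom III -/
  ax3 : t₁ ≫ e₁ = t₁
  /-- Axiom IV -/
  ax4 : (A ◁ e₁) ≫ (A ◁ (β_ A A).inv) ≫ wl t₁ ≫ (A ◁ (β_ A A).hom) ≫ ml m
    = (A ◁ (β_ A A).inv) ≫ wl t₁ ≫ (A ◁ (β_ A A).hom) ≫ ml m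
  /-- Axiom V -/
  ax5 : (A ◁ t₁) ≫ wl e₁ = wl e₁ ≫ (A ◁ t₁)
  /-- Axiom VI -/
  ax6 : wl t₁ ≫ (A ◁ e₁)
    = (A ◁ (β_ A A).inv) ≫ wl e₁ ≫ (A ◁ (β_ A A).hom) ≫ wl t₁
  /-- Axiom VII -/
  ax7 : wl t₁ ≫ (A ◁ ((j ▷ A) ≫ (λ_ A).hom)) ≫ m
    = (A ◁ (β_ A A).hom) ≫ (A ◁ e₁) ≫ (A ◁ ((A ◁ j) ≫ (ρ_ A).hom)) ≫ m
  /-- Axiom VIII -/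
  ax8 : wl t₁ ≫ (A ◁ (β_ A A).hom) ≫ ml m ≫ (j ▷ A) ≫ (λ_ A).hom
    = (A ◁ (β_ A A).hom) ≫ (A ◁ e₁) ≫ (A ◁ ((j ▷ A) ≫ (λ_ A).hom)) ≫ m

namespace RWMB

variable {A : C} {𝒴 : Set C} (S : RWMB A 𝒴)

/-- `⊓ᴸ₁ := (j ⊗ 1) ∘ e₁`. -/
def piL1 : A ⊗ A ⟶ A := S.e₁ ≫ (S.j ▷ A) ≫ (λ_ A).hom

/-- `⊓ᴸ₂ := (j ⊗ 1) ∘ t₄ ∘ c`. -/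
def piL2 : A ⊗ A ⟶ A := (β_ A A).hom ≫ S.t₄ ≫ (S.j ▷ A) ≫ (λ_ A).hom

/-- `⊓̄ᴿ₁ ∘ c⁻¹ = (1 ⊗ j) ∘ e₁`, the second leg of the coequalizer defining the base
object. -/
def piBarR1c : A ⊗ A ⟶ A := S.e₁ ≫ (A ◁ S.j) ≫ (ρ_ A).hom

end RWMB



/-! ## Operators with a tail

All computations below take place on right nested products with a free tail object `X`.
A morphism with few inputs and outputs is extended by the tail through one of the five
operators `T`, `M`, `J`, `D`, `P`, so that string diagrams become plain words. The position
of a letter in such a word is encoded by the number of whiskerings in front of it, and the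
simp set moves letters acting further to the right to earlier places; hence two words which
only differ by the interchange law acquire a common normal form. -/

set_option linter.unusedSectionVars false
set_option linter.unusedSimpArgs false

section Tail

variable {B B₁ B₂ B₃ U V W Z X Y Q : C}

/-- `f ⊗ 1` between right-nested products. -/
def T (f : U ⊗ V ⟶ W ⊗ Z) (X : C) : U ⊗ (V ⊗ X) ⟶ W ⊗ (Z ⊗ X) :=
  (α_ U V X).inv ≫ (f ▷ X) ≫ (α_ W Z X).hom

/-- Two inputs, one output, with a tail. -/
def M (f : U ⊗ V ⟶ W) (X : C) : U ⊗ (V ⊗ X) ⟶ W ⊗ X :=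
  (α_ U V X).inv ≫ (f ▷ X)

/-- One input, no output, with a tail. -/
def J (f : U ⟶ 𝟙_ C) (X : C) : U ⊗ X ⟶ X := (f ▷ X) ≫ (λ_ X).hom

/-- One input, two outputs, with a tail. -/
def D (f : U ⟶ W ⊗ Z) (X : C) : U ⊗ X ⟶ W ⊗ (Z ⊗ X) := (f ▷ X) ≫ (α_ W Z X).hom

/-- One input, one output, with a tail. -/
def P (f : U ⟶ W) (X : C) : U ⊗ X ⟶ W ⊗ X := f ▷ X

lemma asc {U V V' W : C} {f : U ⟶ V} {g : V ⟶ W} {h : U ⟶ V'} {k : V' ⟶ W}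
    (e : f ≫ g = h ≫ k) {Z : C} (z : W ⟶ Z) : f ≫ g ≫ z = h ≫ k ≫ z := by
  rw [← assoc, e, assoc]

lemma whc {U V V' W : C} {f : U ⟶ V} {g : V ⟶ W} {h : U ⟶ V'} {k : V' ⟶ W}
    (e : f ≫ g = h ≫ k) (B : C) : B ◁ f ≫ B ◁ g = B ◁ h ≫ B ◁ k := by
  rw [← whiskerLeft_comp, e, whiskerLeft_comp]

lemma asc1 {U V : C} {f : U ⟶ V} {g : V ⟶ U} (e : f ≫ g = 𝟙 _) {Z : C} (z : U ⟶ Z) :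
    f ≫ g ≫ z = z := by
  rw [← assoc, e, id_comp]

lemma whc1 {U V : C} {f : U ⟶ V} {g : V ⟶ U} (e : f ≫ g = 𝟙 _) (B : C) :
    B ◁ f ≫ B ◁ g = 𝟙 _ := by
  rw [← whiskerLeft_comp, e, whiskerLeft_id]

@[simp] lemma T_nat (f : U ⊗ V ⟶ W ⊗ Z) (g : X ⟶ Y) :
    T f X ≫ W ◁ (Z ◁ g) = U ◁ (V ◁ g) ≫ T f Y := by
  simp only [T, assoc]
  rw [← associator_naturality_right, ← whisker_exchange_assoc,
    associator_inv_naturality_right_assoc]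

@[simp] lemma M_nat (f : U ⊗ V ⟶ W) (g : X ⟶ Y) :
    M f X ≫ W ◁ g = U ◁ (V ◁ g) ≫ M f Y := by
  simp only [M, assoc]
  rw [← whisker_exchange, associator_inv_naturality_right_assoc]

@[simp] lemma J_nat (f : U ⟶ 𝟙_ C) (g : X ⟶ Y) : J f X ≫ g = U ◁ g ≫ J f Y := by
  simp only [J, assoc]
  rw [← leftUnitor_naturality, whisker_exchange_assoc]

@[simp] lemma D_nat (f : U ⟶ W ⊗ Z) (g : X ⟶ Y) : D f X ≫ W ◁ (Z ◁ g) = U ◁ g ≫ D f Y := by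
  simp only [D, assoc]
  rw [← associator_naturality_right, ← whisker_exchange_assoc]

@[simp] lemma P_nat (f : U ⟶ W) (g : X ⟶ Y) : P f X ≫ W ◁ g = U ◁ g ≫ P f Y :=
  (whisker_exchange f g).symm

@[simp] lemma S_inv : T (β_ U V).hom X ≫ T (β_ U V).inv X = 𝟙 _ := by simp [T]

@[simp] lemma S_inv' : T (β_ U V).inv X ≫ T (β_ U V).hom X = 𝟙 _ := by simp [T]

@[simp] lemma T_nat_a (f : U ⊗ V ⟶ W ⊗ Z) (g : X ⟶ Y) (z : W ⊗ (Z ⊗ Y) ⟶ Q) :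
    T f X ≫ W ◁ (Z ◁ (g)) ≫ z = U ◁ (V ◁ (g)) ≫ T f Y ≫ z :=
  asc (T_nat f g) z

@[simp] lemma T_nat1 (f : U ⊗ V ⟶ W ⊗ Z) (g : X ⟶ Y) :
    B ◁ (T f X) ≫ B ◁ (W ◁ (Z ◁ (g))) = B ◁ (U ◁ (V ◁ (g))) ≫ B ◁ (T f Y) :=
  whc (T_nat f g) _

@[simp] lemma T_nat1_a (f : U ⊗ V ⟶ W ⊗ Z) (g : X ⟶ Y) (z : B ⊗ (W ⊗ (Z ⊗ Y)) ⟶ Q) :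
    B ◁ (T f X) ≫ B ◁ (W ◁ (Z ◁ (g))) ≫ z = B ◁ (U ◁ (V ◁ (g))) ≫ B ◁ (T f Y) ≫ z :=
  asc (T_nat1 f g) z

@[simp] lemma T_nat2 (f : U ⊗ V ⟶ W ⊗ Z) (g : X ⟶ Y) :
    B ◁ (B₁ ◁ (T f X)) ≫ B ◁ (B₁ ◁ (W ◁ (Z ◁ (g)))) = B ◁ (B₁ ◁ (U ◁ (V ◁ (g)))) ≫ B ◁ (B₁ ◁ (T f Y)) :=
  whc (T_nat1 f g) _

@[simp] lemma T_nat2_a (f : U ⊗ V ⟶ W ⊗ Z) (g : X ⟶ Y) (z : B ⊗ (B₁ ⊗ (W ⊗ (Z ⊗ Y))) ⟶ Q) :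
    B ◁ (B₁ ◁ (T f X)) ≫ B ◁ (B₁ ◁ (W ◁ (Z ◁ (g)))) ≫ z = B ◁ (B₁ ◁ (U ◁ (V ◁ (g)))) ≫ B ◁ (B₁ ◁ (T f Y)) ≫ z :=
  asc (T_nat2 f g) z

@[simp] lemma M_nat_a (f : U ⊗ V ⟶ W) (g : X ⟶ Y) (z : W ⊗ Y ⟶ Q) :
    M f X ≫ W ◁ (g) ≫ z = U ◁ (V ◁ (g)) ≫ M f Y ≫ z :=
  asc (M_nat f g) z

@[simp] lemma M_nat1 (f : U ⊗ V ⟶ W) (g : X ⟶ Y) :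
    B ◁ (M f X) ≫ B ◁ (W ◁ (g)) = B ◁ (U ◁ (V ◁ (g))) ≫ B ◁ (M f Y) :=
  whc (M_nat f g) _

@[simp] lemma M_nat1_a (f : U ⊗ V ⟶ W) (g : X ⟶ Y) (z : B ⊗ (W ⊗ Y) ⟶ Q) :
    B ◁ (M f X) ≫ B ◁ (W ◁ (g)) ≫ z = B ◁ (U ◁ (V ◁ (g))) ≫ B ◁ (M f Y) ≫ z :=
  asc (M_nat1 f g) z

@[simp] lemma M_nat2 (f : U ⊗ V ⟶ W) (g : X ⟶ Y) :
    B ◁ (B₁ ◁ (M f X)) ≫ B ◁ (B₁ ◁ (W ◁ (g))) = B ◁ (B₁ ◁ (U ◁ (V ◁ (g)))) ≫ B ◁ (B₁ ◁ (M f Y)) :=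
  whc (M_nat1 f g) _

@[simp] lemma M_nat2_a (f : U ⊗ V ⟶ W) (g : X ⟶ Y) (z : B ⊗ (B₁ ⊗ (W ⊗ Y)) ⟶ Q) :
    B ◁ (B₁ ◁ (M f X)) ≫ B ◁ (B₁ ◁ (W ◁ (g))) ≫ z = B ◁ (B₁ ◁ (U ◁ (V ◁ (g)))) ≫ B ◁ (B₁ ◁ (M f Y)) ≫ z :=
  asc (M_nat2 f g) z

@[simp] lemma M_nat3 (f : U ⊗ V ⟶ W) (g : X ⟶ Y) :
    B ◁ (B₁ ◁ (B₂ ◁ (M f X))) ≫ B ◁ (B₁ ◁ (B₂ ◁ (W ◁ (g)))) = B ◁ (B₁ ◁ (B₂ ◁ (U ◁ (V ◁ (g))))) ≫ B ◁ (B₁ ◁ (B₂ ◁ (M f Y))) :=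
  whc (M_nat2 f g) _

@[simp] lemma M_nat3_a (f : U ⊗ V ⟶ W) (g : X ⟶ Y) (z : B ⊗ (B₁ ⊗ (B₂ ⊗ (W ⊗ Y))) ⟶ Q) :
    B ◁ (B₁ ◁ (B₂ ◁ (M f X))) ≫ B ◁ (B₁ ◁ (B₂ ◁ (W ◁ (g)))) ≫ z = B ◁ (B₁ ◁ (B₂ ◁ (U ◁ (V ◁ (g))))) ≫ B ◁ (B₁ ◁ (B₂ ◁ (M f Y))) ≫ z :=
  asc (M_nat3 f g) z

@[simp] lemma J_nat1 (f : U ⟶ 𝟙_ C) (g : X ⟶ Y) :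
    B ◁ (J f X) ≫ B ◁ (g) = B ◁ (U ◁ (g)) ≫ B ◁ (J f Y) :=
  whc (J_nat f g) _

@[simp] lemma J_nat1_a (f : U ⟶ 𝟙_ C) (g : X ⟶ Y) (z : B ⊗ Y ⟶ Q) :
    B ◁ (J f X) ≫ B ◁ (g) ≫ z = B ◁ (U ◁ (g)) ≫ B ◁ (J f Y) ≫ z :=
  asc (J_nat1 f g) z

@[simp] lemma J_nat2 (f : U ⟶ 𝟙_ C) (g : X ⟶ Y) :
    B ◁ (B₁ ◁ (J f X)) ≫ B ◁ (B₁ ◁ (g)) = B ◁ (B₁ ◁ (U ◁ (g))) ≫ B ◁ (B₁ ◁ (J f Y)) :=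
  whc (J_nat1 f g) _

@[simp] lemma J_nat2_a (f : U ⟶ 𝟙_ C) (g : X ⟶ Y) (z : B ⊗ (B₁ ⊗ Y) ⟶ Q) :
    B ◁ (B₁ ◁ (J f X)) ≫ B ◁ (B₁ ◁ (g)) ≫ z = B ◁ (B₁ ◁ (U ◁ (g))) ≫ B ◁ (B₁ ◁ (J f Y)) ≫ z :=
  asc (J_nat2 f g) z

@[simp] lemma J_nat3 (f : U ⟶ 𝟙_ C) (g : X ⟶ Y) :
    B ◁ (B₁ ◁ (B₂ ◁ (J f X))) ≫ B ◁ (B₁ ◁ (B₂ ◁ (g))) = B ◁ (B₁ ◁ (B₂ ◁ (U ◁ (g)))) ≫ B ◁ (B₁ ◁ (B₂ ◁ (J f Y))) :=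
  whc (J_nat2 f g) _

@[simp] lemma J_nat3_a (f : U ⟶ 𝟙_ C) (g : X ⟶ Y) (z : B ⊗ (B₁ ⊗ (B₂ ⊗ Y)) ⟶ Q) :
    B ◁ (B₁ ◁ (B₂ ◁ (J f X))) ≫ B ◁ (B₁ ◁ (B₂ ◁ (g))) ≫ z = B ◁ (B₁ ◁ (B₂ ◁ (U ◁ (g)))) ≫ B ◁ (B₁ ◁ (B₂ ◁ (J f Y))) ≫ z :=
  asc (J_nat3 f g) z

@[simp] lemma D_nat_a (f : U ⟶ W ⊗ Z) (g : X ⟶ Y) (z : W ⊗ (Z ⊗ Y) ⟶ Q) :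
    D f X ≫ W ◁ (Z ◁ (g)) ≫ z = U ◁ (g) ≫ D f Y ≫ z :=
  asc (D_nat f g) z

@[simp] lemma D_nat1 (f : U ⟶ W ⊗ Z) (g : X ⟶ Y) :
    B ◁ (D f X) ≫ B ◁ (W ◁ (Z ◁ (g))) = B ◁ (U ◁ (g)) ≫ B ◁ (D f Y) :=
  whc (D_nat f g) _

@[simp] lemma D_nat1_a (f : U ⟶ W ⊗ Z) (g : X ⟶ Y) (z : B ⊗ (W ⊗ (Z ⊗ Y)) ⟶ Q) :
    B ◁ (D f X) ≫ B ◁ (W ◁ (Z ◁ (g))) ≫ z = B ◁ (U ◁ (g)) ≫ B ◁ (D f Y) ≫ z :=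
  asc (D_nat1 f g) z

@[simp] lemma D_nat2 (f : U ⟶ W ⊗ Z) (g : X ⟶ Y) :
    B ◁ (B₁ ◁ (D f X)) ≫ B ◁ (B₁ ◁ (W ◁ (Z ◁ (g)))) = B ◁ (B₁ ◁ (U ◁ (g))) ≫ B ◁ (B₁ ◁ (D f Y)) :=
  whc (D_nat1 f g) _

@[simp] lemma D_nat2_a (f : U ⟶ W ⊗ Z) (g : X ⟶ Y) (z : B ⊗ (B₁ ⊗ (W ⊗ (Z ⊗ Y))) ⟶ Q) :
    B ◁ (B₁ ◁ (D f X)) ≫ B ◁ (B₁ ◁ (W ◁ (Z ◁ (g)))) ≫ z = B ◁ (B₁ ◁ (U ◁ (g))) ≫ B ◁ (B₁ ◁ (D f Y)) ≫ z :=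
  asc (D_nat2 f g) z

@[simp] lemma P_nat_a (f : U ⟶ W) (g : X ⟶ Y) (z : W ⊗ Y ⟶ Q) :
    P f X ≫ W ◁ (g) ≫ z = U ◁ (g) ≫ P f Y ≫ z :=
  asc (P_nat f g) z

@[simp] lemma P_nat1 (f : U ⟶ W) (g : X ⟶ Y) :
    B ◁ (P f X) ≫ B ◁ (W ◁ (g)) = B ◁ (U ◁ (g)) ≫ B ◁ (P f Y) :=
  whc (P_nat f g) _

@[simp] lemma P_nat1_a (f : U ⟶ W) (g : X ⟶ Y) (z : B ⊗ (W ⊗ Y) ⟶ Q) :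
    B ◁ (P f X) ≫ B ◁ (W ◁ (g)) ≫ z = B ◁ (U ◁ (g)) ≫ B ◁ (P f Y) ≫ z :=
  asc (P_nat1 f g) z

@[simp] lemma P_nat2 (f : U ⟶ W) (g : X ⟶ Y) :
    B ◁ (B₁ ◁ (P f X)) ≫ B ◁ (B₁ ◁ (W ◁ (g))) = B ◁ (B₁ ◁ (U ◁ (g))) ≫ B ◁ (B₁ ◁ (P f Y)) :=
  whc (P_nat1 f g) _

@[simp] lemma P_nat2_a (f : U ⟶ W) (g : X ⟶ Y) (z : B ⊗ (B₁ ⊗ (W ⊗ Y)) ⟶ Q) :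
    B ◁ (B₁ ◁ (P f X)) ≫ B ◁ (B₁ ◁ (W ◁ (g))) ≫ z = B ◁ (B₁ ◁ (U ◁ (g))) ≫ B ◁ (B₁ ◁ (P f Y)) ≫ z :=
  asc (P_nat2 f g) z

@[simp] lemma S_inv0_a (z : U ⊗ (V ⊗ X) ⟶ Q) :
    T (β_ U V).hom X ≫ T (β_ U V).inv X ≫ z = z :=
  asc1 S_inv z

@[simp] lemma S_inv1 :
    B ◁ (T (β_ U V).hom X) ≫ B ◁ (T (β_ U V).inv X) = 𝟙 _ :=
  whc1 S_inv _

@[simp] lemma S_inv1_a (z : B ⊗ (U ⊗ (V ⊗ X)) ⟶ Q) :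
    B ◁ (T (β_ U V).hom X) ≫ B ◁ (T (β_ U V).inv X) ≫ z = z :=
  asc1 S_inv1 z

@[simp] lemma S_inv2 :
    B ◁ (B₁ ◁ (T (β_ U V).hom X)) ≫ B ◁ (B₁ ◁ (T (β_ U V).inv X)) = 𝟙 _ :=
  whc1 S_inv1 _

@[simp] lemma S_inv2_a (z : B ⊗ (B₁ ⊗ (U ⊗ (V ⊗ X))) ⟶ Q) :
    B ◁ (B₁ ◁ (T (β_ U V).hom X)) ≫ B ◁ (B₁ ◁ (T (β_ U V).inv X)) ≫ z = z :=
  asc1 S_inv2 z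

@[simp] lemma S_inv3 :
    B ◁ (B₁ ◁ (B₂ ◁ (T (β_ U V).hom X))) ≫ B ◁ (B₁ ◁ (B₂ ◁ (T (β_ U V).inv X))) = 𝟙 _ :=
  whc1 S_inv2 _

@[simp] lemma S_inv3_a (z : B ⊗ (B₁ ⊗ (B₂ ⊗ (U ⊗ (V ⊗ X)))) ⟶ Q) :
    B ◁ (B₁ ◁ (B₂ ◁ (T (β_ U V).hom X))) ≫ B ◁ (B₁ ◁ (B₂ ◁ (T (β_ U V).inv X))) ≫ z = z :=
  asc1 S_inv3 z

@[simp] lemma S_invn0_a (z : V ⊗ (U ⊗ X) ⟶ Q) :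
    T (β_ U V).inv X ≫ T (β_ U V).hom X ≫ z = z :=
  asc1 S_inv' z

@[simp] lemma S_invn1 :
    B ◁ (T (β_ U V).inv X) ≫ B ◁ (T (β_ U V).hom X) = 𝟙 _ :=
  whc1 S_inv' _

@[simp] lemma S_invn1_a (z : B ⊗ (V ⊗ (U ⊗ X)) ⟶ Q) :
    B ◁ (T (β_ U V).inv X) ≫ B ◁ (T (β_ U V).hom X) ≫ z = z :=
  asc1 S_invn1 z

@[simp] lemma S_invn2 :
    B ◁ (B₁ ◁ (T (β_ U V).inv X)) ≫ B ◁ (B₁ ◁ (T (β_ U V).hom X)) = 𝟙 _ :=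
  whc1 S_invn1 _

@[simp] lemma S_invn2_a (z : B ⊗ (B₁ ⊗ (V ⊗ (U ⊗ X))) ⟶ Q) :
    B ◁ (B₁ ◁ (T (β_ U V).inv X)) ≫ B ◁ (B₁ ◁ (T (β_ U V).hom X)) ≫ z = z :=
  asc1 S_invn2 z

@[simp] lemma S_invn3 :
    B ◁ (B₁ ◁ (B₂ ◁ (T (β_ U V).inv X))) ≫ B ◁ (B₁ ◁ (B₂ ◁ (T (β_ U V).hom X))) = 𝟙 _ :=
  whc1 S_invn2 _

@[simp] lemma S_invn3_a (z : B ⊗ (B₁ ⊗ (B₂ ⊗ (V ⊗ (U ⊗ X)))) ⟶ Q) :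
    B ◁ (B₁ ◁ (B₂ ◁ (T (β_ U V).inv X))) ≫ B ◁ (B₁ ◁ (B₂ ◁ (T (β_ U V).hom X))) ≫ z = z :=
  asc1 S_invn3 z


/-- Equality in a context. -/
lemma ctx {P Q : C} {R : Type v} {f g : P ⟶ Q} (h : f = g) (F : (P ⟶ Q) → R) : F f = F g :=
  congrArg F h

/-! ### Braiding relations -/

lemma hex1 (U Y Z X : C) : T (β_ U Y).hom (Z ⊗ X) ≫ Y ◁ T (β_ U Z).hom X
      = U ◁ (α_ Y Z X).inv ≫ (α_ U (Y ⊗ Z) X).inv ≫ (β_ U (Y ⊗ Z)).hom ▷ X ≫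
        (α_ (Y ⊗ Z) U X).hom ≫ (α_ Y Z (U ⊗ X)).hom := by
  rw [BraidedCategory.braiding_tensor_right_hom]
  simp only [T]; monoidal

lemma hex2 (U Y Z X : C) : T (β_ Y U).inv (Z ⊗ X) ≫ Y ◁ T (β_ Z U).inv X
      = U ◁ (α_ Y Z X).inv ≫ (α_ U (Y ⊗ Z) X).inv ≫ (β_ (Y ⊗ Z) U).inv ▷ X ≫
        (α_ (Y ⊗ Z) U X).hom ≫ (α_ Y Z (U ⊗ X)).hom := by
  rw [BraidedCategory.braiding_tensor_left_inv]
  simp only [T]; monoidal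

lemma hex3 (U Y Z X : C) : Y ◁ T (β_ Z U).hom X ≫ T (β_ Y U).hom (Z ⊗ X)
      = (α_ Y Z (U ⊗ X)).inv ≫ (α_ (Y ⊗ Z) U X).inv ≫ (β_ (Y ⊗ Z) U).hom ▷ X ≫
        (α_ U (Y ⊗ Z) X).hom ≫ U ◁ (α_ Y Z X).hom := by
  rw [BraidedCategory.braiding_tensor_left_hom]
  simp only [T]; monoidal

lemma hex4 (U Y Z X : C) : Y ◁ T (β_ U Z).inv X ≫ T (β_ U Y).inv (Z ⊗ X)
      = (α_ Y Z (U ⊗ X)).inv ≫ (α_ (Y ⊗ Z) U X).inv ≫ (β_ U (Y ⊗ Z)).inv ▷ X ≫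
        (α_ U (Y ⊗ Z) X).hom ≫ U ◁ (α_ Y Z X).hom := by
  rw [BraidedCategory.braiding_tensor_right_inv]
  simp only [T]; monoidal

/-- Naturality of the braiding: a strand coming from the front passes a one-to-one box. -/
lemma P_braid (f : V ⟶ W) : U ◁ P f X ≫ T (β_ U W).hom X = T (β_ U V).hom X ≫ P f (U ⊗ X) := by
  have := BraidedCategory.braiding_naturality_right U f
  calc _ = 𝟙 _ ⊗≫ (U ◁ f ≫ (β_ U W).hom) ▷ X ⊗≫ 𝟙 _ := by simp only [T, P]; monoidal
    _ = _ := by rw [this]; simp only [T, P]; monoidal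

lemma P_braidn (f : V ⟶ W) : U ◁ P f X ≫ T (β_ W U).inv X = T (β_ V U).inv X ≫ P f (U ⊗ X) := by
  have := BraidedCategory.braiding_inv_naturality_right U f
  calc _ = 𝟙 _ ⊗≫ (U ◁ f ≫ (β_ W U).inv) ▷ X ⊗≫ 𝟙 _ := by simp only [T, P]; monoidal
    _ = _ := by rw [this]; simp only [T, P]; monoidal

lemma P_braid' (f : V ⟶ W) : P f (U ⊗ X) ≫ T (β_ W U).hom X = T (β_ V U).hom X ≫ U ◁ P f X := by
  have := BraidedCategory.braiding_naturality_left f U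
  calc _ = 𝟙 _ ⊗≫ (f ▷ U ≫ (β_ W U).hom) ▷ X ⊗≫ 𝟙 _ := by simp only [T, P]; monoidal
    _ = _ := by rw [this]; simp only [T, P]; monoidal

lemma P_braidn' (f : V ⟶ W) : P f (U ⊗ X) ≫ T (β_ U W).inv X = T (β_ U V).inv X ≫ U ◁ P f X := by
  have := BraidedCategory.braiding_inv_naturality_left f U
  calc _ = 𝟙 _ ⊗≫ (f ▷ U ≫ (β_ U W).inv) ▷ X ⊗≫ 𝟙 _ := by simp only [T, P]; monoidal
    _ = _ := by rw [this]; simp only [T, P]; monoidal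

lemma M_eq (f : U ⊗ V ⟶ W) : M f X = (α_ U V X).inv ≫ P f X := rfl
lemma T_eq (f : U ⊗ V ⟶ W ⊗ Z) : T f X = (α_ U V X).inv ≫ P f X ≫ (α_ W Z X).hom := rfl

/-- A strand from the front crosses a multiplication-like vertex. -/
lemma M_braid (f : V ⊗ W ⟶ Z) : U ◁ M f X ≫ T (β_ U Z).hom X
    = T (β_ U V).hom _ ≫ V ◁ T (β_ U W).hom X ≫ M f (U ⊗ X) := by
  rw [M_eq, M_eq, whiskerLeft_comp, assoc, P_braid, ← assoc (T _ _), hex1]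
  simp [T]

lemma M_braidn (f : V ⊗ W ⟶ Z) : U ◁ M f X ≫ T (β_ Z U).inv X
    = T (β_ V U).inv _ ≫ V ◁ T (β_ W U).inv X ≫ M f (U ⊗ X) := by
  rw [M_eq, M_eq, whiskerLeft_comp, assoc, P_braidn, ← assoc (T _ _), hex2]
  simp [T]

lemma M_braid' (f : V ⊗ W ⟶ Z) : M f (U ⊗ X) ≫ T (β_ Z U).hom X
    = V ◁ T (β_ W U).hom X ≫ T (β_ V U).hom _ ≫ U ◁ M f X := by
  rw [M_eq, M_eq, whiskerLeft_comp, assoc, P_braid', ← assoc (V ◁ _), hex3]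
  simp [T]

lemma M_braidn' (f : V ⊗ W ⟶ Z) : M f (U ⊗ X) ≫ T (β_ U Z).inv X
    = V ◁ T (β_ U W).inv X ≫ T (β_ U V).inv _ ≫ U ◁ M f X := by
  rw [M_eq, M_eq, whiskerLeft_comp, assoc, P_braidn', ← assoc (V ◁ _), hex4]
  simp [T]

/-- A strand from the front crosses a two-to-two vertex; this includes Yang-Baxter. -/
lemma T_braid (f : V ⊗ W ⟶ Y ⊗ Z) :
    U ◁ T f X ≫ T (β_ U Y).hom _ ≫ Y ◁ T (β_ U Z).hom X
    = T (β_ U V).hom _ ≫ V ◁ T (β_ U W).hom X ≫ T f (U ⊗ X) := by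
  have h := P_braid (U := U) (X := X) f
  rw [hex1, ← assoc (T (β_ U V).hom _), hex1, T_eq, T_eq]
  simp only [whiskerLeft_comp, assoc, whiskerLeft_hom_inv_assoc, Iso.hom_inv_id_assoc] at h ⊢
  rw [T] at h
  rw [← cancel_mono (α_ (Y ⊗ Z) U X).inv] at h
  simp only [T, assoc, Iso.hom_inv_id, comp_id] at h
  rw [reassoc_of% h]
  simp

lemma T_braidn (f : V ⊗ W ⟶ Y ⊗ Z) :
    U ◁ T f X ≫ T (β_ Y U).inv _ ≫ Y ◁ T (β_ Z U).inv X
    = T (β_ V U).inv _ ≫ V ◁ T (β_ W U).inv X ≫ T f (U ⊗ X) := by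
  have h := P_braidn (U := U) (X := X) f
  rw [hex2, ← assoc (T (β_ V U).inv _), hex2, T_eq, T_eq]
  simp only [whiskerLeft_comp, assoc, whiskerLeft_hom_inv_assoc, Iso.hom_inv_id_assoc] at h ⊢
  rw [T] at h
  rw [← cancel_mono (α_ (Y ⊗ Z) U X).inv] at h
  simp only [T, assoc, Iso.hom_inv_id, comp_id] at h
  rw [reassoc_of% h]
  simp

lemma T_braid' (f : V ⊗ W ⟶ Y ⊗ Z) :
    T f (U ⊗ X) ≫ Y ◁ T (β_ Z U).hom X ≫ T (β_ Y U).hom _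
    = V ◁ T (β_ W U).hom X ≫ T (β_ V U).hom _ ≫ U ◁ T f X := by
  have h := P_braid' (U := U) (X := X) f
  rw [hex3, ← assoc (V ◁ _), hex3, T_eq, T_eq]
  simp only [whiskerLeft_comp, assoc, whiskerLeft_hom_inv_assoc, Iso.hom_inv_id_assoc] at h ⊢
  simp only [T, assoc] at h
  rw [reassoc_of% h]

lemma T_braidn' (f : V ⊗ W ⟶ Y ⊗ Z) :
    T f (U ⊗ X) ≫ Y ◁ T (β_ U Z).inv X ≫ T (β_ U Y).inv _
    = V ◁ T (β_ U W).inv X ≫ T (β_ U V).inv _ ≫ U ◁ T f X := by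
  have h := P_braidn' (U := U) (X := X) f
  rw [hex4, ← assoc (V ◁ _), hex4, T_eq, T_eq]
  simp only [whiskerLeft_comp, assoc, whiskerLeft_hom_inv_assoc, Iso.hom_inv_id_assoc] at h ⊢
  simp only [T, assoc] at h
  rw [reassoc_of% h]

/-- Counit-like vertices slide freely along crossings in either direction. -/
lemma J_braid (f : V ⟶ 𝟙_ C) : T (β_ U V).hom X ≫ J f (U ⊗ X) = U ◁ J f X := by
  have h := P_braid (U := U) (X := X) f
  have h' : J f (U ⊗ X) = P f (U ⊗ X) ≫ (λ_ _).hom := rfl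
  rw [h', ← assoc, ← h, braiding_tensorUnit_right]
  simp only [T, J, P]; monoidal

lemma J_braidn (f : V ⟶ 𝟙_ C) : T (β_ V U).inv X ≫ J f (U ⊗ X) = U ◁ J f X := by
  have h := P_braidn (U := U) (X := X) f
  have h' : J f (U ⊗ X) = P f (U ⊗ X) ≫ (λ_ _).hom := rfl
  rw [h', ← assoc, ← h, braiding_inv_tensorUnit_left]
  simp only [T, J, P]; monoidal

lemma J_braid' (f : V ⟶ 𝟙_ C) : T (β_ V U).hom X ≫ U ◁ J f X = J f (U ⊗ X) := by
  have h := P_braid' (U := U) (X := X) f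
  have h' : U ◁ J f X = U ◁ P f X ≫ U ◁ (λ_ _).hom := by simp [J, P]
  rw [h', ← assoc, ← h, braiding_tensorUnit_left]
  simp only [T, J, P]; monoidal

lemma J_braidn' (f : V ⟶ 𝟙_ C) : T (β_ U V).inv X ≫ U ◁ J f X = J f (U ⊗ X) := by
  have h := P_braidn' (U := U) (X := X) f
  have h' : U ◁ J f X = U ◁ P f X ≫ U ◁ (λ_ _).hom := by simp [J, P]
  rw [h', ← assoc, ← h, braiding_inv_tensorUnit_right]
  simp only [T, J, P]; monoidal

end Tail

section Main

variable {A : C} {𝒴 : Set C} (S : RWMB A 𝒴) (X : C)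

local notation "σp" => T (Iso.hom (BraidedCategory.braiding A A))
local notation "σn" => T (Iso.inv (BraidedCategory.braiding A A))


/-- Transport of an equation proved for the trivial tail to every tail, up to coherence. -/
lemma lift_tail {U V U' V' : C} {f g : U ⟶ V} (h : f = g) (X : C)
    (a : U' ⟶ U ⊗ X) (b : V ⊗ X ⟶ V') : a ≫ f ▷ X ≫ b = a ≫ g ▷ X ≫ b := by rw [h]

lemma lift_tail' {U V U' V' : C} {f g : U ⟶ V} (h : f = g) (X : C)
    {l r : U' ⟶ V'} (a : U' ⟶ U ⊗ X) (b : V ⊗ X ⟶ V')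
    (hl : l = a ≫ f ▷ X ≫ b) (hr : a ≫ g ▷ X ≫ b = r) : l = r := by rw [hl, h, hr]

lemma tc12 : (A ◁ T S.t₁ _ ≫ M S.m _ : A ⊗ (A ⊗ (A ⊗ X)) ⟶ _)
    = T S.t₂ _ ≫ A ◁ M S.m _ := by
  refine lift_tail' S.hc12 X (A ◁ (α_ A A X).inv ≫ (α_ A (A ⊗ A) X).inv) (α_ A A X).hom 
    ?_ ?_ <;>
    simp only [T, M, J, wl, ml, midSw] <;> monoidal

lemma tc13 : (T S.t₁ _ ≫ A ◁ σp _ ≫ A ◁ M S.m _ : A ⊗ (A ⊗ (A ⊗ X)) ⟶ _)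
    = A ◁ σp _ ≫ T S.t₃ _ ≫ A ◁ M S.m _ := by
  refine lift_tail' S.hc13 X (A ◁ (α_ A A X).inv ≫ (α_ A (A ⊗ A) X).inv) (α_ A A X).hom 
    ?_ ?_ <;>
    simp only [T, M, J, wl, ml, midSw] <;> monoidal

lemma tc14 : (A ◁ T S.t₁ _ ≫ σp _ ≫ M S.m _ : A ⊗ (A ⊗ (A ⊗ X)) ⟶ _)
    = T S.t₄ _ ≫ A ◁ M S.m _ := by
  refine lift_tail' S.hc14 X (A ◁ (α_ A A X).inv ≫ (α_ A (A ⊗ A) X).inv) (α_ A A X).hom 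
    ?_ ?_ <;>
    simp only [T, M, J, wl, ml, midSw] <;> monoidal

lemma tc23 : (T S.t₂ _ ≫ A ◁ σp _ ≫ A ◁ M S.m _ : A ⊗ (A ⊗ (A ⊗ X)) ⟶ _)
    = A ◁ T S.t₃ _ ≫ M S.m _ := by
  refine lift_tail' S.hc23 X (A ◁ (α_ A A X).inv ≫ (α_ A (A ⊗ A) X).inv) (α_ A A X).hom 
    ?_ ?_ <;>
    simp only [T, M, J, wl, ml, midSw] <;> monoidal

lemma tc24 : (A ◁ T S.t₂ _ ≫ σp _ ≫ M S.m _ : A ⊗ (A ⊗ (A ⊗ X)) ⟶ _)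
    = σp _ ≫ A ◁ T S.t₄ _ ≫ M S.m _ := by
  refine lift_tail' S.hc24 X (A ◁ (α_ A A X).inv ≫ (α_ A (A ⊗ A) X).inv) (α_ A A X).hom 
    ?_ ?_ <;>
    simp only [T, M, J, wl, ml, midSw] <;> monoidal

lemma ti41 : (A ◁ T S.t₁ _ ≫ T S.t₄ _ : A ⊗ (A ⊗ (A ⊗ X)) ⟶ _)
    = T S.t₄ _ ≫ A ◁ T S.t₁ _ := by
  refine lift_tail' S.hi41 X (A ◁ (α_ A A X).inv ≫ (α_ A (A ⊗ A) X).inv) ((α_ A (A ⊗ A) X).hom ≫ A ◁ (α_ A A X).hom) 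
    ?_ ?_ <;>
    simp only [T, M, J, wl, ml, midSw] <;> monoidal

lemma ti23 : (A ◁ T S.t₃ _ ≫ T S.t₂ _ : A ⊗ (A ⊗ (A ⊗ X)) ⟶ _)
    = T S.t₂ _ ≫ A ◁ T S.t₃ _ := by
  refine lift_tail' S.hi23 X (A ◁ (α_ A A X).inv ≫ (α_ A (A ⊗ A) X).inv) ((α_ A (A ⊗ A) X).hom ≫ A ◁ (α_ A A X).hom) 
    ?_ ?_ <;>
    simp only [T, M, J, wl, ml, midSw] <;> monoidal

lemma tecomp : (A ◁ A ◁ T S.e₁ _ ≫ A ◁ σp _ ≫ M S.m _ ≫ A ◁ M S.m _ : A ⊗ (A ⊗ (A ⊗ (A ⊗ X))) ⟶ _)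
    = T S.e₂ _ ≫ A ◁ σp _ ≫ M S.m _ ≫ A ◁ M S.m _ := by
  refine lift_tail' S.hecomp X ((α_ A A (A ⊗ (A ⊗ X))).inv ≫ (A ⊗ A) ◁ (α_ A A X).inv ≫ (α_ (A ⊗ A) (A ⊗ A) X).inv) (α_ A A X).hom 
    ?_ ?_ <;>
    simp only [T, M, J, wl, ml, midSw] <;> monoidal

lemma tax1 : (A ◁ T S.t₁ _ ≫ σp _ ≫ A ◁ T S.t₁ _ ≫ σn _ ≫ T S.t₁ _ : A ⊗ (A ⊗ (A ⊗ X)) ⟶ _)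
    = T S.t₁ _ ≫ A ◁ T S.t₁ _ := by
  refine lift_tail' S.ax1 X (A ◁ (α_ A A X).inv ≫ (α_ A (A ⊗ A) X).inv) ((α_ A (A ⊗ A) X).hom ≫ A ◁ (α_ A A X).hom) 
    ?_ ?_ <;>
    simp only [T, M, J, wl, ml, midSw] <;> monoidal

lemma tax5 : (A ◁ T S.t₁ _ ≫ T S.e₁ _ : A ⊗ (A ⊗ (A ⊗ X)) ⟶ _)
    = T S.e₁ _ ≫ A ◁ T S.t₁ _ := by
  refine lift_tail' S.ax5 X (A ◁ (α_ A A X).inv ≫ (α_ A (A ⊗ A) X).inv) ((α_ A (A ⊗ A) X).hom ≫ A ◁ (α_ A A X).hom) 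
    ?_ ?_ <;>
    simp only [T, M, J, wl, ml, midSw] <;> monoidal

lemma tax6 : (T S.t₁ _ ≫ A ◁ T S.e₁ _ : A ⊗ (A ⊗ (A ⊗ X)) ⟶ _)
    = A ◁ σn _ ≫ T S.e₁ _ ≫ A ◁ σp _ ≫ T S.t₁ _ := by
  refine lift_tail' S.ax6 X (A ◁ (α_ A A X).inv ≫ (α_ A (A ⊗ A) X).inv) ((α_ A (A ⊗ A) X).hom ≫ A ◁ (α_ A A X).hom) 
    ?_ ?_ <;>
    simp only [T, M, J, wl, ml, midSw] <;> monoidal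

lemma tax7 : (T S.t₁ _ ≫ A ◁ J S.j _ ≫ M S.m _ : A ⊗ (A ⊗ (A ⊗ X)) ⟶ _)
    = A ◁ σp _ ≫ A ◁ T S.e₁ _ ≫ A ◁ A ◁ J S.j _ ≫ M S.m _ := by
  refine lift_tail' S.ax7 X (A ◁ (α_ A A X).inv ≫ (α_ A (A ⊗ A) X).inv) (𝟙 (A ⊗ X)) 
    ?_ ?_ <;>
    simp only [T, M, J, wl, ml, midSw] <;> monoidal

lemma tax8 : (T S.t₁ _ ≫ A ◁ σp _ ≫ M S.m _ ≫ J S.j _ : A ⊗ (A ⊗ (A ⊗ X)) ⟶ _)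
    = A ◁ σp _ ≫ A ◁ T S.e₁ _ ≫ A ◁ J S.j _ ≫ M S.m _ := by
  refine lift_tail' S.ax8 X (A ◁ (α_ A A X).inv ≫ (α_ A (A ⊗ A) X).inv) (𝟙 (A ⊗ X)) 
    ?_ ?_ <;>
    simp only [T, M, J, wl, ml, midSw] <;> monoidal

lemma thm1 : (T S.t₁ _ ≫ J S.j _ : A ⊗ (A ⊗ X) ⟶ _)
    = M S.m _ := by
  refine lift_tail' S.hm₁.symm X (α_ A A X).inv (𝟙 (A ⊗ X)) 
    ?_ ?_ <;>
    simp only [T, M, J, wl, ml, midSw] <;> monoidal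

lemma thm2 : (T S.t₂ _ ≫ A ◁ J S.j _ : A ⊗ (A ⊗ X) ⟶ _)
    = M S.m _ := by
  refine lift_tail' S.hm₂.symm X (α_ A A X).inv (𝟙 (A ⊗ X)) 
    ?_ ?_ <;>
    simp only [T, M, J, wl, ml, midSw] <;> monoidal

lemma thm3p : (σp _ ≫ T S.t₃ _ ≫ J S.j _ : A ⊗ (A ⊗ X) ⟶ _)
    = M S.m _ := by
  refine lift_tail' S.hm₃.symm X (α_ A A X).inv (𝟙 (A ⊗ X)) 
    ?_ ?_ <;>
    simp only [T, M, J, wl, ml, midSw] <;> monoidal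

lemma thm4p : (σp _ ≫ T S.t₄ _ ≫ A ◁ J S.j _ : A ⊗ (A ⊗ X) ⟶ _)
    = M S.m _ := by
  refine lift_tail' S.hm₄.symm X (α_ A A X).inv (𝟙 (A ⊗ X)) 
    ?_ ?_ <;>
    simp only [T, M, J, wl, ml, midSw] <;> monoidal


lemma thm3 : T S.t₃ X ≫ J S.j _ = σn _ ≫ M S.m X := by
  rw [← thm3p]; simp

lemma thm4 : T S.t₄ X ≫ A ◁ J S.j _ = σn _ ≫ M S.m X := by
  rw [← thm4p]; simp

end Main

section Main

variable {A : C} {𝒴 : Set C} (S : RWMB A 𝒴) (X : C)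

local notation "σp" => T (Iso.hom (BraidedCategory.braiding A A))
local notation "σn" => T (Iso.inv (BraidedCategory.braiding A A))


/-- Consequence (i) of (c24). -/
lemma li : (M S.m _ ≫ M S.m _ : A ⊗ A ⊗ A ⊗ X ⟶ _) = A ◁ σn _ ≫ A ◁ σn _ ≫ A ◁ M S.m _ ≫ M S.m _ := by
  have h1 := ctx (tc24 S _)
    (fun z => (A ◁ σn _ ≫ σn _ ≫ z ≫ A ◁ J S.j _ : A ⊗ A ⊗ A ⊗ X ⟶ _))
  have h2 := ctx (thm2 S _)
    (fun z => (A ◁ σn _ ≫ σn _ ≫ A ◁ z ≫ σp _ ≫ M S.m _ : A ⊗ A ⊗ A ⊗ X ⟶ _))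
  have h3 := ctx (M_braid S.m)
    (fun z => (A ◁ σn _ ≫ σn _ ≫ z ≫ M S.m _ : A ⊗ A ⊗ A ⊗ X ⟶ _))
  have h4 := ctx (thm4 S _)
    (fun z => (A ◁ σn _ ≫ σn _ ≫ σp _ ≫ A ◁ z ≫ M S.m _ : A ⊗ A ⊗ A ⊗ X ⟶ _))
  simp at h1 h2 h3 h4 ⊢
  exact h3.symm.trans (h2.symm.trans (h1.trans h4))

/-- Consequence (ii) of (c13). -/
lemma lii : (A ◁ M S.m _ ≫ M S.m _ : A ⊗ A ⊗ A ⊗ X ⟶ _) = σn _ ≫ σn _ ≫ M S.m _ ≫ M S.m _ := by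
  have h1 := ctx (tc13 S _)
    (fun z => (σn _ ≫ A ◁ σn _ ≫ z ≫ J S.j _ : A ⊗ A ⊗ A ⊗ X ⟶ _))
  have h2 := ctx (thm1 S _)
    (fun z => (σn _ ≫ A ◁ σn _ ≫ z ≫ σp _ ≫ M S.m _ : A ⊗ A ⊗ A ⊗ X ⟶ _))
  have h3 := ctx (M_braid' S.m)
    (fun z => (σn _ ≫ A ◁ σn _ ≫ z ≫ M S.m _ : A ⊗ A ⊗ A ⊗ X ⟶ _))
  have h4 := ctx (thm3 S _)
    (fun z => (σn _ ≫ A ◁ σn _ ≫ A ◁ σp _ ≫ z ≫ M S.m _ : A ⊗ A ⊗ A ⊗ X ⟶ _))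
  simp at h1 h2 h3 h4 ⊢
  exact h3.symm.trans (h2.symm.trans (h1.trans h4))

/-- Comparison of both crossings after applying the second fusion map, a consequence of (c23). -/
lemma liv : (T S.t₂ _ ≫ A ◁ σp _ ≫ A ◁ M S.m _ : A ⊗ A ⊗ A ⊗ X ⟶ _) = T S.t₂ _ ≫ A ◁ σn _ ≫ A ◁ M S.m _ := by
  have h1 := ctx (ti23 S _)
    (fun z => (z ≫ A ◁ J S.j _ : A ⊗ A ⊗ A ⊗ X ⟶ _))
  have h2 := ctx (thm3 S _)
    (fun z => (T S.t₂ _ ≫ A ◁ z : A ⊗ A ⊗ A ⊗ X ⟶ _))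
  have h3 := ctx (thm2 S _)
    (fun z => (A ◁ T S.t₃ _ ≫ z : A ⊗ A ⊗ A ⊗ X ⟶ _))
  have h4 := tc23 S X
  simp at h1 h2 h3 h4 ⊢
  exact h4.trans (h3.symm.trans (h1.trans h2))

/-- Left cancellability of `m` with parameter object `Y`. -/
def CanL (Y : C) : Prop := ∀ (Q : C) (g h : Q ⟶ A ⊗ Y),
  A ◁ g ≫ M S.m Y = A ◁ h ≫ M S.m Y → g = h

/-- Right cancellability of `m` with parameter object `Y`. -/
def CanR (Y : C) : Prop := ∀ (Q : C) (g h : Q ⟶ A ⊗ Y),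
  A ◁ g ≫ σp Y ≫ M S.m Y = A ◁ h ≫ σp Y ≫ M S.m Y → g = h

lemma canL_of_iso {Y Y' : C} (hY : Y ∈ 𝒴) (i : Y' ≅ Y) : CanL S Y' := by
  intro Q g h e
  have := S.ndl Q Y hY (a₁ := g ≫ A ◁ i.hom) (a₂ := h ≫ A ◁ i.hom) (by
    have := congrArg (· ≫ A ◁ i.hom) e
    simp at this
    simpa [M] using this)
  exact (cancel_mono (A ◁ i.hom)).1 this

lemma canR_of_iso {Y Y' : C} (hY : Y ∈ 𝒴) (i : Y' ≅ Y) : CanR S Y' := by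
  intro Q g h e
  have := S.ndr Q Y hY (a₁ := g ≫ A ◁ i.hom) (a₂ := h ≫ A ◁ i.hom) (by
    have := congrArg (· ≫ A ◁ i.hom) e
    simp at this
    simpa [M, T] using this)
  exact (cancel_mono (A ◁ i.hom)).1 this

lemma canL0 : CanL S (𝟙_ C) := canL_of_iso S S.memI (Iso.refl _)
lemma canL1 : CanL S (A ⊗ 𝟙_ C) := canL_of_iso S S.memA (ρ_ A)
lemma canR1 : CanR S (A ⊗ 𝟙_ C) := canR_of_iso S S.memA (ρ_ A)
lemma canR2 : CanR S (A ⊗ (A ⊗ 𝟙_ C)) := canR_of_iso S S.memAA (whiskerLeftIso A (ρ_ A))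

/-- Cancellation of the product when it is reached after undoing one crossing. -/
lemma canMid {Q : C} (g h : Q ⟶ A ⊗ (A ⊗ 𝟙_ C))
    (e : A ◁ g ≫ σn _ ≫ A ◁ M S.m _ = A ◁ h ≫ σn _ ≫ A ◁ M S.m _) : g = h := by
  have := canL1 S Q (g ≫ σp _) (h ≫ σp _) (by
    have := congrArg (· ≫ σp _) e
    simp only [assoc, M_braid] at this
    simpa using this)
  have := congrArg (· ≫ σn _) this
  simpa using this

/-- Coherence maps. -/
def u0 (X : C) : X ⟶ 𝟙_ C ⊗ X := (λ_ X).inv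
def u1 (A X : C) : A ⊗ X ⟶ (A ⊗ 𝟙_ C) ⊗ X := A ◁ (λ_ X).inv ≫ (α_ _ _ _).inv
def u2 (A X : C) : A ⊗ A ⊗ X ⟶ (A ⊗ A ⊗ 𝟙_ C) ⊗ X := A ◁ u1 A X ≫ (α_ _ _ _).inv
def u3 (A X : C) : A ⊗ A ⊗ A ⊗ X ⟶ (A ⊗ A ⊗ A ⊗ 𝟙_ C) ⊗ X := A ◁ u2 A X ≫ (α_ _ _ _).inv
def u4 (A X : C) : A ⊗ A ⊗ A ⊗ A ⊗ X ⟶ (A ⊗ A ⊗ A ⊗ A ⊗ 𝟙_ C) ⊗ X :=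
  A ◁ u3 A X ≫ (α_ _ _ _).inv
def v1 (A X : C) : (A ⊗ 𝟙_ C) ⊗ X ⟶ A ⊗ X := (α_ _ _ _).hom ≫ A ◁ (λ_ X).hom
def v2 (A X : C) : (A ⊗ A ⊗ 𝟙_ C) ⊗ X ⟶ A ⊗ A ⊗ X := (α_ _ _ _).hom ≫ A ◁ v1 A X
def v3 (A X : C) : (A ⊗ A ⊗ A ⊗ 𝟙_ C) ⊗ X ⟶ A ⊗ A ⊗ A ⊗ X := (α_ _ _ _).hom ≫ A ◁ v2 A X

lemma lB0 : (T S.t₂ _ ≫ A ◁ M S.m _ : A ⊗ A ⊗ A ⊗ 𝟙_ C ⟶ _) = T S.t₂ _ ≫ A ◁ σn _ ≫ A ◁ σn _ ≫ A ◁ M S.m _ := by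
  apply canMid S
  have h1 := ctx (lii S _)
    (fun z => (A ◁ T S.t₂ _ ≫ σn _ ≫ A ◁ z : A ⊗ A ⊗ A ⊗ A ⊗ 𝟙_ C ⟶ _))
  have h2 := ctx (li S _)
    (fun z => (A ◁ T S.t₂ _ ≫ σn _ ≫ A ◁ z : A ⊗ A ⊗ A ⊗ A ⊗ 𝟙_ C ⟶ _))
  have h3 := ctx (T_braid' S.t₂)
    (fun z => (σn _ ≫ A ◁ σn _ ≫ z ≫ σn _ ≫ A ◁ σn _ ≫ A ◁ σn _ ≫ A ◁ M S.m _ ≫ A ◁ M S.m _ : A ⊗ A ⊗ A ⊗ A ⊗ 𝟙_ C ⟶ _))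
  have h4 := ctx (T_braid' S.t₂)
    (fun z => (σn _ ≫ A ◁ σn _ ≫ z ≫ σn _ ≫ A ◁ M S.m _ ≫ A ◁ M S.m _ : A ⊗ A ⊗ A ⊗ A ⊗ 𝟙_ C ⟶ _))
  have h5 := ctx (liv S _)
    (fun z => (σn _ ≫ A ◁ σn _ ≫ z ≫ A ◁ M S.m _ : A ⊗ A ⊗ A ⊗ A ⊗ 𝟙_ C ⟶ _))
  simp at h1 h2 h3 h4 h5 ⊢
  exact h1.trans (h3.symm.trans (h5.symm.trans (h4.trans h2)))

lemma lB : (T S.t₂ _ ≫ A ◁ M S.m _ : A ⊗ A ⊗ A ⊗ X ⟶ _) = T S.t₂ _ ≫ A ◁ σn _ ≫ A ◁ σn _ ≫ A ◁ M S.m _ := by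
  refine lift_tail' (lB0 S) X (u3 A X) (v2 A X) ?_ ?_ <;>
    simp only [T, M, u3, u2, u1, v2, v1] <;> monoidal

lemma RL0 : (A ◁ M S.m _ ≫ T S.t₁ _ : A ⊗ A ⊗ A ⊗ 𝟙_ C ⟶ _) = T S.t₁ _ ≫ A ◁ M S.m _ := by
  apply canL1 S
  have h1 := ctx (tc12 S _)
    (fun z => (A ◁ A ◁ M S.m _ ≫ z : A ⊗ A ⊗ A ⊗ A ⊗ 𝟙_ C ⟶ _))
  have h2 := ctx (lii S _)
    (fun z => (T S.t₂ _ ≫ A ◁ z : A ⊗ A ⊗ A ⊗ A ⊗ 𝟙_ C ⟶ _))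
  have h3 := ctx (lB S _)
    (fun z => (z ≫ A ◁ M S.m _ : A ⊗ A ⊗ A ⊗ A ⊗ 𝟙_ C ⟶ _))
  have h4 := ctx (tc12 S _)
    (fun z => (z ≫ A ◁ M S.m _ : A ⊗ A ⊗ A ⊗ A ⊗ 𝟙_ C ⟶ _))
  simp at h1 h2 h3 h4 ⊢
  exact h1.trans (h2.trans (h3.symm.trans h4.symm))

/-- `t₁` is right linear. -/
lemma RL : (A ◁ M S.m _ ≫ T S.t₁ _ : A ⊗ A ⊗ A ⊗ X ⟶ _) = T S.t₁ _ ≫ A ◁ M S.m _ := by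
  refine lift_tail' (RL0 S) X (u3 A X) (v2 A X) ?_ ?_ <;>
    simp only [T, M, u3, u2, u1, v2, v1] <;> monoidal

/-- `m` is associative. -/
lemma mass : (A ◁ M S.m _ ≫ M S.m _ : A ⊗ A ⊗ A ⊗ X ⟶ _) = M S.m _ ≫ M S.m _ := by
  have h1 := ctx (RL S _)
    (fun z => (z ≫ J S.j _ : A ⊗ A ⊗ A ⊗ X ⟶ _))
  have h2 := ctx (thm1 S _)
    (fun z => (A ◁ M S.m _ ≫ z : A ⊗ A ⊗ A ⊗ X ⟶ _))
  have h3 := ctx (thm1 S _)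
    (fun z => (z ≫ M S.m _ : A ⊗ A ⊗ A ⊗ X ⟶ _))
  simp at h1 h2 h3 ⊢
  exact h2.symm.trans (h1.trans h3)

lemma mc0 : (σn _ ≫ σn _ ≫ M S.m _ : A ⊗ A ⊗ 𝟙_ C ⟶ _) = M S.m _ := by
  apply canL0 S
  have h1 := li S (𝟙_ C)
  have h2 := mass S (𝟙_ C)
  simp at h1 h2 ⊢
  exact h1.symm.trans h2.symm

/-- `m ∘ c² = m`. -/
lemma mc : (σp _ ≫ M S.m _ : A ⊗ A ⊗ X ⟶ _) = σn _ ≫ M S.m _ := by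
  have h : (σn _ ≫ σn _ ≫ M S.m _ : A ⊗ A ⊗ X ⟶ _) = M S.m _ := by
    refine lift_tail' (mc0 S) X (u2 A X) (v1 A X) ?_ ?_ <;>
    simp only [T, M, u3, u2, u1, v2, v1] <;> monoidal
  have h1 := ctx h
    (fun z => (σp _ ≫ z : A ⊗ A ⊗ X ⟶ _))
  simp at h1 ⊢
  exact h1.symm

end Main

section Main

variable {A : C} {𝒴 : Set C} (S : RWMB A 𝒴) (X : C)

local notation "σp" => T (Iso.hom (BraidedCategory.braiding A A))
local notation "σn" => T (Iso.inv (BraidedCategory.braiding A A))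


/-- Axiom I with the counit applied. -/
lemma s1 : (M S.m _ ≫ T S.t₁ _ : A ⊗ A ⊗ A ⊗ X ⟶ _) = A ◁ T S.t₁ _ ≫ σp _ ≫ A ◁ T S.t₁ _ ≫ σn _ ≫ M S.m _ := by
  have h1 := ctx (tax1 S _)
    (fun z => (z ≫ J S.j _ : A ⊗ A ⊗ A ⊗ X ⟶ _))
  have h2 := ctx (thm1 S _)
    (fun z => (z ≫ T S.t₁ _ : A ⊗ A ⊗ A ⊗ X ⟶ _))
  have h3 := ctx (thm1 S _)
    (fun z => (A ◁ T S.t₁ _ ≫ σp _ ≫ A ◁ T S.t₁ _ ≫ σn _ ≫ z : A ⊗ A ⊗ A ⊗ X ⟶ _))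
  simp at h1 h2 h3 ⊢
  exact h2.symm.trans (h1.symm.trans h3)

lemma a5 : (A ◁ T S.t₁ _ ≫ T S.e₁ _ ≫ A ◁ J S.j _ : A ⊗ A ⊗ A ⊗ X ⟶ _) = T S.e₁ _ ≫ A ◁ M S.m _ := by
  have h1 := ctx (tax5 S _)
    (fun z => (z ≫ A ◁ J S.j _ : A ⊗ A ⊗ A ⊗ X ⟶ _))
  have h2 := ctx (thm1 S _)
    (fun z => (T S.e₁ _ ≫ A ◁ z : A ⊗ A ⊗ A ⊗ X ⟶ _))
  simp at h1 h2 ⊢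
  exact h1.trans h2

lemma a6 : (M S.m _ ≫ T S.e₁ _ : A ⊗ A ⊗ A ⊗ X ⟶ _) = A ◁ σn _ ≫ T S.e₁ _ ≫ A ◁ σp _ ≫ M S.m _ := by
  have h1 := ctx (tax6 S _)
    (fun z => (z ≫ J S.j _ : A ⊗ A ⊗ A ⊗ X ⟶ _))
  have h2 := ctx (thm1 S _)
    (fun z => (z ≫ T S.e₁ _ : A ⊗ A ⊗ A ⊗ X ⟶ _))
  have h3 := ctx (thm1 S _)
    (fun z => (A ◁ σn _ ≫ T S.e₁ _ ≫ A ◁ σp _ ≫ z : A ⊗ A ⊗ A ⊗ X ⟶ _))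
  simp at h1 h2 h3 ⊢
  exact h2.symm.trans (h1.trans h3)

lemma lN0 : (T S.e₂ _ ≫ A ◁ A ◁ M S.m _ ≫ A ◁ M S.m _ : A ⊗ A ⊗ A ⊗ A ⊗ 𝟙_ C ⟶ _) = A ◁ A ◁ T S.t₁ _ ≫ A ◁ σp _ ≫ T S.t₁ _ ≫ A ◁ J S.j _ ≫ A ◁ M S.m _ := by
  apply canR1 S
  have h0 := ctx (mc S _)
    (fun z => (A ◁ T S.e₂ _ ≫ A ◁ A ◁ A ◁ M S.m _ ≫ A ◁ A ◁ M S.m _ ≫ z : A ⊗ A ⊗ A ⊗ A ⊗ A ⊗ 𝟙_ C ⟶ _))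
  have h1 := ctx (T_braidn S.e₂)
    (fun z => (z ≫ A ◁ σp _ ≫ A ◁ A ◁ A ◁ M S.m _ ≫ M S.m _ ≫ A ◁ M S.m _ : A ⊗ A ⊗ A ⊗ A ⊗ A ⊗ 𝟙_ C ⟶ _))
  have h2 := ctx (mass S _)
    (fun z => (σn _ ≫ A ◁ σn _ ≫ T S.e₂ _ ≫ A ◁ σp _ ≫ M S.m _ ≫ A ◁ z : A ⊗ A ⊗ A ⊗ A ⊗ A ⊗ 𝟙_ C ⟶ _))
  have h3 := ctx (tecomp S _)
    (fun z => (σn _ ≫ A ◁ σn _ ≫ z ≫ A ◁ M S.m _ : A ⊗ A ⊗ A ⊗ A ⊗ A ⊗ 𝟙_ C ⟶ _))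
  have h4 := ctx (mass S _)
    (fun z => (σn _ ≫ A ◁ σn _ ≫ A ◁ A ◁ T S.e₁ _ ≫ A ◁ σp _ ≫ M S.m _ ≫ A ◁ z : A ⊗ A ⊗ A ⊗ A ⊗ A ⊗ 𝟙_ C ⟶ _))
  have h5 := ctx (a5 S _)
    (fun z => (σn _ ≫ A ◁ σn _ ≫ A ◁ A ◁ z ≫ A ◁ σp _ ≫ M S.m _ ≫ A ◁ M S.m _ : A ⊗ A ⊗ A ⊗ A ⊗ A ⊗ 𝟙_ C ⟶ _))
  have h6 := ctx (T_braid S.e₁)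
    (fun z => (σn _ ≫ A ◁ σn _ ≫ A ◁ A ◁ A ◁ T S.t₁ _ ≫ A ◁ z ≫ A ◁ A ◁ J S.j _ ≫ M S.m _ ≫ A ◁ M S.m _ : A ⊗ A ⊗ A ⊗ A ⊗ A ⊗ 𝟙_ C ⟶ _))
  have h7 := ctx (J_braid S.j)
    (fun z => (σn _ ≫ A ◁ σn _ ≫ A ◁ A ◁ A ◁ T S.t₁ _ ≫ A ◁ A ◁ T S.e₁ _ ≫ A ◁ σp _ ≫ A ◁ A ◁ z ≫ M S.m _ ≫ A ◁ M S.m _ : A ⊗ A ⊗ A ⊗ A ⊗ A ⊗ 𝟙_ C ⟶ _))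
  have h8 := ctx (tax7 S _)
    (fun z => (σn _ ≫ A ◁ σn _ ≫ A ◁ A ◁ A ◁ T S.t₁ _ ≫ A ◁ σp _ ≫ A ◁ A ◁ σp _ ≫ A ◁ σn _ ≫ z ≫ A ◁ M S.m _ : A ⊗ A ⊗ A ⊗ A ⊗ A ⊗ 𝟙_ C ⟶ _))
  have h9 := ctx (T_braidn S.t₁)
    (fun z => (A ◁ A ◁ A ◁ T S.t₁ _ ≫ A ◁ A ◁ σp _ ≫ z ≫ A ◁ σp _ ≫ A ◁ A ◁ J S.j _ ≫ M S.m _ ≫ A ◁ M S.m _ : A ⊗ A ⊗ A ⊗ A ⊗ A ⊗ 𝟙_ C ⟶ _))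
  have h10 := ctx (J_braid' S.j)
    (fun z => (A ◁ A ◁ A ◁ T S.t₁ _ ≫ A ◁ A ◁ σp _ ≫ σn _ ≫ A ◁ σn _ ≫ T S.t₁ _ ≫ A ◁ z ≫ M S.m _ ≫ A ◁ M S.m _ : A ⊗ A ⊗ A ⊗ A ⊗ A ⊗ 𝟙_ C ⟶ _))
  have h11 := ctx (mc S _)
    (fun z => (A ◁ A ◁ A ◁ T S.t₁ _ ≫ A ◁ A ◁ σp _ ≫ A ◁ T S.t₁ _ ≫ A ◁ A ◁ J S.j _ ≫ A ◁ A ◁ M S.m _ ≫ z : A ⊗ A ⊗ A ⊗ A ⊗ A ⊗ 𝟙_ C ⟶ _))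
  simp at h0 h1 h2 h3 h4 h5 h6 h7 h8 h9 h10 h11 ⊢
  exact h0.trans <| h1.trans <| h2.trans <| h3.symm.trans <| h4.symm.trans <| h5.symm.trans <|
    h7.symm.trans <| h6.trans <| h8.symm.trans <| h10.symm.trans <| h9.symm.trans h11.symm

lemma lN : (T S.e₂ _ ≫ A ◁ A ◁ M S.m _ ≫ A ◁ M S.m _ : A ⊗ A ⊗ A ⊗ A ⊗ X ⟶ _) = A ◁ A ◁ T S.t₁ _ ≫ A ◁ σp _ ≫ T S.t₁ _ ≫ A ◁ J S.j _ ≫ A ◁ M S.m _ := by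
  refine lift_tail' (lN0 S) X (u4 A X) (v2 A X) ?_ ?_ <;>
    simp only [T, M, J, u4, u3, u2, u1, v2, v1] <;> monoidal

/-- The functional `j` of a product absorbs the fusion map into the idempotent `e₂`. -/
lemma star : (A ◁ A ◁ T S.t₁ _ ≫ A ◁ σp _ ≫ M S.m _ ≫ J S.j _ ≫ M S.m _ : A ⊗ A ⊗ A ⊗ A ⊗ X ⟶ _) = A ◁ A ◁ M S.m _ ≫ T S.e₂ _ ≫ J S.j _ ≫ M S.m _ := by
  have h1 := ctx (lN S _)
    (fun z => (z ≫ J S.j _ : A ⊗ A ⊗ A ⊗ A ⊗ X ⟶ _))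
  have h2 := ctx (thm1 S _)
    (fun z => (A ◁ A ◁ T S.t₁ _ ≫ A ◁ σp _ ≫ z ≫ J S.j _ ≫ M S.m _ : A ⊗ A ⊗ A ⊗ A ⊗ X ⟶ _))
  simp at h1 h2 ⊢
  exact h2.symm.trans h1.symm

/-- Two presentations of the pairing given by evaluating the counit on an opposite product. -/
lemma Kform : (A ◁ σp _ ≫ M S.m _ ≫ J S.j _ : A ⊗ A ⊗ A ⊗ X ⟶ _) = σn _ ≫ A ◁ M S.m _ ≫ A ◁ J S.j _ := by
  have h1 := ctx (M_braid S.m)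
    (fun z => (σn _ ≫ z ≫ J S.j _ : A ⊗ A ⊗ A ⊗ X ⟶ _))
  have h2 := ctx (J_braid S.j)
    (fun z => (σn _ ≫ A ◁ M S.m _ ≫ z : A ⊗ A ⊗ A ⊗ X ⟶ _))
  simp at h1 h2 ⊢
  exact h1.symm.trans h2

lemma lK0 {Q : C} (l r : Q ⟶ A ⊗ A) (e : l ≫ S.m = r ≫ S.m) :
    A ◁ D l (𝟙_ C) ≫ A ◁ T S.t₁ _ ≫ M S.m _ ≫ J S.j _ = A ◁ D r _ ≫ A ◁ T S.t₁ _ ≫ M S.m _ ≫ J S.j _ := by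
  have e' : D l (𝟙_ C) ≫ M S.m _ = D r _ ≫ M S.m _ := by
    simp only [D, M, assoc, Iso.hom_inv_id_assoc, ← comp_whiskerRight, e]
  apply canL0 S
  have key : ∀ l : Q ⟶ A ⊗ A, A ◁ A ◁ D l (𝟙_ C) ≫ A ◁ A ◁ T S.t₁ _ ≫ A ◁ M S.m _ ≫ A ◁ J S.j _ ≫ M S.m _
      = A ◁ A ◁ (D l _ ≫ M S.m _) ≫ T (β_ A A).hom _ ≫ T S.e₂ _ ≫ J S.j _ ≫ M S.m _ := by
    intro l
    have h1 := ctx (Kform S _)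
      (fun z => (σp _ ≫ A ◁ A ◁ T S.t₁ _ ≫ z ≫ M S.m _ : A ⊗ A ⊗ A ⊗ A ⊗ 𝟙_ C ⟶ _))
    have h2 := ctx (star S _)
      (fun z => (σp _ ≫ z : A ⊗ A ⊗ A ⊗ A ⊗ 𝟙_ C ⟶ _))
    simp at h1 h2 ⊢
    have h3 := congrArg (fun z => A ◁ A ◁ D l (𝟙_ C) ≫ z) (h1.symm.trans h2)
    exact h3
  have h1 := key l
  have h2 := key r
  rw [e', ← h2] at h1
  simp at h1 ⊢
  exact h1

/-- The pairing of the fusion map output depends only on what the multiplication sees. -/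
lemma lK {Q : C} (l r : Q ⟶ A ⊗ A) (e : l ≫ S.m = r ≫ S.m) :
    A ◁ D l X ≫ A ◁ T S.t₁ _ ≫ M S.m _ ≫ J S.j _ = A ◁ D r _ ≫ A ◁ T S.t₁ _ ≫ M S.m _ ≫ J S.j _ := by
  refine lift_tail' (lK0 S l r e) X (A ◁ Q ◁ (λ_ X).inv ≫ A ◁ (α_ _ _ _).inv ≫ (α_ _ _ _).inv)
    (v1 A X) ?_ ?_ <;>
    simp only [T, M, J, D, u4, u3, u2, u1, v2, v1] <;> monoidal

end Main

section Main

variable {A : C} {𝒴 : Set C} (S : RWMB A 𝒴) (X : C)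

local notation "σp" => T (Iso.hom (BraidedCategory.braiding A A))
local notation "σn" => T (Iso.inv (BraidedCategory.braiding A A))


/-- Right non-degeneracy, tested at the right end. -/
lemma canEnd {V W : C} (f : V ⊗ A ⟶ W) (hf : NdRightOn f 𝒴) {Y : C} (hY : Y ∈ 𝒴) {Q : C}
    (g h : Q ⟶ Y ⊗ V)
    (e : g ▷ A ≫ (α_ Y V A).hom ≫ Y ◁ f = h ▷ A ≫ (α_ Y V A).hom ≫ Y ◁ f) : g = h := by
  have b : (β_ A (Y ⊗ V)).hom ≫ (α_ Y V A).hom ≫ (β_ (V ⊗ A) Y).inv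
      = A ◁ (β_ V Y).inv ≫ (α_ A V Y).inv ≫ (β_ A V).hom ▷ Y ≫ (α_ V A Y).hom ≫ (α_ V A Y).inv := by
    rw [BraidedCategory.braiding_tensor_left_inv]
    simp only [Iso.hom_inv_id_assoc]
    have b1 := BraidedCategory.braiding_naturality_right A (β_ V Y).inv
    rw [← reassoc_of% b1, BraidedCategory.braiding_tensor_right_hom]
    simp
  have key : ∀ g : Q ⟶ Y ⊗ V,
      A ◁ (g ≫ (β_ V Y).inv) ≫ (α_ A V Y).inv ≫ ((β_ A V).hom ≫ f) ▷ Y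
      = (β_ A Q).hom ≫ (g ▷ A ≫ (α_ Y V A).hom ≫ Y ◁ f) ≫ (β_ W Y).inv := by
    intro g
    simp only [assoc, BraidedCategory.braiding_inv_naturality_right]
    rw [← BraidedCategory.braiding_naturality_right_assoc, reassoc_of% b]
    simp
  have h1 := hf Q Y hY (a₁ := g ≫ (β_ V Y).inv) (a₂ := h ≫ (β_ V Y).inv) (by
    show A ◁ (g ≫ (β_ V Y).inv) ≫ (α_ A V Y).inv ≫ ((β_ A V).hom ≫ f) ▷ Y = A ◁ (h ≫ (β_ V Y).inv) ≫ (α_ A V Y).inv ≫ ((β_ A V).hom ≫ f) ▷ Y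
    rw [key, key, e])
  exact (cancel_mono _).1 h1

instance (X : C) : IsIso (u3 A X) := by unfold u3 u2 u1; infer_instance

lemma canEnd2 (g h : A ⊗ A ⊗ A ⊗ 𝟙_ C ⟶ A ⊗ A ⊗ 𝟙_ C)
    {g' h' : A ⊗ A ⊗ A ⊗ A ⊗ 𝟙_ C ⟶ A ⊗ A ⊗ A ⊗ 𝟙_ C}
    (hg : g' = u3 A (A ⊗ 𝟙_ C) ≫ g ▷ (A ⊗ 𝟙_ C) ≫ v2 A (A ⊗ 𝟙_ C))
    (hh : h' = u3 A (A ⊗ 𝟙_ C) ≫ h ▷ (A ⊗ 𝟙_ C) ≫ v2 A (A ⊗ 𝟙_ C))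
    (e : g' ≫ A ◁ M S.m _ = h' ≫ A ◁ M S.m _) : g = h := by
  rw [hg, hh] at e
  simp only [assoc] at e
  rw [cancel_epi] at e
  have key : ∀ g : A ⊗ A ⊗ A ⊗ 𝟙_ C ⟶ A ⊗ A ⊗ 𝟙_ C,
      (g ≫ A ◁ (ρ_ A).hom) ▷ A ≫ (α_ _ _ _).hom ≫ A ◁ S.m
      = _ ◁ (ρ_ A).inv ≫ (g ▷ (A ⊗ 𝟙_ C) ≫ v2 A (A ⊗ 𝟙_ C) ≫ A ◁ M S.m _) ≫ A ◁ (ρ_ A).hom := by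
    intro g
    simp only [v2, v1, M]; monoidal
  have h1 := canEnd S.m S.ndr S.memA (g ≫ A ◁ (ρ_ A).hom) (h ≫ A ◁ (ρ_ A).hom)
    (by rw [key, key, e])
  exact (cancel_mono _).1 h1

lemma canEnd3 (g h : A ⊗ A ⊗ A ⊗ 𝟙_ C ⟶ A ⊗ A ⊗ A ⊗ 𝟙_ C)
    {g' h' : A ⊗ A ⊗ A ⊗ A ⊗ 𝟙_ C ⟶ A ⊗ A ⊗ A ⊗ A ⊗ 𝟙_ C}
    (hg : g' = u3 A (A ⊗ 𝟙_ C) ≫ g ▷ (A ⊗ 𝟙_ C) ≫ v3 A (A ⊗ 𝟙_ C))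
    (hh : h' = u3 A (A ⊗ 𝟙_ C) ≫ h ▷ (A ⊗ 𝟙_ C) ≫ v3 A (A ⊗ 𝟙_ C))
    (e : g' ≫ A ◁ A ◁ M S.m _ = h' ≫ A ◁ A ◁ M S.m _) : g = h := by
  rw [hg, hh] at e
  simp only [assoc] at e
  rw [cancel_epi] at e
  have key : ∀ g : A ⊗ A ⊗ A ⊗ 𝟙_ C ⟶ A ⊗ A ⊗ A ⊗ 𝟙_ C,
      (g ≫ A ◁ A ◁ (ρ_ A).hom ≫ (α_ A A A).inv) ▷ A ≫ (α_ _ _ _).hom ≫ (A ⊗ A) ◁ S.m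
      = _ ◁ (ρ_ A).inv ≫ (g ▷ (A ⊗ 𝟙_ C) ≫ v3 A (A ⊗ 𝟙_ C) ≫ A ◁ A ◁ M S.m _) ≫
        A ◁ A ◁ (ρ_ A).hom ≫ (α_ A A A).inv := by
    intro g
    simp only [v3, v2, v1, M]; monoidal
  have h1 := canEnd S.m S.ndr S.memAA (g ≫ A ◁ A ◁ (ρ_ A).hom ≫ (α_ A A A).inv)
    (h ≫ A ◁ A ◁ (ρ_ A).hom ≫ (α_ A A A).inv) (by rw [key, key, e])
  exact (cancel_mono _).1 h1

lemma t4e1_0 : (T S.t₄ _ ≫ A ◁ T S.e₁ _ ≫ A ◁ σn _ : A ⊗ A ⊗ A ⊗ 𝟙_ C ⟶ _) = A ◁ T S.e₁ _ ≫ T S.t₄ _ ≫ A ◁ σn _ := by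
  refine canEnd3 S _ _ (g' := (T S.t₄ _ ≫ A ◁ T S.e₁ _ ≫ A ◁ σn _ : A ⊗ A ⊗ A ⊗ A ⊗ 𝟙_ C ⟶ _)) (h' := (A ◁ T S.e₁ _ ≫ T S.t₄ _ ≫ A ◁ σn _ : A ⊗ A ⊗ A ⊗ A ⊗ 𝟙_ C ⟶ _))
    ?_ ?_ ?_
  · simp only [T, u3, u2, u1, v3, v2, v1]; monoidal
  · simp only [T, u3, u2, u1, v3, v2, v1]; monoidal
  have h1 := ctx (tax6 S _)
    (fun z => (A ◁ A ◁ σp _ ≫ A ◁ z ≫ σp _ ≫ M S.m _ ≫ A ◁ σn _ : A ⊗ A ⊗ A ⊗ A ⊗ 𝟙_ C ⟶ _))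
  have h2 := ctx (tc14 S _)
    (fun z => (A ◁ A ◁ σp _ ≫ z ≫ A ◁ T S.e₁ _ ≫ A ◁ σn _ : A ⊗ A ⊗ A ⊗ A ⊗ 𝟙_ C ⟶ _))
  have h3 := ctx (a6 S _)
    (fun z => (A ◁ A ◁ σp _ ≫ T S.t₄ _ ≫ A ◁ z ≫ A ◁ σn _ : A ⊗ A ⊗ A ⊗ A ⊗ 𝟙_ C ⟶ _))
  have h4 := ctx (tc14 S _)
    (fun z => (A ◁ T S.e₁ _ ≫ A ◁ A ◁ σp _ ≫ z ≫ A ◁ σn _ : A ⊗ A ⊗ A ⊗ A ⊗ 𝟙_ C ⟶ _))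
  have h5 := ctx (M_braidn' S.m)
    (fun z => (T S.t₄ _ ≫ A ◁ T S.e₁ _ ≫ A ◁ A ◁ σp _ ≫ A ◁ z : A ⊗ A ⊗ A ⊗ A ⊗ 𝟙_ C ⟶ _))
  have h6 := ctx (M_braidn' S.m)
    (fun z => (A ◁ T S.e₁ _ ≫ A ◁ A ◁ σp _ ≫ T S.t₄ _ ≫ A ◁ z : A ⊗ A ⊗ A ⊗ A ⊗ 𝟙_ C ⟶ _))
  simp at h1 h2 h3 h4 h5 h6 ⊢
  exact h5.symm.trans <| h3.symm.trans <| h2.symm.trans <| h1.trans <| h4.trans h6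

/-- Interchange of the fourth fusion map with the idempotent of the first one. -/
lemma t4e1 : (T S.t₄ _ ≫ A ◁ T S.e₁ _ : A ⊗ A ⊗ A ⊗ X ⟶ _) = A ◁ T S.e₁ _ ≫ T S.t₄ _ := by
  have h : (T S.t₄ _ ≫ A ◁ T S.e₁ _ ≫ A ◁ σn _ : A ⊗ A ⊗ A ⊗ X ⟶ _) = A ◁ T S.e₁ _ ≫ T S.t₄ _ ≫ A ◁ σn _ := by
    refine lift_tail' (t4e1_0 S) X (u3 A X) (v3 A X) ?_ ?_ <;>
      simp only [T, u3, u2, u1, v3, v2, v1] <;> monoidal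
  have h1 := ctx h
    (fun z => (z ≫ A ◁ σp _ : A ⊗ A ⊗ A ⊗ X ⟶ _))
  simpa using h1

/-- Key identity for the right coaction: the projection onto the base after `t₄` is governed by `e₁`. -/
lemma lH : (σp _ ≫ T S.t₄ _ ≫ A ◁ T S.e₁ _ ≫ A ◁ J S.j _ : A ⊗ A ⊗ A ⊗ X ⟶ _) = M S.m _ ≫ T S.e₁ _ := by
  have h1 := ctx (t4e1 S _)
    (fun z => (σp _ ≫ z ≫ A ◁ J S.j _ : A ⊗ A ⊗ A ⊗ X ⟶ _))
  have h2 := ctx (thm4 S _)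
    (fun z => (σp _ ≫ A ◁ T S.e₁ _ ≫ z : A ⊗ A ⊗ A ⊗ X ⟶ _))
  have h3 := a6 S X
  have h4 := ctx (T_braidn S.e₁)
    (fun z => (σp _ ≫ z ≫ A ◁ σp _ ≫ M S.m _ : A ⊗ A ⊗ A ⊗ X ⟶ _))
  simp at h1 h2 h3 h4 ⊢
  exact h1.trans <| h2.trans <| h4.trans h3.symm

lemma M4_0 : (A ◁ M S.m _ ≫ T S.t₄ _ : A ⊗ A ⊗ A ⊗ 𝟙_ C ⟶ _) = σn _ ≫ A ◁ T S.t₄ _ ≫ σp _ ≫ T S.t₄ _ ≫ A ◁ M S.m _ := by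
  refine canEnd2 S _ _ (g' := (A ◁ M S.m _ ≫ T S.t₄ _ : A ⊗ A ⊗ A ⊗ A ⊗ 𝟙_ C ⟶ _))
    (h' := (σn _ ≫ A ◁ T S.t₄ _ ≫ σp _ ≫ T S.t₄ _ ≫ A ◁ M S.m _ : A ⊗ A ⊗ A ⊗ A ⊗ 𝟙_ C ⟶ _)) ?_ ?_ ?_
  · simp only [T, M, u3, u2, u1, v3, v2, v1]; monoidal
  · simp only [T, M, u3, u2, u1, v3, v2, v1]; monoidal
  have h1 := ctx (tc14 S _)
    (fun z => (A ◁ M S.m _ ≫ z : A ⊗ A ⊗ A ⊗ A ⊗ 𝟙_ C ⟶ _))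
  have h2 := ctx (s1 S _)
    (fun z => (A ◁ z ≫ σp _ ≫ M S.m _ : A ⊗ A ⊗ A ⊗ A ⊗ 𝟙_ C ⟶ _))
  have h3 := ctx (M_braid S.m)
    (fun z => (A ◁ A ◁ T S.t₁ _ ≫ A ◁ σp _ ≫ A ◁ A ◁ T S.t₁ _ ≫ A ◁ σn _ ≫ z ≫ M S.m _ : A ⊗ A ⊗ A ⊗ A ⊗ 𝟙_ C ⟶ _))
  have h4 := ctx (T_braid (β_ A A).inv)
    (fun z => (A ◁ A ◁ T S.t₁ _ ≫ A ◁ σp _ ≫ A ◁ A ◁ T S.t₁ _ ≫ z ≫ M S.m _ ≫ M S.m _ : A ⊗ A ⊗ A ⊗ A ⊗ 𝟙_ C ⟶ _))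
  have h5 := ctx (mc S _)
    (fun z => (A ◁ A ◁ T S.t₁ _ ≫ A ◁ σp _ ≫ A ◁ A ◁ T S.t₁ _ ≫ σp _ ≫ A ◁ σp _ ≫ z ≫ M S.m _ : A ⊗ A ⊗ A ⊗ A ⊗ 𝟙_ C ⟶ _))
  have h6 := ctx (mass S _)
    (fun z => (σn _ ≫ A ◁ T S.t₄ _ ≫ σp _ ≫ T S.t₄ _ ≫ A ◁ z : A ⊗ A ⊗ A ⊗ A ⊗ 𝟙_ C ⟶ _))
  have h7 := ctx (tc14 S _)
    (fun z => (σn _ ≫ A ◁ T S.t₄ _ ≫ σp _ ≫ A ◁ A ◁ M S.m _ ≫ z : A ⊗ A ⊗ A ⊗ A ⊗ 𝟙_ C ⟶ _))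
  have h8 := ctx (tc14 S _)
    (fun z => (σn _ ≫ A ◁ z ≫ σp _ ≫ A ◁ T S.t₁ _ ≫ σp _ ≫ M S.m _ : A ⊗ A ⊗ A ⊗ A ⊗ 𝟙_ C ⟶ _))
  have h9 := ctx (M_braid S.m)
    (fun z => (σn _ ≫ A ◁ A ◁ T S.t₁ _ ≫ A ◁ σp _ ≫ z ≫ A ◁ T S.t₁ _ ≫ σp _ ≫ M S.m _ : A ⊗ A ⊗ A ⊗ A ⊗ 𝟙_ C ⟶ _))
  have h10 := ctx (T_braid (β_ A A).hom)
    (fun z => (A ◁ A ◁ T S.t₁ _ ≫ σn _ ≫ z ≫ M S.m _ ≫ A ◁ T S.t₁ _ ≫ σp _ ≫ M S.m _ : A ⊗ A ⊗ A ⊗ A ⊗ 𝟙_ C ⟶ _))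
  have h11 := ctx (M_braid' S.m)
    (fun z => (A ◁ A ◁ T S.t₁ _ ≫ A ◁ σp _ ≫ σp _ ≫ A ◁ A ◁ T S.t₁ _ ≫ z ≫ M S.m _ : A ⊗ A ⊗ A ⊗ A ⊗ 𝟙_ C ⟶ _))
  have h12 := ctx (mass S _)
    (fun z => (A ◁ A ◁ T S.t₁ _ ≫ A ◁ σp _ ≫ σp _ ≫ A ◁ A ◁ T S.t₁ _ ≫ A ◁ σp _ ≫ σp _ ≫ z : A ⊗ A ⊗ A ⊗ A ⊗ 𝟙_ C ⟶ _))
  simp at h1 h2 h3 h4 h5 h6 h7 h8 h9 h10 h11 h12 ⊢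
  exact h1.symm.trans <| h2.trans <| h3.trans <| h4.trans <| h5.symm.trans <| h12.symm.trans <|
    h11.symm.trans <| h10.symm.trans <| h9.symm.trans <| h8.trans <| h7.trans h6

/-- Behaviour of the fourth fusion map on products, mirror image of the short fusion equation. -/
lemma M4 : (A ◁ M S.m _ ≫ T S.t₄ _ : A ⊗ A ⊗ A ⊗ X ⟶ _) = σn _ ≫ A ◁ T S.t₄ _ ≫ σp _ ≫ T S.t₄ _ ≫ A ◁ M S.m _ := by
  refine lift_tail' (M4_0 S) X (u3 A X) (v2 A X) ?_ ?_ <;>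
    simp only [T, M, u3, u2, u1, v3, v2, v1] <;> monoidal

lemma lQ_0 : (σn _ ≫ A ◁ T S.t₄ _ ≫ σp _ ≫ A ◁ T S.t₁ _ ≫ σn _ ≫ T S.t₁ _ : A ⊗ A ⊗ A ⊗ 𝟙_ C ⟶ _) = A ◁ T S.t₁ _ ≫ σn _ ≫ A ◁ T S.t₄ _ := by
  refine canEnd3 S _ _ (g' := (σn _ ≫ A ◁ T S.t₄ _ ≫ σp _ ≫ A ◁ T S.t₁ _ ≫ σn _ ≫ T S.t₁ _ : A ⊗ A ⊗ A ⊗ A ⊗ 𝟙_ C ⟶ _))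
    (h' := (A ◁ T S.t₁ _ ≫ σn _ ≫ A ◁ T S.t₄ _ : A ⊗ A ⊗ A ⊗ A ⊗ 𝟙_ C ⟶ _)) ?_ ?_ ?_
  · simp only [T, M, u3, u2, u1, v3, v2, v1]; monoidal
  · simp only [T, M, u3, u2, u1, v3, v2, v1]; monoidal
  have h1 := ctx (RL S _)
    (fun z => (σn _ ≫ A ◁ T S.t₄ _ ≫ σp _ ≫ A ◁ z ≫ σn _ ≫ T S.t₁ _ : A ⊗ A ⊗ A ⊗ A ⊗ 𝟙_ C ⟶ _))
  have h2 := ctx (tc14 S _)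
    (fun z => (σn _ ≫ A ◁ z ≫ σp _ ≫ A ◁ T S.t₁ _ ≫ σn _ ≫ T S.t₁ _ : A ⊗ A ⊗ A ⊗ A ⊗ 𝟙_ C ⟶ _))
  have h3 := ctx (M_braid S.m)
    (fun z => (σn _ ≫ A ◁ A ◁ T S.t₁ _ ≫ A ◁ σp _ ≫ z ≫ A ◁ T S.t₁ _ ≫ σn _ ≫ T S.t₁ _ : A ⊗ A ⊗ A ⊗ A ⊗ 𝟙_ C ⟶ _))
  have h4 := ctx (T_braid (β_ A A).hom)
    (fun z => (A ◁ A ◁ T S.t₁ _ ≫ σn _ ≫ z ≫ M S.m _ ≫ A ◁ T S.t₁ _ ≫ σn _ ≫ T S.t₁ _ : A ⊗ A ⊗ A ⊗ A ⊗ 𝟙_ C ⟶ _))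
  have h5 := ctx (M_braidn' S.m)
    (fun z => (A ◁ A ◁ T S.t₁ _ ≫ A ◁ σp _ ≫ σp _ ≫ A ◁ A ◁ T S.t₁ _ ≫ z ≫ T S.t₁ _ : A ⊗ A ⊗ A ⊗ A ⊗ 𝟙_ C ⟶ _))
  have h6 := ctx (T_braidn' (β_ A A).hom)
    (fun z => (A ◁ A ◁ T S.t₁ _ ≫ A ◁ σp _ ≫ A ◁ A ◁ T S.t₁ _ ≫ z ≫ A ◁ M S.m _ ≫ T S.t₁ _ : A ⊗ A ⊗ A ⊗ A ⊗ 𝟙_ C ⟶ _))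
  have h7 := ctx (mc S _)
    (fun z => (A ◁ A ◁ T S.t₁ _ ≫ A ◁ σp _ ≫ A ◁ A ◁ T S.t₁ _ ≫ A ◁ σn _ ≫ σn _ ≫ A ◁ z ≫ T S.t₁ _ : A ⊗ A ⊗ A ⊗ A ⊗ 𝟙_ C ⟶ _))
  have h8 := ctx (RL S _)
    (fun z => (A ◁ A ◁ T S.t₁ _ ≫ A ◁ σp _ ≫ A ◁ A ◁ T S.t₁ _ ≫ A ◁ σn _ ≫ σn _ ≫ A ◁ σn _ ≫ z : A ⊗ A ⊗ A ⊗ A ⊗ 𝟙_ C ⟶ _))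
  have h9 := ctx (T_braidn S.t₁)
    (fun z => (A ◁ A ◁ T S.t₁ _ ≫ A ◁ σp _ ≫ A ◁ A ◁ T S.t₁ _ ≫ A ◁ σn _ ≫ z ≫ A ◁ M S.m _ : A ⊗ A ⊗ A ⊗ A ⊗ 𝟙_ C ⟶ _))
  have h10 := ctx (mc S _)
    (fun z => (A ◁ A ◁ T S.t₁ _ ≫ A ◁ σp _ ≫ A ◁ A ◁ T S.t₁ _ ≫ A ◁ σn _ ≫ A ◁ T S.t₁ _ ≫ σn _ ≫ A ◁ z : A ⊗ A ⊗ A ⊗ A ⊗ 𝟙_ C ⟶ _))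
  have h11 := ctx (tax1 S _)
    (fun z => (A ◁ z ≫ σn _ ≫ A ◁ σp _ ≫ A ◁ M S.m _ : A ⊗ A ⊗ A ⊗ A ⊗ 𝟙_ C ⟶ _))
  have h12 := ctx (tc14 S _)
    (fun z => (A ◁ T S.t₁ _ ≫ σn _ ≫ A ◁ z : A ⊗ A ⊗ A ⊗ A ⊗ 𝟙_ C ⟶ _))
  simp at h1 h2 h3 h4 h5 h6 h7 h8 h9 h10 h11 h12 ⊢
  exact h1.symm.trans <| h2.symm.trans <| h3.trans <| h4.trans <| h5.trans <| h6.trans <|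
    h7.trans <| h8.trans <| h9.symm.trans <| h10.symm.trans <| h11.trans h12

/-- Mixed pentagon-type relation between the first and fourth fusion maps; it makes both coactions commute. -/
lemma lQ : (σn _ ≫ A ◁ T S.t₄ _ ≫ σp _ ≫ A ◁ T S.t₁ _ ≫ σn _ ≫ T S.t₁ _ : A ⊗ A ⊗ A ⊗ X ⟶ _) = A ◁ T S.t₁ _ ≫ σn _ ≫ A ◁ T S.t₄ _ := by
  refine lift_tail' (lQ_0 S) X (u3 A X) (v3 A X) ?_ ?_ <;>
    simp only [T, M, u3, u2, u1, v3, v2, v1] <;> monoidal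

end Main

section Main

variable {A : C} {𝒴 : Set C} (S : RWMB A 𝒴) (X : C)

local notation "σp" => T (Iso.hom (BraidedCategory.braiding A A))
local notation "σn" => T (Iso.inv (BraidedCategory.braiding A A))


/-- The compatibility needed for the existence of `τ`. -/
lemma tau_ex {L : C} {p : A ⟶ L} {n₁ : L ⊗ A ⟶ A} (hn₁ : (p ▷ A) ≫ n₁ = S.piL1)
    (hnd : NdRightOn n₁ 𝒴) {Q : C} (l r : Q ⟶ A ⊗ A) (e : l ≫ S.m = r ≫ S.m) :
    l ≫ S.t₁ ≫ p ▷ A = r ≫ S.t₁ ≫ p ▷ A := by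
  have hn : ∀ X : C, P p (A ⊗ X) ≫ M n₁ X = T S.e₁ X ≫ J S.j _ := by
    intro X
    have := congrArg (fun z => (α_ A A X).inv ≫ z ▷ X) hn₁
    simp only [P, M, T, J, RWMB.piL1] at this ⊢
    refine Eq.trans ?_ (this.trans ?_) <;> monoidal
  have main : A ◁ D l (𝟙_ C) ≫ A ◁ T S.t₁ _ ≫ σp _ ≫ T S.e₁ _ ≫ J S.j _ = A ◁ D r _ ≫ A ◁ T S.t₁ _ ≫ σp _ ≫ T S.e₁ _ ≫ J S.j _ := by
    apply canL1 S
    have key : ∀ l : Q ⟶ A ⊗ A, A ◁ A ◁ D l (𝟙_ C) ≫ A ◁ A ◁ T S.t₁ _ ≫ A ◁ σp _ ≫ A ◁ T S.e₁ _ ≫ A ◁ J S.j _ ≫ M S.m _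
        = T S.t₁ _ ≫ σn _ ≫ A ◁ (A ◁ D l (𝟙_ C) ≫ A ◁ T S.t₁ _ ≫ M S.m _ ≫ J S.j _) := by
      intro l
      have h1 := ctx (tax8 S _)
        (fun z => (A ◁ A ◁ T S.t₁ _ ≫ z : A ⊗ A ⊗ A ⊗ A ⊗ 𝟙_ C ⟶ _))
      have h2 := ctx (Kform S _)
        (fun z => (A ◁ A ◁ T S.t₁ _ ≫ T S.t₁ _ ≫ z : A ⊗ A ⊗ A ⊗ A ⊗ 𝟙_ C ⟶ _))
      simp at h1 h2 ⊢
      have h3 := congrArg (fun z => A ◁ A ◁ D l (𝟙_ C) ≫ z) (h1.symm.trans h2)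
      exact h3
    have h1 := key l
    rw [lK S _ l r e, ← key r] at h1
    simp at h1 ⊢
    exact h1
  have h2 : ∀ l : Q ⟶ A ⊗ A, A ◁ (l ≫ S.t₁ ≫ p ▷ A) ≫ (α_ _ _ _).inv ≫ ((β_ A L).hom ≫ n₁) ▷ A
      = A ◁ (ρ_ Q).inv ≫ (A ◁ D l (𝟙_ C) ≫ A ◁ T S.t₁ _ ≫ σp _ ≫ T S.e₁ _ ≫ J S.j _) ≫ A ◁ (ρ_ A).hom := by
    intro l
    have hb := P_braid (U := A) (X := A ⊗ 𝟙_ C) p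
    rw [← hn, ← reassoc_of% hb]
    simp only [D, T, M, P]
    monoidal
  have h3 := hnd Q A S.memA (a₁ := l ≫ S.t₁ ≫ p ▷ A) (a₂ := r ≫ S.t₁ ≫ p ▷ A) (by
    show A ◁ (l ≫ S.t₁ ≫ p ▷ A) ≫ (α_ _ _ _).inv ≫ ((β_ A L).hom ≫ n₁) ▷ A
      = A ◁ (r ≫ S.t₁ ≫ p ▷ A) ≫ (α_ _ _ _).inv ≫ ((β_ A L).hom ≫ n₁) ▷ A
    rw [h2, h2, main])
  exact h3

/-- The compatibility needed for the existence of `τ̄`. -/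
lemma taubar_ex {L : C} {p : A ⟶ L} {n₁ : L ⊗ A ⟶ A} (hn₁ : (p ▷ A) ≫ n₁ = S.piL1)
    (hnd : NdRightOn n₁ 𝒴) {Q : C} (l r : Q ⟶ A ⊗ A) (e : l ≫ S.m = r ≫ S.m) :
    l ≫ (β_ A A).hom ≫ S.t₄ ≫ A ◁ p = r ≫ (β_ A A).hom ≫ S.t₄ ≫ A ◁ p := by
  have key : ∀ l : Q ⟶ A ⊗ A, (l ≫ (β_ A A).hom ≫ S.t₄ ≫ A ◁ p) ▷ A ≫ (α_ _ _ _).hom ≫ A ◁ n₁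
      = (l ≫ S.m) ▷ A ≫ S.e₁ := by
    intro l
    have h1 := congrArg (fun z => l ▷ A ≫ (α_ A A A).hom ≫ A ◁ A ◁ (ρ_ A).inv ≫ z ≫ A ◁ (ρ_ A).hom)
      (lH S (𝟙_ C))
    have h2 : (l ≫ (β_ A A).hom ≫ S.t₄ ≫ A ◁ p) ▷ A ≫ (α_ _ _ _).hom ≫ A ◁ n₁
      = (l ≫ (β_ A A).hom ≫ S.t₄) ▷ A ≫ (α_ _ _ _).hom ≫ A ◁ (p ▷ A ≫ n₁) := by monoidal
    rw [h2, hn₁]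
    simp only [T, M, J, RWMB.piL1] at h1 ⊢
    refine Eq.trans ?_ (h1.trans ?_) <;> monoidal
  exact canEnd n₁ hnd S.memA _ _ (by rw [key, key, e])

end Main

section Main

variable {A : C} {𝒴 : Set C} (S : RWMB A 𝒴) (X : C)

local notation "σp" => T (Iso.hom (BraidedCategory.braiding A A))
local notation "σn" => T (Iso.inv (BraidedCategory.braiding A A))


variable {L : C} {p : A ⟶ L} {τ : A ⟶ L ⊗ A} {τb : A ⟶ A ⊗ L} {δ : L ⟶ L ⊗ L}

/-- The defining relation of the comultiplication of the base object, extended by a tail. -/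
lemma tdel (hδ : S.m ≫ p ≫ δ = S.t₁ ≫ (p ▷ A) ≫ (L ◁ p)) :
    M S.m X ≫ P p X ≫ D δ X = T S.t₁ X ≫ A ◁ P p X ≫ P p _ := by
  have := congrArg (fun z => (α_ A A X).inv ≫ z ▷ X ≫ (α_ _ _ _).hom) hδ
  simp only [P, M, T, D, whisker_exchange] at this ⊢
  rw [← whisker_exchange] at this ⊢
  refine Eq.trans ?_ (this.trans ?_) <;> monoidal

/-- The defining relation of the left coaction, extended by a tail. -/
lemma ttau (hτ : S.m ≫ τ = S.t₁ ≫ (p ▷ A)) : M S.m X ≫ D τ X = T S.t₁ X ≫ P p _ := by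
  have := congrArg (fun z => (α_ A A X).inv ≫ z ▷ X ≫ (α_ _ _ _).hom) hτ
  simp only [P, M, T, D] at this ⊢
  refine Eq.trans ?_ (this.trans ?_) <;> monoidal

/-- The defining relation of the right coaction, extended by a tail. -/
lemma ttaub (hτb : S.m ≫ τb = (β_ A A).hom ≫ S.t₄ ≫ (A ◁ p)) :
    M S.m X ≫ D τb X = σp X ≫ T S.t₄ X ≫ A ◁ P p _ := by
  have := congrArg (fun z => (α_ A A X).inv ≫ z ▷ X ≫ (α_ _ _ _).hom) hτb
  simp only [P, M, T, D] at this ⊢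
  refine Eq.trans ?_ (this.trans ?_) <;> monoidal

/-- Coassociativity of the left coaction, tested on triple products. -/
lemma coassoc_tau (hδ : S.m ≫ p ≫ δ = S.t₁ ≫ (p ▷ A) ≫ (L ◁ p))
    (hτ : S.m ≫ τ = S.t₁ ≫ (p ▷ A)) :
    ((M S.m _ ≫ M S.m _ : A ⊗ A ⊗ A ⊗ X ⟶ _)) ≫ D τ X ≫ L ◁ D τ X = ((M S.m _ ≫ M S.m _ : A ⊗ A ⊗ A ⊗ X ⟶ _)) ≫ D τ X ≫ D δ _ := by
  have h1 := ctx (ttau S _ hτ)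
    (fun z => (M S.m _ ≫ z ≫ D δ _ : A ⊗ A ⊗ A ⊗ X ⟶ _))
  have h2 := ctx (s1 S _)
    (fun z => (z ≫ P p _ ≫ D δ _ : A ⊗ A ⊗ A ⊗ X ⟶ _))
  have h3 := ctx (tdel S _ hδ)
    (fun z => (A ◁ T S.t₁ _ ≫ σp _ ≫ A ◁ T S.t₁ _ ≫ σn _ ≫ z : A ⊗ A ⊗ A ⊗ X ⟶ _))
  have h4 := ctx (tax1 S _)
    (fun z => (z ≫ A ◁ P p _ ≫ P p _ : A ⊗ A ⊗ A ⊗ X ⟶ _))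
  have g1 := congrArg (fun z => z ≫ D τ X ≫ L ◁ D τ X) (mass S X)
  have g2 := congrArg (fun z => A ◁ M S.m X ≫ z ≫ L ◁ D τ X) (ttau S X hτ)
  have g3 := ctx (RL S _)
    (fun z => (z ≫ A ◁ D τ _ ≫ P p _ : A ⊗ A ⊗ A ⊗ X ⟶ _))
  have g4 := ctx (ttau S _ hτ)
    (fun z => (T S.t₁ _ ≫ A ◁ z ≫ P p _ : A ⊗ A ⊗ A ⊗ X ⟶ _))
  simp at h1 h2 h3 h4 g1 g2 g3 g4 ⊢
  exact g1.symm.trans <| g2.trans <| g3.trans <| g4.trans <| h4.symm.trans <| h3.symm.trans <|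
    h2.symm.trans h1.symm

/-- Coassociativity of the right coaction, tested on suitably braided triple products. -/
lemma coassoc_taub (hδ : S.m ≫ p ≫ δ = S.t₁ ≫ (p ▷ A) ≫ (L ◁ p))
    (hτb : S.m ≫ τb = (β_ A A).hom ≫ S.t₄ ≫ (A ◁ p)) :
    ((A ◁ M S.m _ ≫ σn _ ≫ M S.m _ : A ⊗ A ⊗ A ⊗ X ⟶ _)) ≫ D τb X ≫ A ◁ D δ X = ((A ◁ M S.m _ ≫ σn _ ≫ M S.m _ : A ⊗ A ⊗ A ⊗ X ⟶ _)) ≫ D τb X ≫ D τb _ := by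
  have h1 := ctx (ttaub S _ hτb)
    (fun z => (A ◁ M S.m _ ≫ σn _ ≫ z ≫ A ◁ D δ _ : A ⊗ A ⊗ A ⊗ X ⟶ _))
  have h2 := ctx (M4 S _)
    (fun z => (z ≫ A ◁ P p _ ≫ A ◁ D δ _ : A ⊗ A ⊗ A ⊗ X ⟶ _))
  have h3 := ctx (tdel S _ hδ)
    (fun z => (σn _ ≫ A ◁ T S.t₄ _ ≫ σp _ ≫ T S.t₄ _ ≫ A ◁ z : A ⊗ A ⊗ A ⊗ X ⟶ _))
  have g1 := ctx (ttaub S _ hτb)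
    (fun z => (A ◁ M S.m _ ≫ σn _ ≫ z ≫ D τb _ : A ⊗ A ⊗ A ⊗ X ⟶ _))
  have g2 := ctx (M4 S _)
    (fun z => (z ≫ A ◁ P p _ ≫ D τb _ : A ⊗ A ⊗ A ⊗ X ⟶ _))
  have g3 := ctx (tc14 S _)
    (fun z => (σn _ ≫ A ◁ T S.t₄ _ ≫ σp _ ≫ z ≫ A ◁ P p _ ≫ D τb _ : A ⊗ A ⊗ A ⊗ X ⟶ _))
  have g4 := ctx (mc S _)
    (fun z => (σn _ ≫ A ◁ T S.t₄ _ ≫ σp _ ≫ A ◁ T S.t₁ _ ≫ z ≫ A ◁ P p _ ≫ D τb _ : A ⊗ A ⊗ A ⊗ X ⟶ _))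
  have g5 := ctx (ttaub S _ hτb)
    (fun z => (σn _ ≫ A ◁ T S.t₄ _ ≫ σp _ ≫ A ◁ T S.t₁ _ ≫ A ◁ A ◁ P p _ ≫ σn _ ≫ z : A ⊗ A ⊗ A ⊗ X ⟶ _))
  have g6 := ctx (ti41 S _)
    (fun z => (σn _ ≫ A ◁ T S.t₄ _ ≫ σp _ ≫ z ≫ A ◁ A ◁ P p _ ≫ A ◁ P p _ : A ⊗ A ⊗ A ⊗ X ⟶ _))
  simp at h1 h2 h3 g1 g2 g3 g4 g5 g6 ⊢
  exact h1.trans <| h2.trans <| h3.trans <| g6.symm.trans <| g5.symm.trans <| g4.symm.trans <|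
    g3.trans <| g2.symm.trans g1.symm

/-- Compatibility of the left with the right coaction, tested on braided triple products. -/
lemma commute_tau (hτ : S.m ≫ τ = S.t₁ ≫ (p ▷ A))
    (hτb : S.m ≫ τb = (β_ A A).hom ≫ S.t₄ ≫ (A ◁ p)) :
    ((A ◁ M S.m _ ≫ σn _ ≫ M S.m _ : A ⊗ A ⊗ A ⊗ X ⟶ _)) ≫ D τb X ≫ D τ _ = ((A ◁ M S.m _ ≫ σn _ ≫ M S.m _ : A ⊗ A ⊗ A ⊗ X ⟶ _)) ≫ D τ X ≫ L ◁ D τb X := by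
  have g1 := ctx (ttaub S _ hτb)
    (fun z => (A ◁ M S.m _ ≫ σn _ ≫ z ≫ D τ _ : A ⊗ A ⊗ A ⊗ X ⟶ _))
  have g2 := ctx (M4 S _)
    (fun z => (z ≫ A ◁ P p _ ≫ D τ _ : A ⊗ A ⊗ A ⊗ X ⟶ _))
  have g3 := ctx (tc14 S _)
    (fun z => (σn _ ≫ A ◁ T S.t₄ _ ≫ σp _ ≫ z ≫ A ◁ P p _ ≫ D τ _ : A ⊗ A ⊗ A ⊗ X ⟶ _))
  have g4 := ctx (mc S _)
    (fun z => (σn _ ≫ A ◁ T S.t₄ _ ≫ σp _ ≫ A ◁ T S.t₁ _ ≫ z ≫ A ◁ P p _ ≫ D τ _ : A ⊗ A ⊗ A ⊗ X ⟶ _))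
  have g5 := ctx (ttau S _ hτ)
    (fun z => (σn _ ≫ A ◁ T S.t₄ _ ≫ σp _ ≫ A ◁ T S.t₁ _ ≫ A ◁ A ◁ P p _ ≫ σn _ ≫ z : A ⊗ A ⊗ A ⊗ X ⟶ _))
  have g6 := ctx (lQ S _)
    (fun z => (z ≫ A ◁ A ◁ P p _ ≫ P p _ : A ⊗ A ⊗ A ⊗ X ⟶ _))
  have h1 := congrArg (fun z => z ≫ M S.m X ≫ D τ X ≫ L ◁ D τb X) (M_braidn (U := A) (X := X) S.m)
  have h2 := congrArg (fun z => σn _ ≫ A ◁ σn _ ≫ z ≫ D τ X ≫ L ◁ D τb X) (mass S X)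
  have h3 := congrArg (fun z => σn _ ≫ A ◁ σn _ ≫ A ◁ M S.m X ≫ z ≫ L ◁ D τb X) (ttau S X hτ)
  have h4 := ctx (RL S _)
    (fun z => (σn _ ≫ A ◁ σn _ ≫ z ≫ A ◁ D τb _ ≫ P p _ : A ⊗ A ⊗ A ⊗ X ⟶ _))
  have h5 := ctx (ttaub S _ hτb)
    (fun z => (σn _ ≫ A ◁ σn _ ≫ T S.t₁ _ ≫ A ◁ z ≫ P p _ : A ⊗ A ⊗ A ⊗ X ⟶ _))
  have h6 := ctx (T_braidn S.t₁)
    (fun z => (z ≫ A ◁ σp _ ≫ A ◁ T S.t₄ _ ≫ A ◁ A ◁ P p _ ≫ P p _ : A ⊗ A ⊗ A ⊗ X ⟶ _))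
  simp at g1 g2 g3 g4 g5 g6 h1 h2 h3 h4 h5 h6 ⊢
  exact g1.trans <| g2.trans <| g3.symm.trans <| g4.trans <| g5.trans <| g6.trans <| h6.trans <|
    h5.symm.trans <| h4.symm.trans <| h3.symm.trans <| h2.trans h1.symm

end Main
/-- Proposition 4.1: the object `A` carries the structure of a bicomodule
over the coseparable comonoid `(L, δ, ε)`, via the unique coactions `τ` and `τ̄`
determined by `τ ∘ m = (p ⊗ 1) ∘ t₁` and `τ̄ ∘ m = (1 ⊗ p) ∘ t₄ ∘ c`. -/
theorem bimonoid_carries_L_bicomodule_structure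
    [HasCoequalizers C]
    (presL : ∀ X : C, PreservesColimitsOfShape WalkingParallelPair (tensorLeft X))
    (presR : ∀ X : C, PreservesColimitsOfShape WalkingParallelPair (tensorRight X))
    (regcomp : ∀ {X Y Z : C} (f : X ⟶ Y) (g : Y ⟶ Z),
      Nonempty (RegularEpi f) → Nonempty (RegularEpi g) → Nonempty (RegularEpi (f ≫ g)))
    {A : C} {𝒴 : Set C} (S : RWMB A 𝒴)
    (hmreg : Nonempty (RegularEpi S.m))
    (L : C) (p : A ⟶ L)
    (hpc : S.piL1 ≫ p = S.piBarR1c ≫ p)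
    (hpu : ∀ {X : C} (h : A ⟶ X), S.piL1 ≫ h = S.piBarR1c ≫ h →
      ∃! k : L ⟶ X, p ≫ k = h)
    (memL : L ∈ 𝒴)
    (n₁ : L ⊗ A ⟶ A) (hn₁ : (p ▷ A) ≫ n₁ = S.piL1)
    (hndn₁ : NdRightOn n₁ 𝒴)
    (n₂ : A ⊗ L ⟶ A) (hn₂ : (A ◁ p) ≫ n₂ = S.piL2)
    -- the coseparable comonoid structure of Theorem 3.1 on the base object `L`
    (μ : L ⊗ L ⟶ L) (hμ : (L ◁ p) ≫ μ = n₁ ≫ p)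
    (δ : L ⟶ L ⊗ L) (hδ : S.m ≫ p ≫ δ = S.t₁ ≫ (p ▷ A) ≫ (L ◁ p))
    (ε : L ⟶ 𝟙_ C) (hε : p ≫ ε = S.j)
    (hμδ : δ ≫ μ = 𝟙 L) :
    ∃ (τ : A ⟶ L ⊗ A) (τbar : A ⟶ A ⊗ L),
      -- `τ` is the unique morphism with `τ ∘ m = (p ⊗ 1) ∘ t₁`
      (S.m ≫ τ = S.t₁ ≫ (p ▷ A)) ∧
      (∀ τ' : A ⟶ L ⊗ A, S.m ≫ τ' = S.t₁ ≫ (p ▷ A) → τ' = τ) ∧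
      -- `τ̄` is the unique morphism with `τ̄ ∘ m = (1 ⊗ p) ∘ t₄ ∘ c`
      (S.m ≫ τbar = (β_ A A).hom ≫ S.t₄ ≫ (A ◁ p)) ∧
      (∀ τbar' : A ⟶ A ⊗ L, S.m ≫ τbar' = (β_ A A).hom ≫ S.t₄ ≫ (A ◁ p) →
        τbar' = τbar) ∧
      -- `τ` is a coassociative counital left `L`-coaction
      (τ ≫ (L ◁ τ) = τ ≫ (δ ▷ A) ≫ (α_ L L A).hom) ∧
      (τ ≫ (ε ▷ A) ≫ (λ_ A).hom = 𝟙 A) ∧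
      -- `τ̄` is a coassociative counital right `L`-coaction
      (τbar ≫ (A ◁ δ) = τbar ≫ (τbar ▷ L) ≫ (α_ A L L).hom) ∧
      (τbar ≫ (A ◁ ε) ≫ (ρ_ A).hom = 𝟙 A) ∧
      -- the two coactions commute
      (τbar ≫ (τ ▷ L) ≫ (α_ L A L).hom = τ ≫ (L ◁ τbar)) := by
  obtain ⟨hm⟩ := hmreg
  have hmd : ∀ {Y : C} (k : A ⊗ A ⟶ Y),
      (∀ {Q : C} (l r : Q ⟶ A ⊗ A), l ≫ S.m = r ≫ S.m → l ≫ k = r ≫ k) →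
      ∃ d : A ⟶ Y, S.m ≫ d = k := by
    intro Y k hk
    exact ⟨Cofork.IsColimit.desc hm.isColimit k (hk _ _ hm.w),
      Cofork.IsColimit.π_desc' hm.isColimit k _⟩
  have hmepi : Epi S.m := epi_of_isColimit_cofork hm.isColimit
  have hmX : ∀ X : C, Epi (M S.m X) := by
    intro X
    have := presR X
    have h1 : IsColimit (Cofork.ofπ ((tensorRight X).map S.m) _) :=
      isColimitCoforkMapOfIsColimit (tensorRight X) hm.w hm.isColimit
    have h2 : Epi (S.m ▷ X) := epi_of_isColimit_cofork h1
    unfold M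
    infer_instance
  obtain ⟨τ, hτ⟩ := hmd (S.t₁ ≫ p ▷ A) (fun l r e => tau_ex S hn₁ hndn₁ l r e)
  obtain ⟨τb, hτb⟩ := hmd ((β_ A A).hom ≫ S.t₄ ≫ A ◁ p)
    (fun l r e => taubar_ex S hn₁ hndn₁ l r e)
  have can : ∀ {Y : C} (f g : A ⊗ 𝟙_ C ⟶ Y),
      (A ◁ M S.m _ ≫ T (β_ A A).inv _ ≫ M S.m (𝟙_ C)) ≫ f
        = (A ◁ M S.m _ ≫ T (β_ A A).inv _ ≫ M S.m _) ≫ g → f = g := by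
    intro Y f g h
    have hb := M_braidn (U := A) (X := 𝟙_ C) S.m
    simp only [assoc] at h
    rw [reassoc_of% hb, reassoc_of% hb] at h
    have i1 : IsIso (T (β_ A A).inv (A ⊗ 𝟙_ C)) := by unfold T; infer_instance
    have i2 : IsIso (T (β_ A A).inv (𝟙_ C)) := by unfold T; infer_instance
    have h3 := hmX (A ⊗ 𝟙_ C)
    have h4 := hmX (𝟙_ C)
    simpa only [cancel_epi] using h
  refine ⟨τ, τb, hτ, ?_, hτb, ?_, ?_, ?_, ?_, ?_, ?_⟩
  · intro τ' h
    rw [← cancel_epi S.m, h, hτ]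
  · intro τ' h
    rw [← cancel_epi S.m, h, hτb]
  · have h := coassoc_tau S (𝟙_ C) hδ hτ
    have h1 := hmX (A ⊗ 𝟙_ C)
    have h2 := hmX (𝟙_ C)
    simp only [assoc, cancel_epi] at h
    have h3 := congrArg (fun z => (ρ_ A).inv ≫ z ≫ L ◁ L ◁ (ρ_ A).hom) h
    simp only [D] at h3
    refine Eq.trans ?_ (h3.trans ?_) <;> monoidal
  · rw [← cancel_epi S.m, reassoc_of% hτ, comp_id]
    conv_rhs => rw [S.hm₁, ← hε]
    simp
  · have h := can _ _ (coassoc_taub S (𝟙_ C) hδ hτb)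
    have h3 := congrArg (fun z => (ρ_ A).inv ≫ z ≫ A ◁ L ◁ (ρ_ L).hom) h
    simp only [D] at h3
    refine Eq.trans ?_ (h3.trans ?_) <;> monoidal
  · rw [← cancel_epi S.m, reassoc_of% hτb, comp_id]
    conv_rhs => rw [S.hm₄, ← hε]
    simp
  · have h := can _ _ (commute_tau S (𝟙_ C) hτ hτb)
    have h3 := congrArg (fun z => (ρ_ A).inv ≫ z ≫ L ◁ A ◁ (ρ_ L).hom) h
    simp only [D] at h3
    refine Eq.trans ?_ (h3.trans ?_) <;> monoidal

end WeakMultiplierBimonoid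
end

section
/- Under the standing assumptions (C braided monoidal with coequalizers preserved by the monoidal product, composites of regular epimorphisms regular epi; (A,t₁,t₂,t₃,t₄,e₁,e₂,j) a regular weak multiplier bimonoid with m a regular epimorphism, non-degenerate with respect to a class 𝒴 containing I, A and L and closed under the monoidal product; n₁ non-degenerate on the right with respect to 𝒴), every module (V, v) over the semigroup A carries the structure of an L-bicomodule: there are unique coactions τ_V : V → L⊗V and τ̄_V : V → V⊗L satisfying τ_V∘v = (1⊗v)∘(τ⊗1) and τ̄_V∘v = (v⊗1)∘(1⊗c)∘(τ̄⊗1); these are coassociative, counital and commute. Moreover, every morphism of A-modules f : (V,v) → (V′,v′) is a morphism of L-bicomodules: τ_{V′}∘f = (1⊗f)∘τ_V and τ̄_{V′}∘f = (f⊗1)∘τ̄_V. Hence there is a functor U from A-modules to L-bicomodules acting as the identity on morphisms. -/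
open CategoryTheory Category MonoidalCategory Limits

universe v u

namespace WeakMultiplierBimonoid

variable {C : Type u} [Category.{v} C] [MonoidalCategory C] [BraidedCategory C]

/-- A module over the semigroup `(A, m)`, relative to the class `𝒴`: an object of `𝒴`
with an associative action which is a regular epimorphism and non-degenerate on the
left with respect to `𝒴`. -/
structure AModule (A : C) (m : A ⊗ A ⟶ A) (𝒴 : Set C) where
  V : C
  mem : V ∈ 𝒴
  act : A ⊗ V ⟶ V
  assoc : (A ◁ act) ≫ act = (α_ A A V).inv ≫ (m ▷ V) ≫ act
  regEpi : Nonempty (RegularEpi act)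
  nd : NdLeftOn act 𝒴

/-- A strand `W` crossing a morphism `P ⊗ Q ⟶ R ⊗ S` from the right. -/
theorem crossR22 {P Q R S : C} (f : P ⊗ Q ⟶ R ⊗ S) (W : C) :
    P ◁ (β_ Q W).hom ⊗≫ (β_ P W).hom ▷ Q ⊗≫ W ◁ f
      = 𝟙 _ ⊗≫ f ▷ W ⊗≫ R ◁ (β_ S W).hom ⊗≫ (β_ R W).hom ▷ S ⊗≫ 𝟙 _ := by
  have h := BraidedCategory.braiding_naturality_left f W
  rw [BraidedCategory.braiding_tensor_left_hom, BraidedCategory.braiding_tensor_left_hom] at h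
  have h2 := congrArg (fun z => 𝟙 (P ⊗ Q ⊗ W) ⊗≫ z ⊗≫ 𝟙 (W ⊗ R ⊗ S)) h
  beta_reduce at h2
  refine Eq.trans ?_ (h2.symm.trans ?_) <;> monoidal

theorem crossR21 {P Q R : C} (f : P ⊗ Q ⟶ R) (W : C) :
    P ◁ (β_ Q W).hom ⊗≫ (β_ P W).hom ▷ Q ⊗≫ W ◁ f
      = 𝟙 _ ⊗≫ f ▷ W ⊗≫ (β_ R W).hom := by
  have h := BraidedCategory.braiding_naturality_left f W
  rw [BraidedCategory.braiding_tensor_left_hom] at h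
  have h2 := congrArg (fun z => 𝟙 (P ⊗ Q ⊗ W) ⊗≫ z ⊗≫ 𝟙 (W ⊗ R)) h
  beta_reduce at h2
  refine Eq.trans ?_ (h2.symm.trans ?_) <;> monoidal

theorem crossR12 {P R S : C} (f : P ⟶ R ⊗ S) (W : C) :
    (β_ P W).hom ⊗≫ W ◁ f
      = 𝟙 _ ⊗≫ f ▷ W ⊗≫ R ◁ (β_ S W).hom ⊗≫ (β_ R W).hom ▷ S ⊗≫ 𝟙 _ := by
  have h := BraidedCategory.braiding_naturality_left f W
  rw [BraidedCategory.braiding_tensor_left_hom] at h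
  have h2 := congrArg (fun z => 𝟙 (P ⊗ W) ⊗≫ z ⊗≫ 𝟙 (W ⊗ R ⊗ S)) h
  beta_reduce at h2
  refine Eq.trans ?_ (h2.symm.trans ?_) <;> monoidal

theorem crossL22 {P Q R S : C} (f : P ⊗ Q ⟶ R ⊗ S) (W : C) :
    (β_ W P).hom ▷ Q ⊗≫ P ◁ (β_ W Q).hom ⊗≫ f ▷ W
      = 𝟙 _ ⊗≫ W ◁ f ⊗≫ (β_ W R).hom ▷ S ⊗≫ R ◁ (β_ W S).hom ⊗≫ 𝟙 _ := by
  have h := BraidedCategory.braiding_naturality_right W f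
  rw [BraidedCategory.braiding_tensor_right_hom, BraidedCategory.braiding_tensor_right_hom] at h
  have h2 := congrArg (fun z => 𝟙 ((W ⊗ P) ⊗ Q) ⊗≫ z ⊗≫ 𝟙 ((R ⊗ S) ⊗ W)) h
  beta_reduce at h2
  refine Eq.trans ?_ (h2.symm.trans ?_) <;> monoidal

theorem crossL21 {P Q R : C} (f : P ⊗ Q ⟶ R) (W : C) :
    (β_ W P).hom ▷ Q ⊗≫ P ◁ (β_ W Q).hom ⊗≫ f ▷ W
      = 𝟙 _ ⊗≫ W ◁ f ⊗≫ (β_ W R).hom := by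
  have h := BraidedCategory.braiding_naturality_right W f
  rw [BraidedCategory.braiding_tensor_right_hom] at h
  have h2 := congrArg (fun z => 𝟙 ((W ⊗ P) ⊗ Q) ⊗≫ z ⊗≫ 𝟙 (R ⊗ W)) h
  beta_reduce at h2
  refine Eq.trans ?_ (h2.symm.trans ?_) <;> monoidal

theorem crossL12 {P R S : C} (f : P ⟶ R ⊗ S) (W : C) :
    (β_ W P).hom ⊗≫ f ▷ W
      = 𝟙 _ ⊗≫ W ◁ f ⊗≫ (β_ W R).hom ▷ S ⊗≫ R ◁ (β_ W S).hom ⊗≫ 𝟙 _ := by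
  have h := BraidedCategory.braiding_naturality_right W f
  rw [BraidedCategory.braiding_tensor_right_hom] at h
  have h2 := congrArg (fun z => 𝟙 (W ⊗ P) ⊗≫ z ⊗≫ 𝟙 ((R ⊗ S) ⊗ W)) h
  beta_reduce at h2
  refine Eq.trans ?_ (h2.symm.trans ?_) <;> monoidal

/-- Right non-degeneracy, tested on the right: `g : X ⟶ Y ⊗ Z`. -/
theorem ndr_right {Z V W : C} {v : Z ⊗ V ⟶ W} {𝒴 : Set C} (h : NdRightOn v 𝒴)
    {X Y : C} (hY : Y ∈ 𝒴) (g₁ g₂ : X ⟶ Y ⊗ Z)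
    (e : g₁ ▷ V ⊗≫ Y ◁ v = g₂ ▷ V ⊗≫ Y ◁ v) : g₁ = g₂ := by
  have key : ∀ g : X ⟶ Y ⊗ Z,
      (V ◁ (g ≫ (β_ Z Y).inv) ≫ (α_ V Z Y).inv ≫ (((β_ V Z).hom ≫ v) ▷ Y)) ≫ (β_ W Y).hom
        = (β_ V X).hom ≫ (g ▷ V ⊗≫ Y ◁ v) := by
    intro g
    have h1 := congrArg (fun z => V ◁ g ⊗≫ V ◁ (β_ Z Y).inv ⊗≫ (β_ V Z).hom ▷ Y ⊗≫ z)
      (crossR21 v Y)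
    have h2 := congrArg (fun z => V ◁ g ⊗≫ V ◁ (β_ Z Y).inv ⊗≫ z ⊗≫ Y ◁ v)
      (crossL22 (β_ Z Y).hom V)
    have h4 := congrArg (fun z => V ◁ g ⊗≫ V ◁ z ⊗≫ (β_ V Y).hom ▷ Z ⊗≫ Y ◁ (β_ V Z).hom
      ⊗≫ Y ◁ v) (β_ Z Y).inv_hom_id
    have h5 := congrArg (fun z => z ⊗≫ Y ◁ v) (crossL12 g V)
    beta_reduce at h1 h2 h4 h5
    refine Eq.trans ?_ (h1.symm.trans (Eq.trans ?_ (h2.trans (Eq.trans ?_ (h4.trans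
      (Eq.trans ?_ (h5.symm.trans ?_))))))) <;> monoidal
  have := h X Y hY (a₁ := g₁ ≫ (β_ Z Y).inv) (a₂ := g₂ ≫ (β_ Z Y).inv)
    (by
      rw [← cancel_mono (β_ W Y).hom]
      simp only [key, e])
  simpa using this

/-- Right non-degeneracy, tested on the left factor: `g : X ⟶ Z ⊗ Y`. -/
theorem ndr_mid {Z V W : C} {v : Z ⊗ V ⟶ W} {𝒴 : Set C} (h : NdRightOn v 𝒴)
    {X Y : C} (hY : Y ∈ 𝒴) (g₁ g₂ : X ⟶ Z ⊗ Y)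
    (e : g₁ ▷ V ⊗≫ Z ◁ (β_ Y V).hom ⊗≫ v ▷ Y = g₂ ▷ V ⊗≫ Z ◁ (β_ Y V).hom ⊗≫ v ▷ Y) :
    g₁ = g₂ := by
  have key : ∀ g : X ⟶ Z ⊗ Y,
      (((g ≫ (β_ Y Z).inv) ▷ V ⊗≫ Y ◁ v) ≫ (β_ Y W).hom) =
        g ▷ V ⊗≫ Z ◁ (β_ Y V).hom ⊗≫ v ▷ Y := by
    intro g
    have h1 := congrArg (fun z => g ▷ V ⊗≫ (β_ Y Z).inv ▷ V ⊗≫ z) (crossL21 v Y)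
    have h4 := congrArg (fun z => g ▷ V ⊗≫ z ▷ V ⊗≫ Z ◁ (β_ Y V).hom ⊗≫ v ▷ Y)
      (β_ Y Z).inv_hom_id
    beta_reduce at h1 h4
    refine Eq.trans ?_ (h1.symm.trans (Eq.trans ?_ (h4.trans ?_))) <;> monoidal
  have := ndr_right h hY (g₁ ≫ (β_ Y Z).inv) (g₂ ≫ (β_ Y Z).inv) (by
    rw [← cancel_mono (β_ Y W).hom, key, key, e])
  simpa using this

/-- Left non-degeneracy in coherent form. -/
theorem ndl_co {Z V W : C} {v : Z ⊗ V ⟶ W} {𝒴 : Set C} (h : NdLeftOn v 𝒴)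
    {X Y : C} (hY : Y ∈ 𝒴) (g₁ g₂ : X ⟶ V ⊗ Y)
    (e : Z ◁ g₁ ⊗≫ v ▷ Y = Z ◁ g₂ ⊗≫ v ▷ Y) : g₁ = g₂ := by
  apply h X Y hY
  beta_reduce
  refine Eq.trans ?_ (e.trans ?_) <;> monoidal

/-- Left non-degeneracy, tested across a strand: `g : X ⟶ Y ⊗ V`. -/
theorem ndl_mid {Z V W : C} {v : Z ⊗ V ⟶ W} {𝒴 : Set C} (h : NdLeftOn v 𝒴)
    {X Y : C} (hY : Y ∈ 𝒴) (g₁ g₂ : X ⟶ Y ⊗ V)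
    (e : Z ◁ g₁ ⊗≫ (β_ Z Y).hom ▷ V ⊗≫ Y ◁ v = Z ◁ g₂ ⊗≫ (β_ Z Y).hom ▷ V ⊗≫ Y ◁ v) :
    g₁ = g₂ := by
  have key : ∀ g : X ⟶ Y ⊗ V,
      ((Z ◁ (g ≫ (β_ V Y).inv) ⊗≫ v ▷ Y) ≫ (β_ W Y).hom) =
        Z ◁ g ⊗≫ (β_ Z Y).hom ▷ V ⊗≫ Y ◁ v := by
    intro g
    have h1 := congrArg (fun z => Z ◁ g ⊗≫ Z ◁ (β_ V Y).inv ⊗≫ z) (crossR21 v Y)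
    have h4 := congrArg (fun z => Z ◁ g ⊗≫ Z ◁ z ⊗≫ (β_ Z Y).hom ▷ V ⊗≫ Y ◁ v)
      (β_ V Y).inv_hom_id
    beta_reduce at h1 h4
    refine Eq.trans ?_ (h1.symm.trans (Eq.trans ?_ (h4.trans ?_))) <;> monoidal
  have := ndl_co h hY (g₁ ≫ (β_ V Y).inv) (g₂ ≫ (β_ V Y).inv) (by
    rw [← cancel_mono (β_ W Y).hom, key, key, e])
  simpa using this

/-- The test morphism `M`. -/
def MM {A V W : C} (a₁ : A ⊗ V ⟶ V) (a₂ : A ⊗ W ⟶ W) : (A ⊗ A) ⊗ (V ⊗ W) ⟶ V ⊗ W :=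
  𝟙 _ ⊗≫ A ◁ (β_ A V).hom ▷ W ⊗≫ a₁ ▷ (A ⊗ W) ⊗≫ V ◁ a₂

theorem MM_inj {A V W : C} {a₁ : A ⊗ V ⟶ V} {a₂ : A ⊗ W ⟶ W} {𝒴 : Set C}
    (h₁ : NdLeftOn a₁ 𝒴) (h₂ : NdLeftOn a₂ 𝒴) (hV : V ∈ 𝒴) (hW : W ∈ 𝒴)
    {X : C} (g₁ g₂ : X ⟶ V ⊗ W)
    (e : (A ⊗ A) ◁ g₁ ≫ MM a₁ a₂ = (A ⊗ A) ◁ g₂ ≫ MM a₁ a₂) : g₁ = g₂ := by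
  apply ndl_mid h₂ hV
  apply ndl_co h₁ hW
  have key : ∀ g : X ⟶ V ⊗ W,
      A ◁ (A ◁ g ⊗≫ (β_ A V).hom ▷ W ⊗≫ V ◁ a₂) ⊗≫ a₁ ▷ W
        = 𝟙 _ ⊗≫ ((A ⊗ A) ◁ g ≫ MM a₁ a₂) := by
    intro g
    have h1 := congrArg (fun z => A ◁ (A ◁ g) ⊗≫ A ◁ (β_ A V).hom ▷ W ⊗≫ z)
      (whisker_exchange a₁ a₂)
    beta_reduce at h1
    dsimp only [MM]
    refine Eq.trans ?_ (h1.trans ?_) <;> monoidal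
  rw [key, key, e]

/-- Rewriting by `h` in a context `F`, up to coherence. -/
theorem chn {X Y X' Y' P Q : C} [MonoidalCoherence X X'] [MonoidalCoherence Y' Y]
    {a d : X ⟶ Y} {x y : P ⟶ Q} (h : x = y) (F : (P ⟶ Q) → (X' ⟶ Y'))
    (hp : a = 𝟙 X ⊗≫ F x ⊗≫ 𝟙 Y) (hq : 𝟙 X ⊗≫ F y ⊗≫ 𝟙 Y = d) : a = d := by
  subst h; exact hp.trans hq

/-- Braid relation. -/
theorem s1_s9 {A : C} (t : A ⊗ A ⟶ A ⊗ A) :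
    (β_ A A).hom ▷ A ⊗≫ A ◁ t ⊗≫ (β_ A A).inv ▷ A
      = 𝟙 _ ⊗≫ A ◁ (β_ A A).inv ⊗≫ t ▷ A ⊗≫ A ◁ (β_ A A).hom ⊗≫ 𝟙 _ := by
  refine chn (β_ A A).inv_hom_id.symm
    (fun z => A ◁ z ⊗≫ (β_ A A).hom ▷ A ⊗≫ A ◁ t ⊗≫ (β_ A A).inv ▷ A) ?_
    (chn (crossR22 t A) (fun z => A ◁ (β_ A A).inv ⊗≫ z ⊗≫ (β_ A A).inv ▷ A) ?_
    (chn (β_ A A).hom_inv_id (fun z => A ◁ (β_ A A).inv ⊗≫ t ▷ A ⊗≫ A ◁ (β_ A A).hom ⊗≫ z ▷ A)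
      ?_ ?_)) <;> monoidal

namespace RWMB

variable {A : C} {𝒴 : Set C} (S : RWMB A 𝒴)

theorem fus :
    A ◁ S.t₁ ⊗≫ (β_ A A).hom ▷ A ⊗≫ A ◁ S.t₁ ⊗≫ (β_ A A).inv ▷ A ⊗≫ S.m ▷ A
      = 𝟙 _ ⊗≫ S.m ▷ A ⊗≫ S.t₁ := by
  have h1 := S.ax1
  simp only [wl] at h1
  refine chn S.hm₁ (fun z => A ◁ S.t₁ ⊗≫ (β_ A A).hom ▷ A ⊗≫ A ◁ S.t₁ ⊗≫ (β_ A A).inv ▷ A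
      ⊗≫ z ▷ A) ?_
    (chn h1 (fun z => z ⊗≫ S.j ▷ (A ⊗ A)) ?_
    (chn (whisker_exchange S.j S.t₁) (fun z => S.t₁ ▷ A ⊗≫ z) ?_
    (chn S.hm₁.symm (fun z => z ▷ A ⊗≫ S.t₁) ?_ ?_))) <;> monoidal

theorem assoc : A ◁ S.m ⊗≫ S.m = 𝟙 _ ⊗≫ S.m ▷ A ⊗≫ S.m := by
  have h1 := S.ax8
  simp only [wl, ml] at h1
  refine chn S.hm₁ (fun z => A ◁ z ⊗≫ S.m) ?_
    (chn S.ax3.symm (fun z => A ◁ z ⊗≫ A ◁ S.j ▷ A ⊗≫ S.m) ?_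
    (chn (β_ A A).inv_hom_id.symm
      (fun z => A ◁ S.t₁ ⊗≫ A ◁ z ⊗≫ A ◁ S.e₁ ⊗≫ A ◁ S.j ▷ A ⊗≫ S.m) ?_
    (chn h1.symm (fun z => A ◁ S.t₁ ⊗≫ A ◁ (β_ A A).inv ⊗≫ z) ?_
    (chn (s1_s9 S.t₁).symm (fun z => A ◁ S.t₁ ⊗≫ z ⊗≫ S.m ▷ A ⊗≫ S.j ▷ A) ?_
    (chn S.fus (fun z => z ⊗≫ S.j ▷ A) ?_
    (chn S.hm₁.symm (fun z => S.m ▷ A ⊗≫ z) ?_ ?_)))))) <;> monoidal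

theorem cancel_last {X : C} (f g : X ⟶ A) (h : f ▷ A ≫ S.m = g ▷ A ≫ S.m) : f = g := by
  have := ndr_right S.ndr S.memI (f ≫ (λ_ A).inv) (g ≫ (λ_ A).inv) (by
    refine chn h (fun z => z) ?_ ?_ <;> monoidal)
  simpa using this

theorem bbm : (β_ A A).hom ≫ (β_ A A).hom ≫ S.m = S.m := by
  have h1 := S.hc13
  simp only [wl] at h1
  have h2 : (β_ A A).hom ▷ A ⊗≫ (β_ A A).hom ▷ A ⊗≫ S.m ▷ A ⊗≫ S.m
      = S.m ▷ A ⊗≫ S.m := by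
    refine chn S.assoc.symm (fun z => (β_ A A).hom ▷ A ⊗≫ (β_ A A).hom ▷ A ⊗≫ z) ?_
      (chn (β_ A A).inv_hom_id.symm
        (fun z => (β_ A A).hom ▷ A ⊗≫ A ◁ z ⊗≫ (β_ A A).hom ▷ A ⊗≫ A ◁ S.m ⊗≫ S.m) ?_
      (chn (crossR21 S.m A)
        (fun z => (β_ A A).hom ▷ A ⊗≫ A ◁ (β_ A A).inv ⊗≫ z ⊗≫ S.m) ?_
      (chn S.hm₁ (fun z => (β_ A A).hom ▷ A ⊗≫ A ◁ (β_ A A).inv ⊗≫ z ▷ A ⊗≫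
        (β_ A A).hom ⊗≫ S.m) ?_
      (chn (whisker_exchange S.j ((β_ A A).hom ≫ S.m)).symm
        (fun z => (β_ A A).hom ▷ A ⊗≫ A ◁ (β_ A A).inv ⊗≫ S.t₁ ▷ A ⊗≫ z) ?_
      (chn h1 (fun z => (β_ A A).hom ▷ A ⊗≫ A ◁ (β_ A A).inv ⊗≫ z ⊗≫ S.j ▷ A) ?_
      (chn (β_ A A).inv_hom_id (fun z => (β_ A A).hom ▷ A ⊗≫ A ◁ z ⊗≫ S.t₃ ▷ A ⊗≫
        A ◁ S.m ⊗≫ S.j ▷ A) ?_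
      (chn (whisker_exchange S.j S.m)
        (fun z => (β_ A A).hom ▷ A ⊗≫ S.t₃ ▷ A ⊗≫ z) ?_
      (chn S.hm₃.symm (fun z => z ▷ A ⊗≫ S.m) ?_ ?_)))))))) <;> monoidal
  apply S.cancel_last
  refine chn h2 (fun z => z) ?_ ?_ <;> monoidal

end RWMB

namespace RWMB

variable {A : C} {𝒴 : Set C} (S : RWMB A 𝒴)

theorem Mlin {V : C} (act : A ⊗ V ⟶ V)
    (hass : (A ◁ act) ≫ act = (α_ A A V).inv ≫ (S.m ▷ V) ≫ act) :
    (A ⊗ A) ◁ (A ◁ (β_ A V).hom) ⊗≫ (A ⊗ A) ◁ (act ▷ A) ⊗≫ MM act S.m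
      = 𝟙 _ ⊗≫ (MM S.m S.m ▷ V) ⊗≫ A ◁ (β_ A V).hom ⊗≫ act ▷ A := by
  dsimp only [MM]
  refine chn (crossL21 act A).symm
      (fun z => (A ⊗ A) ◁ (A ◁ (β_ A V).hom) ⊗≫ A ◁ z ▷ A ⊗≫ act ▷ (A ⊗ A) ⊗≫ V ◁ S.m) ?_
    (chn hass (fun z => (A ⊗ A) ◁ (A ◁ (β_ A V).hom) ⊗≫ A ◁ (β_ A A).hom ▷ (V ⊗ A) ⊗≫
      (A ⊗ A) ◁ (β_ A V).hom ▷ A ⊗≫ z ▷ (A ⊗ A) ⊗≫ V ◁ S.m) ?_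
    (chn (whisker_exchange S.m (β_ A V).hom)
      (fun z => (A ⊗ A) ◁ (A ◁ (β_ A V).hom) ⊗≫ A ◁ (β_ A A).hom ▷ (V ⊗ A) ⊗≫
      z ▷ A ⊗≫ act ▷ (A ⊗ A) ⊗≫ V ◁ S.m) ?_
    (chn (whisker_exchange (A ◁ (β_ A A).hom ≫ (α_ A A A).inv ≫ S.m ▷ A) (β_ A V).hom)
      (fun z => 𝟙 ((A ⊗ A) ⊗ A ⊗ A ⊗ V) ⊗≫ z ⊗≫ A ◁ (β_ A V).hom ▷ A ⊗≫ act ▷ (A ⊗ A) ⊗≫ V ◁ S.m) ?_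
    (chn (whisker_exchange act S.m).symm
      (fun z => A ◁ (β_ A A).hom ▷ (A ⊗ V) ⊗≫ S.m ▷ (A ⊗ A ⊗ V) ⊗≫ (A ⊗ A) ◁ (β_ A V).hom
        ⊗≫ A ◁ (β_ A V).hom ▷ A ⊗≫ z) ?_
    (chn (crossR21 S.m V)
      (fun z => A ◁ (β_ A A).hom ▷ (A ⊗ V) ⊗≫ S.m ▷ (A ⊗ A ⊗ V) ⊗≫ A ◁ z ⊗≫ act ▷ A)
      ?_ ?_))))) <;> monoidal

theorem heM : (A ⊗ A) ◁ S.e₁ ≫ MM S.m S.m = S.e₂ ▷ (A ⊗ A) ≫ MM S.m S.m := by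
  have h := S.hecomp
  simp only [midSw] at h
  dsimp only [MM]
  refine chn h (fun z => z) ?_ ?_ <;> monoidal

theorem rho {V : C} (act : A ⊗ V ⟶ V)
    (hass : (A ◁ act) ≫ act = (α_ A A V).inv ≫ (S.m ▷ V) ≫ act) :
    (A ⊗ A) ◁ (S.e₁ ▷ V ⊗≫ A ◁ (β_ A V).hom ⊗≫ act ▷ A) ≫ MM act S.m
      = S.e₂ ▷ ((A ⊗ A) ⊗ V) ≫ (A ⊗ A) ◁ (𝟙 _ ⊗≫ A ◁ (β_ A V).hom ⊗≫ act ▷ A)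
        ≫ MM act S.m := by
  refine chn (S.Mlin act hass) (fun z => (A ⊗ A) ◁ S.e₁ ▷ V ⊗≫ z) ?_
    (chn S.heM (fun z => z ▷ V ⊗≫ A ◁ (β_ A V).hom ⊗≫ act ▷ A) ?_
    (chn (S.Mlin act hass).symm (fun z => S.e₂ ▷ ((A ⊗ A) ⊗ V) ⊗≫ z) ?_ ?_)) <;> monoidal

theorem assoc' : (A ◁ S.m) ≫ S.m = (α_ A A A).inv ≫ (S.m ▷ A) ≫ S.m := by
  refine chn S.assoc (fun z => z) ?_ ?_ <;> monoidal

theorem elin : A ◁ (β_ A A).hom ⊗≫ S.m ▷ A ⊗≫ S.e₁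
    = 𝟙 _ ⊗≫ S.e₁ ▷ A ⊗≫ A ◁ (β_ A A).hom ⊗≫ S.m ▷ A := by
  apply MM_inj S.ndl S.ndl S.memA S.memA
  refine chn S.heM (fun z => (A ⊗ A) ◁ (A ◁ (β_ A A).hom) ⊗≫ (A ⊗ A) ◁ S.m ▷ A ⊗≫ z) ?_
    (chn (whisker_exchange S.e₂ (A ◁ (β_ A A).hom ≫ (α_ A A A).inv ≫ S.m ▷ A))
      (fun z => z ⊗≫ MM S.m S.m) ?_
    (chn (S.rho S.m S.assoc').symm (fun z => 𝟙 ((A ⊗ A) ⊗ (A ⊗ A ⊗ A)) ⊗≫ z) ?_ ?_)) <;> monoidal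

theorem ax6' : A ◁ (β_ A A).hom ⊗≫ S.t₁ ▷ A ⊗≫ A ◁ S.e₁
    = 𝟙 _ ⊗≫ S.e₁ ▷ A ⊗≫ A ◁ (β_ A A).hom ⊗≫ S.t₁ ▷ A ⊗≫ 𝟙 _ := by
  have h := S.ax6
  simp only [wl] at h
  refine chn h (fun z => A ◁ (β_ A A).hom ⊗≫ z) ?_
    (chn (β_ A A).hom_inv_id
      (fun z => A ◁ z ⊗≫ S.e₁ ▷ A ⊗≫ A ◁ (β_ A A).hom ⊗≫ S.t₁ ▷ A) ?_ ?_) <;> monoidal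

theorem t1lin : A ◁ S.m ⊗≫ S.t₁ = 𝟙 _ ⊗≫ S.t₁ ▷ A ⊗≫ A ◁ S.m := by
  have h := S.hc12
  simp only [wl, ml] at h
  apply ndl_co S.ndl S.memA
  refine chn h (fun z => (A ⊗ A) ◁ S.m ⊗≫ z) ?_
    (chn (whisker_exchange S.t₂ S.m) (fun z => z ⊗≫ A ◁ S.m) ?_
    (chn S.assoc (fun z => S.t₂ ▷ (A ⊗ A) ⊗≫ A ◁ z) ?_
    (chn h.symm (fun z => z ▷ A ⊗≫ A ◁ S.m) ?_
    (chn (whisker_exchange S.m S.m).symm (fun z => A ◁ S.t₁ ▷ A ⊗≫ z) ?_ ?_)))) <;> monoidal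

/-- `t₄` precomposed with the braiding. -/
def TT : A ⊗ A ⟶ A ⊗ A := (β_ A A).hom ≫ S.t₄

theorem hmT : S.m = S.TT ≫ (A ◁ S.j) ≫ (ρ_ A).hom := by
  rw [TT, Category.assoc]; exact S.hm₄

theorem c14 : S.t₁ ▷ A ⊗≫ A ◁ (β_ A A).hom ⊗≫ S.m ▷ A
    = 𝟙 _ ⊗≫ A ◁ (β_ A A).hom ⊗≫ S.TT ▷ A ⊗≫ A ◁ S.m := by
  have h := S.hc14
  simp only [wl, ml] at h
  dsimp only [TT]
  refine chn S.bbm.symm (fun z => S.t₁ ▷ A ⊗≫ A ◁ (β_ A A).hom ⊗≫ z ▷ A) ?_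
    (chn (crossR22 S.t₁ A).symm (fun z => z ⊗≫ (β_ A A).hom ▷ A ⊗≫ S.m ▷ A) ?_
    (chn h (fun z => A ◁ (β_ A A).hom ⊗≫ (β_ A A).hom ▷ A ⊗≫ z) ?_ ?_)) <;> monoidal

theorem ndmid3 {X : C} (g₁ g₂ : X ⟶ A ⊗ (A ⊗ A))
    (e : g₁ ▷ A ⊗≫ (A ⊗ A) ◁ (β_ A A).hom ⊗≫ A ◁ S.m ▷ A
      = g₂ ▷ A ⊗≫ (A ⊗ A) ◁ (β_ A A).hom ⊗≫ A ◁ S.m ▷ A) : g₁ = g₂ := by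
  have key : ∀ g : X ⟶ A ⊗ (A ⊗ A),
      ((g ≫ A ◁ (β_ A A).inv ≫ (α_ A A A).inv) ▷ A ⊗≫ (A ⊗ A) ◁ S.m) ≫
        ((α_ A A A).hom ≫ A ◁ (β_ A A).hom)
      = g ▷ A ⊗≫ (A ⊗ A) ◁ (β_ A A).hom ⊗≫ A ◁ S.m ▷ A ⊗≫ 𝟙 _ := by
    intro g
    refine chn (crossL21 S.m A).symm (fun z => g ▷ A ⊗≫ A ◁ (β_ A A).inv ▷ A ⊗≫ A ◁ z) ?_
      (chn (β_ A A).inv_hom_id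
        (fun z => g ▷ A ⊗≫ A ◁ z ▷ A ⊗≫ (A ⊗ A) ◁ (β_ A A).hom ⊗≫ A ◁ S.m ▷ A) ?_ ?_) <;> monoidal
  have := ndr_right S.ndr S.memAA (g₁ ≫ A ◁ (β_ A A).inv ≫ (α_ A A A).inv)
    (g₂ ≫ A ◁ (β_ A A).inv ≫ (α_ A A A).inv) (by
      rw [← cancel_mono ((α_ A A A).hom ≫ A ◁ (β_ A A).hom)]
      refine chn (key g₁) (fun z => z) ?_ (chn e (fun z => z) ?_
        (chn (key g₂).symm (fun z => z) ?_ ?_)) <;> monoidal)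
  rwa [cancel_mono] at this

theorem K6 : (A ⊗ A) ◁ (β_ A A).hom ⊗≫ A ◁ (β_ A A).hom ▷ A ⊗≫ S.TT ▷ (A ⊗ A) ⊗≫
      (A ⊗ A) ◁ (β_ A A).hom ⊗≫ A ◁ S.m ▷ A
    = 𝟙 _ ⊗≫ A ◁ (β_ A A).hom ▷ A ⊗≫ S.t₁ ▷ (A ⊗ A) ⊗≫ (A ⊗ A) ◁ (β_ A A).hom ⊗≫
      A ◁ (β_ A A).hom ▷ A ⊗≫ S.m ▷ (A ⊗ A) ⊗≫ 𝟙 _ := by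
  refine chn (whisker_exchange S.TT (β_ A A).hom).symm
    (fun z => (A ⊗ A) ◁ (β_ A A).hom ⊗≫ A ◁ (β_ A A).hom ▷ A ⊗≫ z ⊗≫ A ◁ S.m ▷ A) ?_
    (chn (crossL22 (β_ A A).hom A).symm (fun z => A ◁ z ⊗≫ S.TT ▷ (A ⊗ A) ⊗≫ A ◁ S.m ▷ A) ?_
    (chn S.c14.symm (fun z => A ◁ (β_ A A).hom ▷ A ⊗≫ (A ⊗ A) ◁ (β_ A A).hom ⊗≫ z ▷ A) ?_
    (chn (whisker_exchange S.t₁ (β_ A A).hom) (fun z => A ◁ (β_ A A).hom ▷ A ⊗≫ z ⊗≫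
      A ◁ (β_ A A).hom ▷ A ⊗≫ S.m ▷ (A ⊗ A)) ?_ ?_))) <;> monoidal

theorem six : A ◁ (β_ A A).hom ⊗≫ S.TT ▷ A ⊗≫ A ◁ S.e₁
    = 𝟙 _ ⊗≫ S.e₁ ▷ A ⊗≫ A ◁ (β_ A A).hom ⊗≫ S.TT ▷ A ⊗≫ 𝟙 _ := by
  apply S.ndmid3
  rw [← cancel_epi (A ◁ A ◁ (β_ A A).hom ≫ A ◁ (α_ A A A).inv ≫ (α_ A (A ⊗ A) A).inv)]
  refine chn S.elin.symm (fun z => (A ⊗ A) ◁ (β_ A A).hom ⊗≫ A ◁ (β_ A A).hom ▷ A ⊗≫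
      S.TT ▷ (A ⊗ A) ⊗≫ A ◁ z) ?_
    (chn S.K6 (fun z => z ⊗≫ A ◁ S.e₁) ?_
    (chn (whisker_exchange S.m S.e₁).symm (fun z => A ◁ (β_ A A).hom ▷ A ⊗≫ S.t₁ ▷ (A ⊗ A) ⊗≫
      (A ⊗ A) ◁ (β_ A A).hom ⊗≫ A ◁ (β_ A A).hom ▷ A ⊗≫ z) ?_
    (chn (crossR22 S.e₁ A) (fun z => A ◁ (β_ A A).hom ▷ A ⊗≫ S.t₁ ▷ (A ⊗ A) ⊗≫
      A ◁ z ⊗≫ S.m ▷ (A ⊗ A)) ?_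
    (chn S.ax6' (fun z => z ▷ A ⊗≫ 
      (A ⊗ A) ◁ (β_ A A).hom ⊗≫ A ◁ (β_ A A).hom ▷ A ⊗≫ S.m ▷ (A ⊗ A)) ?_
    (chn S.K6.symm (fun z => S.e₁ ▷ (A ⊗ A) ⊗≫ z) ?_
    (chn (whisker_exchange S.e₁ (β_ A A).hom).symm (fun z => z ⊗≫ A ◁ (β_ A A).hom ▷ A ⊗≫
      S.TT ▷ (A ⊗ A) ⊗≫ (A ⊗ A) ◁ (β_ A A).hom ⊗≫ A ◁ S.m ▷ A) ?_ ?_)))))) <;> monoidal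

end RWMB

/-- The data attached to the base object, gathered for the lemmas below. -/
structure BD {A : C} {𝒴 : Set C} (S : RWMB A 𝒴) (L : C) where
  em : Epi S.m
  emR : ∀ X : C, Epi (S.m ▷ X)
  hclosed : ∀ Y Y' : C, Y ∈ 𝒴 → Y' ∈ 𝒴 → (Y ⊗ Y') ∈ 𝒴
  memL : L ∈ 𝒴
  p : A ⟶ L
  hpc : S.piL1 ≫ p = S.piBarR1c ≫ p
  n₁ : L ⊗ A ⟶ A
  hn₁ : (p ▷ A) ≫ n₁ = S.piL1
  hndn₁ : NdRightOn n₁ 𝒴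
  δ : L ⟶ L ⊗ L
  hδ : S.m ≫ p ≫ δ = S.t₁ ≫ (p ▷ A) ≫ (L ◁ p)
  ε : L ⟶ 𝟙_ C
  hε : p ≫ ε = S.j
  τ : A ⟶ L ⊗ A
  hτ : S.m ≫ τ = S.t₁ ≫ (p ▷ A)
  τbar : A ⟶ A ⊗ L
  hτbar : S.m ≫ τbar = S.TT ≫ (A ◁ p)

namespace BD

variable {A : C} {𝒴 : Set C} {S : RWMB A 𝒴} {L : C} (D : BD S L)

theorem cancel_mb (D : BD S L) {Z : C} (f g : A ⊗ A ⟶ Z)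
    (h : A ◁ (β_ A A).hom ⊗≫ S.m ▷ A ⊗≫ f = A ◁ (β_ A A).hom ⊗≫ S.m ▷ A ⊗≫ g) : f = g := by
  have := D.emR A
  rw [← cancel_epi (S.m ▷ A), ← cancel_epi (A ◁ (β_ A A).hom ≫ (α_ A A A).inv)]
  refine Eq.trans ?_ (h.trans ?_) <;> simp [monoidalComp]

theorem CU : S.t₁ ≫ A ◁ S.j ≫ (ρ_ A).hom ≫ D.p = S.m ≫ D.p := by
  have h := D.hpc
  simp only [RWMB.piL1, RWMB.piBarR1c, Category.assoc] at h
  rw [← S.ax3, Category.assoc, ← h, ← Category.assoc S.t₁ S.e₁, S.ax3, S.hm₁]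
  simp only [Category.assoc]

theorem hn : D.p ▷ A ≫ D.n₁ = S.e₁ ≫ S.j ▷ A ≫ (λ_ A).hom := D.hn₁

theorem ss : D.τbar ▷ A ⊗≫ A ◁ D.n₁ = S.e₁ := by
  apply D.cancel_mb
  refine chn D.hτbar (fun z => A ◁ (β_ A A).hom ⊗≫ z ▷ A ⊗≫ A ◁ D.n₁) ?_
    (chn D.hn (fun z => A ◁ (β_ A A).hom ⊗≫ S.TT ▷ A ⊗≫ A ◁ z) ?_
    (chn S.six (fun z => z ⊗≫ A ◁ S.j ▷ A) ?_
    (chn S.hmT.symm (fun z => S.e₁ ▷ A ⊗≫ A ◁ (β_ A A).hom ⊗≫ z ▷ A) ?_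
    (chn S.elin.symm (fun z => z) ?_ ?_)))) <;> monoidal

theorem star : D.p ▷ A ⊗≫ D.δ ▷ A ⊗≫ L ◁ D.n₁ = S.e₁ ⊗≫ D.p ▷ A := by
  apply D.cancel_mb
  refine chn D.hδ (fun z => A ◁ (β_ A A).hom ⊗≫ z ▷ A ⊗≫ L ◁ D.n₁) ?_
    (chn D.hn (fun z => A ◁ (β_ A A).hom ⊗≫ S.t₁ ▷ A ⊗≫ D.p ▷ (A ⊗ A) ⊗≫ L ◁ z) ?_
    (chn (whisker_exchange D.p (S.e₁ ≫ S.j ▷ A)).symm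
      (fun z => A ◁ (β_ A A).hom ⊗≫ S.t₁ ▷ A ⊗≫ z) ?_
    (chn S.ax6' (fun z => z ⊗≫ A ◁ S.j ▷ A ⊗≫ D.p ▷ A) ?_
    (chn D.CU (fun z => S.e₁ ▷ A ⊗≫ A ◁ (β_ A A).hom ⊗≫ z ▷ A) ?_
    (chn S.elin.symm (fun z => z ⊗≫ D.p ▷ A) ?_ ?_))))) <;> monoidal

theorem lcu : D.τ ≫ D.ε ▷ A ≫ (λ_ A).hom = 𝟙 A := by
  have := D.em
  rw [← cancel_epi S.m]
  refine chn D.hτ (fun z => z ⊗≫ D.ε ▷ A) ?_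
    (chn D.hε (fun z => S.t₁ ⊗≫ z ▷ A) ?_
    (chn S.hm₁.symm (fun z => z) ?_ ?_)) <;> monoidal

theorem rcu : D.τbar ≫ A ◁ D.ε ≫ (ρ_ A).hom = 𝟙 A := by
  have := D.em
  rw [← cancel_epi S.m]
  refine chn D.hτbar (fun z => z ⊗≫ A ◁ D.ε) ?_
    (chn D.hε (fun z => S.TT ⊗≫ A ◁ z) ?_
    (chn S.hmT.symm (fun z => z) ?_ ?_)) <;> monoidal

theorem lco : D.τ ⊗≫ L ◁ D.τ = D.τ ⊗≫ D.δ ▷ A ⊗≫ 𝟙 _ := by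
  have := D.em
  have := D.emR A
  have h1 := S.ax1
  simp only [wl] at h1
  rw [← cancel_epi S.m, ← cancel_epi (S.m ▷ A)]
  refine chn S.assoc.symm (fun z => z ⊗≫ D.τ ⊗≫ L ◁ D.τ) ?_
    (chn D.hτ (fun z => A ◁ S.m ⊗≫ z ⊗≫ L ◁ D.τ) ?_
    (chn S.t1lin (fun z => z ⊗≫ D.p ▷ A ⊗≫ L ◁ D.τ) ?_
    (chn (whisker_exchange D.p S.m) (fun z => S.t₁ ▷ A ⊗≫ z ⊗≫ L ◁ D.τ) ?_
    (chn D.hτ (fun z => S.t₁ ▷ A ⊗≫ D.p ▷ (A ⊗ A) ⊗≫ L ◁ z) ?_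
    (chn (whisker_exchange D.p S.t₁).symm (fun z => S.t₁ ▷ A ⊗≫ z ⊗≫ L ◁ D.p ▷ A) ?_
    (chn h1.symm (fun z => z ⊗≫ D.p ▷ (A ⊗ A) ⊗≫ L ◁ D.p ▷ A) ?_
    (chn D.hδ.symm (fun z => A ◁ S.t₁ ⊗≫ (β_ A A).hom ▷ A ⊗≫ A ◁ S.t₁ ⊗≫ (β_ A A).inv ▷ A
      ⊗≫ z ▷ A) ?_
    (chn S.fus (fun z => z ⊗≫ D.p ▷ A ⊗≫ D.δ ▷ A) ?_
    (chn D.hτ.symm (fun z => S.m ▷ A ⊗≫ z ⊗≫ D.δ ▷ A) ?_ ?_))))))))) <;> monoidal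

theorem rco : D.τbar ⊗≫ A ◁ D.δ ⊗≫ 𝟙 ((A ⊗ L) ⊗ L) = D.τbar ⊗≫ D.τbar ▷ L := by
  apply ndr_right D.hndn₁ (D.hclosed _ _ S.memA D.memL)
  apply D.cancel_mb
  refine chn D.hτbar (fun z => A ◁ (β_ A A).hom ⊗≫ z ▷ A ⊗≫ A ◁ D.δ ▷ A ⊗≫ (A ⊗ L) ◁ D.n₁) ?_
    (chn D.star (fun z => A ◁ (β_ A A).hom ⊗≫ S.TT ▷ A ⊗≫ A ◁ z) ?_
    (chn S.six (fun z => z ⊗≫ A ◁ D.p ▷ A) ?_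
    (chn D.hτbar.symm (fun z => S.e₁ ▷ A ⊗≫ A ◁ (β_ A A).hom ⊗≫ z ▷ A) ?_
    (chn S.elin.symm (fun z => z ⊗≫ D.τbar ▷ A) ?_
    (chn D.ss.symm (fun z => A ◁ (β_ A A).hom ⊗≫ S.m ▷ A ⊗≫ z ⊗≫ D.τbar ▷ A) ?_
    (chn (whisker_exchange D.τbar D.n₁)
      (fun z => A ◁ (β_ A A).hom ⊗≫ S.m ▷ A ⊗≫ D.τbar ▷ A ⊗≫ z) ?_ ?_)))))) <;> monoidal

theorem comm : D.τbar ⊗≫ D.τ ▷ L = D.τ ⊗≫ L ◁ D.τbar ⊗≫ 𝟙 _ := by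
  apply ndr_right D.hndn₁ (D.hclosed _ _ D.memL S.memA)
  symm
  apply D.cancel_mb
  refine chn D.ss (fun z => A ◁ (β_ A A).hom ⊗≫ S.m ▷ A ⊗≫ D.τ ▷ A ⊗≫ L ◁ z) ?_
    (chn D.hτ (fun z => A ◁ (β_ A A).hom ⊗≫ z ▷ A ⊗≫ L ◁ S.e₁) ?_
    (chn (whisker_exchange D.p S.e₁).symm
      (fun z => A ◁ (β_ A A).hom ⊗≫ S.t₁ ▷ A ⊗≫ z) ?_
    (chn S.ax6' (fun z => z ⊗≫ D.p ▷ (A ⊗ A)) ?_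
    (chn D.hτ.symm (fun z => S.e₁ ▷ A ⊗≫ A ◁ (β_ A A).hom ⊗≫ z ▷ A) ?_
    (chn S.elin.symm (fun z => z ⊗≫ D.τ ▷ A) ?_
    (chn D.ss.symm (fun z => A ◁ (β_ A A).hom ⊗≫ S.m ▷ A ⊗≫ z ⊗≫ D.τ ▷ A) ?_
    (chn (whisker_exchange D.τ D.n₁)
      (fun z => A ◁ (β_ A A).hom ⊗≫ S.m ▷ A ⊗≫ D.τbar ▷ A ⊗≫ z) ?_ ?_))))))) <;> monoidal

end BD

namespace BD

variable {A : C} {𝒴 : Set C} {S : RWMB A 𝒴} {L : C} (D : BD S L)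

theorem psib_test {V : C} (act : A ⊗ V ⟶ V) :
    (D.τbar ▷ V ⊗≫ A ◁ (β_ L V).hom ⊗≫ act ▷ L) ▷ A ⊗≫ V ◁ D.n₁
      = 𝟙 _ ⊗≫ A ◁ (β_ A V).inv ⊗≫ S.e₁ ▷ V ⊗≫ A ◁ (β_ A V).hom ⊗≫ act ▷ A := by
  symm
  refine chn D.ss.symm
      (fun z => A ◁ (β_ A V).inv ⊗≫ z ▷ V ⊗≫ A ◁ (β_ A V).hom ⊗≫ act ▷ A) ?_
    (chn (crossR21 D.n₁ V).symm
      (fun z => A ◁ (β_ A V).inv ⊗≫ D.τbar ▷ (A ⊗ V) ⊗≫ A ◁ z ⊗≫ act ▷ A) ?_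
    (chn (whisker_exchange D.τbar (β_ A V).hom).symm
      (fun z => A ◁ (β_ A V).inv ⊗≫ z ⊗≫ A ◁ (β_ L V).hom ▷ A ⊗≫ (A ⊗ V) ◁ D.n₁ ⊗≫ act ▷ A) ?_
    (chn (β_ A V).inv_hom_id
      (fun z => A ◁ z ⊗≫ D.τbar ▷ (V ⊗ A) ⊗≫ A ◁ (β_ L V).hom ▷ A ⊗≫ (A ⊗ V) ◁ D.n₁
        ⊗≫ act ▷ A) ?_
    (chn (whisker_exchange act D.n₁)
      (fun z => D.τbar ▷ (V ⊗ A) ⊗≫ A ◁ (β_ L V).hom ▷ A ⊗≫ z) ?_ ?_)))) <;> monoidal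

theorem psib_desc {V : C} (act : A ⊗ V ⟶ V)
    (hass : (A ◁ act) ≫ act = (α_ A A V).inv ≫ (S.m ▷ V) ≫ act)
    (memV : V ∈ 𝒴) (nd : NdLeftOn act 𝒴) {X : C} (f g : X ⟶ A ⊗ V)
    (h : f ≫ act = g ≫ act) :
    f ≫ (D.τbar ▷ V ⊗≫ A ◁ (β_ L V).hom ⊗≫ act ▷ L)
      = g ≫ (D.τbar ▷ V ⊗≫ A ◁ (β_ L V).hom ⊗≫ act ▷ L) := by
  apply ndr_right D.hndn₁ memV
  apply MM_inj nd S.ndl memV S.memA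
  have key : ∀ f : X ⟶ A ⊗ V,
      (A ⊗ A) ◁ ((f ≫ (D.τbar ▷ V ⊗≫ A ◁ (β_ L V).hom ⊗≫ act ▷ L)) ▷ A ⊗≫ V ◁ D.n₁)
        ≫ MM act S.m
      = S.e₂ ▷ (X ⊗ A) ≫ (A ⊗ A) ◁ ((f ≫ act) ▷ A) ≫ MM act S.m := by
    intro f
    refine chn (D.psib_test act) (fun z => (A ⊗ A) ◁ (f ▷ A) ⊗≫ (A ⊗ A) ◁ z ⊗≫ MM act S.m) ?_
      (chn (S.rho act hass)
        (fun z => (A ⊗ A) ◁ (f ▷ A) ⊗≫ (A ⊗ A) ◁ (A ◁ (β_ A V).inv) ⊗≫ z) ?_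
      (chn (whisker_exchange S.e₂ (f ▷ A ≫ (α_ A V A).hom ≫ A ◁ (β_ A V).inv ≫ (α_ A A V).inv))
        (fun z => z ⊗≫ (A ⊗ A) ◁ (A ◁ (β_ A V).hom) ⊗≫ (A ⊗ A) ◁ (act ▷ A) ⊗≫ MM act S.m) ?_
      (chn (β_ A V).inv_hom_id (fun z => S.e₂ ▷ (X ⊗ A) ⊗≫ (A ⊗ A) ◁ (f ▷ A) ⊗≫
        (A ⊗ A) ◁ (A ◁ z) ⊗≫ (A ⊗ A) ◁ (act ▷ A) ⊗≫ MM act S.m) ?_ ?_))) <;> monoidal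
  refine chn (key f) (fun z => z) ?_
    (chn h (fun z => S.e₂ ▷ (X ⊗ A) ⊗≫ (A ⊗ A) ◁ (z ▷ A) ⊗≫ MM act S.m) ?_
    (chn (key g).symm (fun z => z) ?_ ?_)) <;> monoidal

end BD

namespace RWMB

variable {A : C} {𝒴 : Set C} (S : RWMB A 𝒴)

theorem ax5j : A ◁ S.t₁ ⊗≫ S.piBarR1c ▷ A = 𝟙 _ ⊗≫ S.e₁ ▷ A ⊗≫ A ◁ S.m := by
  have h := S.ax5
  simp only [wl] at h
  dsimp only [piBarR1c]
  refine chn h (fun z => z ⊗≫ A ◁ S.j ▷ A) ?_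
    (chn S.hm₁.symm (fun z => S.e₁ ▷ A ⊗≫ A ◁ z) ?_ ?_) <;> monoidal

theorem M2lin {V : C} (act : A ⊗ V ⟶ V)
    (hass : (A ◁ act) ≫ act = (α_ A A V).inv ≫ (S.m ▷ V) ≫ act) :
    (A ⊗ A) ◁ (A ◁ act) ⊗≫ MM S.m act = 𝟙 _ ⊗≫ MM S.m S.m ▷ V ⊗≫ A ◁ act := by
  dsimp only [MM]
  refine chn (whisker_exchange (A ◁ (β_ A A).hom ≫ (α_ A A A).inv ≫ S.m ▷ A) act)
      (fun z => 𝟙 ((A ⊗ A) ⊗ A ⊗ A ⊗ V) ⊗≫ z ⊗≫ A ◁ act) ?_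
    (chn hass (fun z => A ◁ (β_ A A).hom ▷ (A ⊗ V) ⊗≫ S.m ▷ (A ⊗ A ⊗ V) ⊗≫ A ◁ z) ?_ ?_)
    <;> monoidal

/-- `(1 ⊗ v) ∘ (t₁ ⊗ 1)`. -/
def om {V : C} (act : A ⊗ V ⟶ V) : A ⊗ (A ⊗ V) ⟶ A ⊗ V :=
  𝟙 _ ⊗≫ S.t₁ ▷ V ⊗≫ A ◁ act

theorem FV {V : C} (act : A ⊗ V ⟶ V)
    (hass : (A ◁ act) ≫ act = (α_ A A V).inv ≫ (S.m ▷ V) ≫ act) :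
    (A ⊗ A) ◁ (A ◁ S.om act ⊗≫ S.piBarR1c ▷ V) ≫ MM S.m act
      = S.e₂ ▷ (A ⊗ (A ⊗ (A ⊗ V))) ≫ (A ⊗ A) ◁ (A ◁ (A ◁ act ≫ act)) ≫ MM S.m act := by
  dsimp only [om]
  refine chn (whisker_exchange S.piBarR1c act)
      (fun z => (A ⊗ A) ◁ (A ◁ S.t₁ ▷ V) ⊗≫ (A ⊗ A) ◁ z ⊗≫ MM S.m act) ?_
    (chn S.ax5j (fun z => (A ⊗ A) ◁ (z ▷ V) ⊗≫ (A ⊗ A) ◁ (A ◁ act) ⊗≫ MM S.m act) ?_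
    (chn hass.symm (fun z => (A ⊗ A) ◁ (S.e₁ ▷ (A ⊗ V)) ⊗≫ (A ⊗ A) ◁ (A ◁ z) ⊗≫ MM S.m act) ?_
    (chn (whisker_exchange S.e₁ act).symm (fun z => (A ⊗ A) ◁ z ⊗≫ (A ⊗ A) ◁ (A ◁ act)
      ⊗≫ MM S.m act) ?_
    (chn (S.M2lin act hass) (fun z => (A ⊗ A) ◁ ((A ⊗ A) ◁ act) ⊗≫ (A ⊗ A) ◁ (S.e₁ ▷ V) ⊗≫ z) ?_
    (chn S.heM (fun z => (A ⊗ A) ◁ ((A ⊗ A) ◁ act) ⊗≫ z ▷ V ⊗≫ A ◁ act) ?_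
    (chn (S.M2lin act hass).symm
      (fun z => (A ⊗ A) ◁ ((A ⊗ A) ◁ act) ⊗≫ S.e₂ ▷ ((A ⊗ A) ⊗ V) ⊗≫ z) ?_
    (chn (whisker_exchange S.e₂ ((A ⊗ A) ◁ act)) (fun z => z ⊗≫ (A ⊗ A) ◁ (A ◁ act)
      ⊗≫ MM S.m act) ?_ ?_))))))) <;> monoidal

theorem chi_eq {V : C} (act : A ⊗ V ⟶ V)
    (hass : (A ◁ act) ≫ act = (α_ A A V).inv ≫ (S.m ▷ V) ≫ act)
    (memV : V ∈ 𝒴) (nd : NdLeftOn act 𝒴) {X : C} (f g : X ⟶ A ⊗ (A ⊗ V))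
    (h : f ≫ (A ◁ act ≫ act) = g ≫ (A ◁ act ≫ act)) :
    A ◁ (f ≫ S.om act) ⊗≫ S.piBarR1c ▷ V = A ◁ (g ≫ S.om act) ⊗≫ S.piBarR1c ▷ V := by
  apply MM_inj S.ndl nd S.memA memV
  have key : ∀ f : X ⟶ A ⊗ (A ⊗ V),
      (A ⊗ A) ◁ (A ◁ (f ≫ S.om act) ⊗≫ S.piBarR1c ▷ V) ≫ MM S.m act
      = S.e₂ ▷ (A ⊗ X) ≫ (A ⊗ A) ◁ (A ◁ (f ≫ (A ◁ act ≫ act))) ≫ MM S.m act := by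
    intro f
    refine chn (S.FV act hass) (fun z => (A ⊗ A) ◁ (A ◁ f) ⊗≫ z) ?_
      (chn (whisker_exchange S.e₂ (A ◁ f)) (fun z => z ⊗≫ 
        (A ⊗ A) ◁ (A ◁ (A ◁ act ≫ act)) ⊗≫ MM S.m act) ?_ ?_) <;> monoidal
  rw [key, key, h]

theorem hf_eq {V X : C} (memV : V ∈ 𝒴) (f g : X ⟶ A ⊗ V)
    (h : A ◁ f ⊗≫ S.piBarR1c ▷ V = A ◁ g ⊗≫ S.piBarR1c ▷ V) :
    A ◁ f ⊗≫ S.t₁ ▷ V ⊗≫ A ◁ S.j ▷ V ⊗≫ 𝟙 (A ⊗ V)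
      = A ◁ g ⊗≫ S.t₁ ▷ V ⊗≫ A ◁ S.j ▷ V ⊗≫ 𝟙 (A ⊗ V) := by
  have h7 := S.ax7
  simp only [wl] at h7
  apply ndr_mid S.ndr memV
  have key : ∀ f : X ⟶ A ⊗ V,
      (A ◁ f ⊗≫ S.t₁ ▷ V ⊗≫ A ◁ S.j ▷ V ⊗≫ 𝟙 (A ⊗ V)) ▷ A ⊗≫ A ◁ (β_ V A).hom ⊗≫ S.m ▷ V
      = 𝟙 _ ⊗≫ A ◁ (β_ X A).hom ⊗≫ A ◁ (A ◁ f ⊗≫ S.piBarR1c ▷ V) ⊗≫ S.m ▷ V := by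
    intro f
    dsimp only [piBarR1c]
    refine chn (whisker_exchange (S.t₁ ≫ A ◁ S.j ≫ (ρ_ A).hom) (β_ V A).hom).symm
        (fun z => A ◁ f ▷ A ⊗≫ z ⊗≫ S.m ▷ V) ?_
      (chn (whisker_exchange S.t₁ (β_ V A).hom) (fun z => A ◁ f ▷ A ⊗≫ z ⊗≫ A ◁ S.j ▷ (A ⊗ V)
        ⊗≫ S.m ▷ V) ?_
      (chn (whisker_exchange S.t₁ (β_ V A).hom).symm (fun z => A ◁ f ▷ A ⊗≫ z ⊗≫ A ◁ S.j ▷ (A ⊗ V)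
        ⊗≫ S.m ▷ V) ?_
      (chn h7 (fun z => A ◁ f ▷ A ⊗≫ (A ⊗ A) ◁ (β_ V A).hom ⊗≫ z ▷ V) ?_
      (chn (crossR12 f A).symm
        (fun z => A ◁ z ⊗≫ A ◁ S.e₁ ▷ V ⊗≫ (A ⊗ A) ◁ S.j ▷ V ⊗≫ S.m ▷ V) ?_ ?_))))
      <;> monoidal
  rw [key, key, h]

theorem ka_eq {V X : C} (memV : V ∈ 𝒴) (f g : X ⟶ A ⊗ V)
    (h : A ◁ f ⊗≫ S.piBarR1c ▷ V = A ◁ g ⊗≫ S.piBarR1c ▷ V) :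
    A ◁ f ⊗≫ S.m ▷ V ⊗≫ S.j ▷ V ⊗≫ 𝟙 V = A ◁ g ⊗≫ S.m ▷ V ⊗≫ S.j ▷ V ⊗≫ 𝟙 V := by
  have h0 := S.hf_eq memV f g h
  have key : ∀ f : X ⟶ A ⊗ V,
      A ◁ f ⊗≫ S.m ▷ V ⊗≫ S.j ▷ V ⊗≫ 𝟙 V
      = (A ◁ f ⊗≫ S.t₁ ▷ V ⊗≫ A ◁ S.j ▷ V ⊗≫ 𝟙 (A ⊗ V)) ⊗≫ S.j ▷ V ⊗≫ 𝟙 V := by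
    intro f
    refine chn S.hm₁ (fun z => A ◁ f ⊗≫ z ▷ V ⊗≫ S.j ▷ V) ?_
      (chn (whisker_exchange S.j S.j).symm (fun z => A ◁ f ⊗≫ S.t₁ ▷ V ⊗≫ z ▷ V) ?_ ?_)
      <;> monoidal
  rw [key, key, h0]

end RWMB

namespace BD

variable {A : C} {𝒴 : Set C} {S : RWMB A 𝒴} {L : C} (D : BD S L)

theorem phi_eq {V X : C} (memV : V ∈ 𝒴) (f g : X ⟶ A ⊗ V)
    (h : A ◁ f ⊗≫ S.piBarR1c ▷ V = A ◁ g ⊗≫ S.piBarR1c ▷ V) :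
    f ≫ D.p ▷ V = g ≫ D.p ▷ V := by
  have h0 := S.ka_eq memV f g h
  have h8 := S.ax8
  simp only [wl, ml] at h8
  apply ndl_co D.hndn₁ memV
  apply ndl_co S.ndl memV
  have key : ∀ f : X ⟶ A ⊗ V,
      (A ◁ (A ◁ (f ≫ D.p ▷ V) ⊗≫ ((β_ A L).hom ≫ D.n₁) ▷ V) ⊗≫ S.m ▷ V) ≫ (β_ A V).hom
      = 𝟙 _ ⊗≫ S.t₁ ▷ X ⊗≫ A ◁ (β_ A X).hom ⊗≫
        (A ◁ f ⊗≫ S.m ▷ V ⊗≫ S.j ▷ V ⊗≫ 𝟙 V) ▷ A := by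
    intro f
    refine chn (BraidedCategory.braiding_naturality_right A D.p)
        (fun z => (A ⊗ A) ◁ f ⊗≫ A ◁ z ▷ V ⊗≫ A ◁ D.n₁ ▷ V ⊗≫ S.m ▷ V ⊗≫ (β_ A V).hom) ?_
      (chn D.hn (fun z => (A ⊗ A) ◁ f ⊗≫ A ◁ (β_ A A).hom ▷ V ⊗≫ A ◁ z ▷ V ⊗≫ S.m ▷ V
        ⊗≫ (β_ A V).hom) ?_
      (chn h8.symm (fun z => (A ⊗ A) ◁ f ⊗≫ z ▷ V ⊗≫ (β_ A V).hom) ?_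
      (chn (whisker_exchange (S.m ≫ S.j) (β_ A V).hom).symm
        (fun z => (A ⊗ A) ◁ f ⊗≫ S.t₁ ▷ (A ⊗ V) ⊗≫ A ◁ (β_ A A).hom ▷ V ⊗≫ z) ?_
      (chn (whisker_exchange S.t₁ f) (fun z => z ⊗≫ A ◁ (β_ A A).hom ▷ V ⊗≫ 
        (A ⊗ A) ◁ (β_ A V).hom ⊗≫ S.m ▷ (V ⊗ A) ⊗≫ S.j ▷ (V ⊗ A)) ?_
      (chn (crossL12 f A).symm (fun z => S.t₁ ▷ X ⊗≫ A ◁ z ⊗≫ S.m ▷ (V ⊗ A) ⊗≫ S.j ▷ (V ⊗ A))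
        ?_ ?_))))) <;> monoidal
  rw [← cancel_mono (β_ A V).hom, key, key, h0]

end BD

namespace BD

variable {A : C} {𝒴 : Set C} {S : RWMB A 𝒴} {L : C} (D : BD S L)

section lift

variable {V : C} (act : A ⊗ V ⟶ V) [Epi act]
  (x : V ⟶ L ⊗ V) (hx : act ≫ x = (D.τ ▷ V) ≫ (α_ L A V).hom ≫ (L ◁ act))
  (y : V ⟶ V ⊗ L) (hy : act ≫ y = (D.τbar ▷ V) ≫ (α_ A L V).hom ≫ (A ◁ (β_ L V).hom) ≫
          (α_ A V L).inv ≫ (act ▷ L))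

theorem Vlco (hx : act ≫ x = (D.τ ▷ V) ≫ (α_ L A V).hom ≫ (L ◁ act)) :
    x ≫ (L ◁ x) = x ≫ (D.δ ▷ V) ≫ (α_ L L V).hom := by
  rw [← cancel_epi act]
  refine chn hx (fun z => z ⊗≫ L ◁ x) ?_
    (chn hx (fun z => D.τ ▷ V ⊗≫ L ◁ z) ?_
    (chn D.lco (fun z => z ▷ V ⊗≫ (L ⊗ L) ◁ act) ?_
    (chn (whisker_exchange D.δ act).symm (fun z => D.τ ▷ V ⊗≫ z) ?_
    (chn hx.symm (fun z => z ⊗≫ D.δ ▷ V) ?_ ?_)))) <;> monoidal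

theorem Vlcu (hx : act ≫ x = (D.τ ▷ V) ≫ (α_ L A V).hom ≫ (L ◁ act)) :
    x ≫ (D.ε ▷ V) ≫ (λ_ V).hom = 𝟙 V := by
  rw [← cancel_epi act]
  refine chn hx (fun z => z ⊗≫ D.ε ▷ V) ?_
    (chn (whisker_exchange D.ε act) (fun z => D.τ ▷ V ⊗≫ z) ?_
    (chn D.lcu (fun z => z ▷ V ⊗≫ act) ?_ ?_)) <;> monoidal

theorem Vrcu (hy : act ≫ y = (D.τbar ▷ V) ≫ (α_ A L V).hom ≫ (A ◁ (β_ L V).hom) ≫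
          (α_ A V L).inv ≫ (act ▷ L)) :
    y ≫ (V ◁ D.ε) ≫ (ρ_ V).hom = 𝟙 V := by
  rw [← cancel_epi act]
  have hb : (β_ L V).hom ≫ V ◁ D.ε = D.ε ▷ V ≫ (λ_ V).hom ≫ (ρ_ V).inv := by
    rw [← BraidedCategory.braiding_naturality_left]; simp
  refine chn hy (fun z => z ⊗≫ V ◁ D.ε) ?_
    (chn (whisker_exchange act D.ε).symm (fun z => D.τbar ▷ V ⊗≫ A ◁ (β_ L V).hom ⊗≫ z) ?_
    (chn hb (fun z => D.τbar ▷ V ⊗≫ A ◁ z ⊗≫ act) ?_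
    (chn D.rcu (fun z => z ▷ V ⊗≫ act) ?_ ?_))) <;> monoidal

theorem Vrco (hy : act ≫ y = (D.τbar ▷ V) ≫ (α_ A L V).hom ≫ (A ◁ (β_ L V).hom) ≫
          (α_ A V L).inv ≫ (act ▷ L)) :
    y ≫ (V ◁ D.δ) = y ≫ (y ▷ L) ≫ (α_ V L L).hom := by
  rw [← cancel_epi act]
  refine chn hy (fun z => z ⊗≫ V ◁ D.δ) ?_
    (chn (whisker_exchange act D.δ).symm (fun z => D.τbar ▷ V ⊗≫ A ◁ (β_ L V).hom ⊗≫ z) ?_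
    (chn (crossR12 D.δ V) (fun z => D.τbar ▷ V ⊗≫ A ◁ z ⊗≫ act ▷ (L ⊗ L)) ?_
    (chn D.rco (fun z => z ▷ V ⊗≫ (A ⊗ L) ◁ (β_ L V).hom ⊗≫ A ◁ (β_ L V).hom ▷ L ⊗≫
      act ▷ (L ⊗ L)) ?_
    (chn (whisker_exchange D.τbar (β_ L V).hom).symm
      (fun z => D.τbar ▷ V ⊗≫ z ⊗≫ A ◁ (β_ L V).hom ▷ L ⊗≫ act ▷ (L ⊗ L)) ?_
    (chn hy.symm (fun z => D.τbar ▷ V ⊗≫ A ◁ (β_ L V).hom ⊗≫ z ▷ L) ?_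
    (chn hy.symm (fun z => z ⊗≫ y ▷ L) ?_ ?_)))))) <;> monoidal

theorem Vcomm (hx : act ≫ x = (D.τ ▷ V) ≫ (α_ L A V).hom ≫ (L ◁ act))
    (hy : act ≫ y = (D.τbar ▷ V) ≫ (α_ A L V).hom ≫ (A ◁ (β_ L V).hom) ≫
          (α_ A V L).inv ≫ (act ▷ L)) :
    y ≫ (x ▷ L) ≫ (α_ L V L).hom = x ≫ (L ◁ y) := by
  rw [← cancel_epi act]
  refine chn hy (fun z => z ⊗≫ x ▷ L) ?_
    (chn hx (fun z => D.τbar ▷ V ⊗≫ A ◁ (β_ L V).hom ⊗≫ z ▷ L) ?_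
    (chn (whisker_exchange D.τ (β_ L V).hom) (fun z => D.τbar ▷ V ⊗≫ z ⊗≫ L ◁ act ▷ L) ?_
    (chn D.comm (fun z => z ▷ V ⊗≫ (L ⊗ A) ◁ (β_ L V).hom ⊗≫ L ◁ act ▷ L) ?_
    (chn hy.symm (fun z => D.τ ▷ V ⊗≫ L ◁ z) ?_
    (chn hx.symm (fun z => z ⊗≫ L ◁ y) ?_ ?_))))) <;> monoidal

end lift

theorem mor {V W : C} (aV : A ⊗ V ⟶ V) (aW : A ⊗ W ⟶ W) [Epi aV] (f : V ⟶ W)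
    (hf : aV ≫ f = (A ◁ f) ≫ aW) (x : V ⟶ L ⊗ V) (x' : W ⟶ L ⊗ W)
    (hx : aV ≫ x = (D.τ ▷ V) ≫ (α_ L A V).hom ≫ (L ◁ aV))
    (hx' : aW ≫ x' = (D.τ ▷ W) ≫ (α_ L A W).hom ≫ (L ◁ aW)) :
    f ≫ x' = x ≫ (L ◁ f) := by
  rw [← cancel_epi aV]
  refine chn hf (fun z => z ⊗≫ x') ?_
    (chn hx' (fun z => A ◁ f ⊗≫ z) ?_
    (chn (whisker_exchange D.τ f) (fun z => z ⊗≫ L ◁ aW) ?_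
    (chn hf.symm (fun z => D.τ ▷ V ⊗≫ L ◁ z) ?_
    (chn hx.symm (fun z => z ⊗≫ L ◁ f) ?_ ?_)))) <;> monoidal

theorem morb {V W : C} (aV : A ⊗ V ⟶ V) (aW : A ⊗ W ⟶ W) [Epi aV] (f : V ⟶ W)
    (hf : aV ≫ f = (A ◁ f) ≫ aW) (y : V ⟶ V ⊗ L) (y' : W ⟶ W ⊗ L)
    (hy : aV ≫ y = (D.τbar ▷ V) ≫ (α_ A L V).hom ≫ (A ◁ (β_ L V).hom) ≫
          (α_ A V L).inv ≫ (aV ▷ L))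
    (hy' : aW ≫ y' = (D.τbar ▷ W) ≫ (α_ A L W).hom ≫ (A ◁ (β_ L W).hom) ≫
          (α_ A W L).inv ≫ (aW ▷ L)) :
    f ≫ y' = y ≫ (f ▷ L) := by
  rw [← cancel_epi aV]
  refine chn hf (fun z => z ⊗≫ y') ?_
    (chn hy' (fun z => A ◁ f ⊗≫ z) ?_
    (chn (whisker_exchange D.τbar f) (fun z => z ⊗≫ A ◁ (β_ L W).hom ⊗≫ aW ▷ L) ?_
    (chn (BraidedCategory.braiding_naturality_right L f)
      (fun z => D.τbar ▷ V ⊗≫ A ◁ z ⊗≫ aW ▷ L) ?_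
    (chn hf.symm (fun z => D.τbar ▷ V ⊗≫ A ◁ (β_ L V).hom ⊗≫ z ▷ L) ?_
    (chn hy.symm (fun z => z ⊗≫ f ▷ L) ?_ ?_))))) <;> monoidal

theorem ex_bar {V : C} (act : A ⊗ V ⟶ V)
    (hass : (A ◁ act) ≫ act = (α_ A A V).inv ≫ (S.m ▷ V) ≫ act)
    (memV : V ∈ 𝒴) (nd : NdLeftOn act 𝒴) (hr : RegularEpi act) :
    ∃ y : V ⟶ V ⊗ L, act ≫ y = (D.τbar ▷ V) ≫ (α_ A L V).hom ≫ (A ◁ (β_ L V).hom) ≫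
          (α_ A V L).inv ≫ (act ▷ L) := by
  have h := D.psib_desc act hass memV nd hr.left hr.right hr.w
  obtain ⟨y, hy⟩ := RegularEpi.desc' hr _ h
  refine ⟨y, hy.trans ?_⟩
  monoidal

theorem ex_left {V : C} (act : A ⊗ V ⟶ V)
    (hass : (A ◁ act) ≫ act = (α_ A A V).inv ≫ (S.m ▷ V) ≫ act)
    (memV : V ∈ 𝒴) (nd : NdLeftOn act 𝒴) (hr : RegularEpi (A ◁ act ≫ act)) :
    ∃ x : V ⟶ L ⊗ V, act ≫ x = (D.τ ▷ V) ≫ (α_ L A V).hom ≫ (L ◁ act) := by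
  have h := D.phi_eq memV _ _ (S.chi_eq act hass memV nd hr.left hr.right hr.w)
  rw [Category.assoc, Category.assoc] at h
  obtain ⟨x, hx⟩ := RegularEpi.desc' hr _ h
  refine ⟨x, ?_⟩
  have := D.emR V
  rw [← cancel_epi (S.m ▷ V), ← cancel_epi (α_ A A V).inv]
  refine chn hass.symm (fun z => z ⊗≫ x) ?_
    (chn hx (fun z => z) ?_ ?_)
  · monoidal
  · monoidal
  · dsimp only [RWMB.om]
    refine chn (whisker_exchange D.p act) (fun z => 𝟙 (A ⊗ A ⊗ V) ⊗≫ S.t₁ ▷ V ⊗≫ z) ?_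
      (chn D.hτ.symm (fun z => z ▷ V ⊗≫ L ◁ act) ?_ ?_) <;> monoidal

end BD

/-- Functors preserving coequalizers preserve regular epimorphisms. -/
theorem regEpi_map {X Y : C} (F : C ⥤ C) [PreservesColimitsOfShape WalkingParallelPair F]
    {f : X ⟶ Y} (hf : RegularEpi f) : Nonempty (RegularEpi (F.map f)) :=
  ⟨{ W := F.obj hf.W
     left := F.map hf.left
     right := F.map hf.right
     w := by rw [← F.map_comp, hf.w, F.map_comp]
     isColimit := isColimitCoforkMapOfIsColimit F hf.w hf.isColimit }⟩

/-- Theorem 4.3: every module over the semigroup `A` carries the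
structure of an `L`-bicomodule, and every morphism of `A`-modules is a morphism of
`L`-bicomodules; hence there is a functor from `A`-modules to `L`-bicomodules acting
as the identity on morphisms. -/
theorem modules_carry_L_bicomodule_structure
    [HasCoequalizers C]
    (presL : ∀ X : C, PreservesColimitsOfShape WalkingParallelPair (tensorLeft X))
    (presR : ∀ X : C, PreservesColimitsOfShape WalkingParallelPair (tensorRight X))
    (regcomp : ∀ {X Y Z : C} (f : X ⟶ Y) (g : Y ⟶ Z),
      Nonempty (RegularEpi f) → Nonempty (RegularEpi g) → Nonempty (RegularEpi (f ≫ g)))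
    {A : C} {𝒴 : Set C} (S : RWMB A 𝒴)
    (hmreg : Nonempty (RegularEpi S.m))
    (hclosed : ∀ Y Y' : C, Y ∈ 𝒴 → Y' ∈ 𝒴 → (Y ⊗ Y') ∈ 𝒴)
    (L : C) (p : A ⟶ L)
    (hpc : S.piL1 ≫ p = S.piBarR1c ≫ p)
    (hpu : ∀ {X : C} (h : A ⟶ X), S.piL1 ≫ h = S.piBarR1c ≫ h →
      ∃! k : L ⟶ X, p ≫ k = h)
    (memL : L ∈ 𝒴)
    (n₁ : L ⊗ A ⟶ A) (hn₁ : (p ▷ A) ≫ n₁ = S.piL1)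
    (hndn₁ : NdRightOn n₁ 𝒴)
    (n₂ : A ⊗ L ⟶ A) (hn₂ : (A ◁ p) ≫ n₂ = S.piL2)
    (μ : L ⊗ L ⟶ L) (hμ : (L ◁ p) ≫ μ = n₁ ≫ p)
    (δ : L ⟶ L ⊗ L) (hδ : S.m ≫ p ≫ δ = S.t₁ ≫ (p ▷ A) ≫ (L ◁ p))
    (ε : L ⟶ 𝟙_ C) (hε : p ≫ ε = S.j)
    (hμδ : δ ≫ μ = 𝟙 L)
    -- the coactions of Proposition 4.1 on `A`
    (τ : A ⟶ L ⊗ A) (hτ : S.m ≫ τ = S.t₁ ≫ (p ▷ A))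
    (τbar : A ⟶ A ⊗ L) (hτbar : S.m ≫ τbar = (β_ A A).hom ≫ S.t₄ ≫ (A ◁ p)) :
    -- every `A`-module carries a unique `L`-bicomodule structure
    (∀ M : AModule A S.m 𝒴,
      ∃ (τV : M.V ⟶ L ⊗ M.V) (τbV : M.V ⟶ M.V ⊗ L),
        -- defining property and uniqueness of the left coaction
        (M.act ≫ τV = (τ ▷ M.V) ≫ (α_ L A M.V).hom ≫ (L ◁ M.act)) ∧
        (∀ τV' : M.V ⟶ L ⊗ M.V,
          M.act ≫ τV' = (τ ▷ M.V) ≫ (α_ L A M.V).hom ≫ (L ◁ M.act) → τV' = τV) ∧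
        -- defining property and uniqueness of the right coaction
        (M.act ≫ τbV = (τbar ▷ M.V) ≫ (α_ A L M.V).hom ≫ (A ◁ (β_ L M.V).hom) ≫
          (α_ A M.V L).inv ≫ (M.act ▷ L)) ∧
        (∀ τbV' : M.V ⟶ M.V ⊗ L,
          M.act ≫ τbV' = (τbar ▷ M.V) ≫ (α_ A L M.V).hom ≫ (A ◁ (β_ L M.V).hom) ≫
            (α_ A M.V L).inv ≫ (M.act ▷ L) → τbV' = τbV) ∧
        -- `τV` is a coassociative counital left `L`-coaction
        (τV ≫ (L ◁ τV) = τV ≫ (δ ▷ M.V) ≫ (α_ L L M.V).hom) ∧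
        (τV ≫ (ε ▷ M.V) ≫ (λ_ M.V).hom = 𝟙 M.V) ∧
        -- `τbV` is a coassociative counital right `L`-coaction
        (τbV ≫ (M.V ◁ δ) = τbV ≫ (τbV ▷ L) ≫ (α_ M.V L L).hom) ∧
        (τbV ≫ (M.V ◁ ε) ≫ (ρ_ M.V).hom = 𝟙 M.V) ∧
        -- the two coactions commute
        (τbV ≫ (τV ▷ L) ≫ (α_ L M.V L).hom = τV ≫ (L ◁ τbV))) ∧
    -- every morphism of `A`-modules is a morphism of `L`-bicomodules
    (∀ (M N : AModule A S.m 𝒴) (f : M.V ⟶ N.V),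
      M.act ≫ f = (A ◁ f) ≫ N.act →
      ∀ (τM : M.V ⟶ L ⊗ M.V) (τN : N.V ⟶ L ⊗ N.V)
        (τbM : M.V ⟶ M.V ⊗ L) (τbN : N.V ⟶ N.V ⊗ L),
        M.act ≫ τM = (τ ▷ M.V) ≫ (α_ L A M.V).hom ≫ (L ◁ M.act) →
        N.act ≫ τN = (τ ▷ N.V) ≫ (α_ L A N.V).hom ≫ (L ◁ N.act) →
        M.act ≫ τbM = (τbar ▷ M.V) ≫ (α_ A L M.V).hom ≫ (A ◁ (β_ L M.V).hom) ≫
          (α_ A M.V L).inv ≫ (M.act ▷ L) →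
        N.act ≫ τbN = (τbar ▷ N.V) ≫ (α_ A L N.V).hom ≫ (A ◁ (β_ L N.V).hom) ≫
          (α_ A N.V L).inv ≫ (N.act ▷ L) →
        (f ≫ τN = τM ≫ (L ◁ f)) ∧ (f ≫ τbN = τbM ≫ (f ▷ L))) := by
  have epiR : ∀ X : C, Epi (S.m ▷ X) := by
    intro X
    obtain ⟨hm⟩ := hmreg
    have := presR X
    obtain ⟨h⟩ := regEpi_map (tensorRight X) hm
    exact RegularEpi.epi _ h
  have epim : Epi S.m := by
    obtain ⟨hm⟩ := hmreg
    exact RegularEpi.epi _ hm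
  let D : BD S L :=
    { em := epim, emR := epiR, hclosed := hclosed, memL := memL, p := p, hpc := hpc, n₁ := n₁
      hn₁ := hn₁, hndn₁ := hndn₁, δ := δ, hδ := hδ, ε := ε, hε := hε, τ := τ, hτ := hτ
      τbar := τbar, hτbar := by rw [RWMB.TT, Category.assoc]; exact hτbar }
  constructor
  · intro M
    obtain ⟨hr⟩ := M.regEpi
    have hepi : Epi M.act := RegularEpi.epi _ hr
    have := presL A
    have h1 : Nonempty (RegularEpi (A ◁ M.act)) := regEpi_map (tensorLeft A) hr
    obtain ⟨hq⟩ := regcomp _ _ h1 ⟨hr⟩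
    obtain ⟨x, hx⟩ := D.ex_left M.act M.assoc M.mem M.nd hq
    obtain ⟨y, hy⟩ := D.ex_bar M.act M.assoc M.mem M.nd hr
    refine ⟨x, y, hx, ?_, hy, ?_, D.Vlco M.act x hx, D.Vlcu M.act x hx, D.Vrco M.act y hy,
      D.Vrcu M.act y hy, D.Vcomm M.act x y hx hy⟩
    · intro x' hx'
      rw [← cancel_epi M.act]
      exact hx'.trans hx.symm
    · intro y' hy'
      rw [← cancel_epi M.act]
      exact hy'.trans hy.symm
  · intro M N f hf x x' y y' hx hx' hy hy'
    obtain ⟨hr⟩ := M.regEpi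
    have hepi : Epi M.act := RegularEpi.epi _ hr
    exact ⟨D.mor M.act N.act f hf x x' hx hx', D.morb M.act N.act f hf y y' hy hy'⟩


end WeakMultiplierBimonoid
end
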